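/- arXiv:2509.16047 — 3 statements merged into one kernel-verified Lean document; each statement's English description precedes it below -/
import Mathlib

section
/- Let n ≥ 1 and k ≥ 1 be integers, let ι(x) = x/|x|² denote the inversion on ℝⁿ \ {0}, let W ⊆ ℝⁿ \ {0} be open, and let u : W → ℝ be smooth. Then for every x ∈ ℝⁿ \ {0} with ι(x) ∈ W one has Δ^k( y ↦ |y|^{2k−n} u(y/|y|²) )(x) = |x|^{−2k−n} · (Δ^k u)(x/|x|²). In particular, if Δ^k u = 0 on W, then the Kelvin-type transform y ↦ |y|^{2k−n} u(y/|y|²) satisfies Δ^k( |y|^{2k−n} u(y/|y|²) ) = 0 on ι(W). -/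
/-- The Euclidean Laplacian `Δu = ∑ i, ∂²u/∂xᵢ²` of a function on `ℝⁿ`. -/
noncomputable def lap {n : ℕ} (f : EuclideanSpace ℝ (Fin n) → ℝ)
    (x : EuclideanSpace ℝ (Fin n)) : ℝ :=
  ∑ i, fderiv ℝ (fun y => fderiv ℝ f y (EuclideanSpace.single i 1)) x
    (EuclideanSpace.single i 1)


namespace KT
open Filter Topology
open scoped ContDiff

noncomputable def D {n : ℕ} (i : Fin n) (f : EuclideanSpace ℝ (Fin n) → ℝ)
    (x : EuclideanSpace ℝ (Fin n)) : ℝ := fderiv ℝ f x (EuclideanSpace.single i 1)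

section
variable {n : ℕ} {W : Set (EuclideanSpace ℝ (Fin n))} {f g u : EuclideanSpace ℝ (Fin n) → ℝ}
  {x : EuclideanSpace ℝ (Fin n)}

lemma lap_eq (f : EuclideanSpace ℝ (Fin n) → ℝ) (x) : lap f x = ∑ i, D i (D i f) x := rfl

lemma D_congr (hW : IsOpen W) (h : Set.EqOn f g W) (i : Fin n) : Set.EqOn (D i f) (D i g) W := by
  intro x hx
  have : f =ᶠ[𝓝 x] g := h.eventuallyEq_of_mem (hW.mem_nhds hx)
  simp only [D, this.fderiv_eq]

lemma lap_congr (hW : IsOpen W) (h : Set.EqOn f g W) : Set.EqOn (lap f) (lap g) W := by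
  intro x hx
  simp only [lap_eq]
  exact Finset.sum_congr rfl fun i _ => D_congr hW (D_congr hW h i) i hx

lemma lap_iter_congr (hW : IsOpen W) (k : ℕ) : ∀ {f g : EuclideanSpace ℝ (Fin n) → ℝ},
    Set.EqOn f g W → Set.EqOn (lap^[k] f) (lap^[k] g) W := by
  induction k with
  | zero => intro f g h; exact h
  | succ k ih => intro f g h; exact ih (lap_congr hW h)

lemma D_smooth (hW : IsOpen W) (hf : ContDiffOn ℝ ∞ f W) (i : Fin n) :
    ContDiffOn ℝ ∞ (D i f) W :=
  (hf.fderiv_of_isOpen hW (m := ∞) (by simp)).clm_apply contDiffOn_const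

lemma lap_smooth (hW : IsOpen W) (hf : ContDiffOn ℝ ∞ f W) : ContDiffOn ℝ ∞ (lap f) W := by
  have : lap f = fun x => ∑ i, D i (D i f) x := rfl
  rw [this]
  exact ContDiffOn.sum fun i _ => D_smooth hW (D_smooth hW hf i) i

lemma dat (hW : IsOpen W) (hf : ContDiffOn ℝ ∞ f W) (hx : x ∈ W) : DifferentiableAt ℝ f x :=
  (hf.contDiffAt (hW.mem_nhds hx)).differentiableAt (by simp)

lemma D_add (hf : DifferentiableAt ℝ f x) (hg : DifferentiableAt ℝ g x) (i : Fin n) :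
    D i (fun y => f y + g y) x = D i f x + D i g x := by
  simp only [D]
  rw [fderiv_fun_add hf hg]; rfl

lemma D_mul (hf : DifferentiableAt ℝ f x) (hg : DifferentiableAt ℝ g x) (i : Fin n) :
    D i (fun y => f y * g y) x = f x * D i g x + g x * D i f x := by
  simp only [D]
  rw [fderiv_fun_mul hf hg]; simp

lemma D_const_mul (c : ℝ) (hf : DifferentiableAt ℝ f x) (i : Fin n) :
    D i (fun y => c * f y) x = c * D i f x := by
  simp only [D]
  rw [fderiv_const_mul hf]; simp

lemma D_sum {F : Fin n → EuclideanSpace ℝ (Fin n) → ℝ} (h : ∀ j, DifferentiableAt ℝ (F j) x)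
    (i : Fin n) : D i (fun y => ∑ j, F j y) x = ∑ j, D i (F j) x := by
  simp only [D]
  rw [fderiv_fun_sum fun j _ => h j]; simp

lemma D_comm (hW : IsOpen W) (hf : ContDiffOn ℝ ∞ f W) (hx : x ∈ W) (i j : Fin n) :
    D i (D j f) x = D j (D i f) x := by
  have h1 : ContDiffAt ℝ ∞ f x := hf.contDiffAt (hW.mem_nhds hx)
  have hs : IsSymmSndFDerivAt ℝ f x := h1.isSymmSndFDerivAt (by simp; exact WithTop.coe_le_coe.2 le_top)
  have hd : DifferentiableAt ℝ (fderiv ℝ f) x :=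
    ((hf.fderiv_of_isOpen hW (m := ∞) (by simp)).contDiffAt (hW.mem_nhds hx)).differentiableAt
      (by simp)
  have key : ∀ a b : Fin n, D a (D b f) x
      = fderiv ℝ (fderiv ℝ f) x (EuclideanSpace.single a 1) (EuclideanSpace.single b 1) := by
    intro a b
    change fderiv ℝ (fun y => fderiv ℝ f y (EuclideanSpace.single b 1)) x _ = _
    rw [fderiv_clm_apply hd (by simp)]; simp
  rw [key, key]; exact hs.eq _ _

lemma lap_mul (hW : IsOpen W) (hf : ContDiffOn ℝ ∞ f W) (hg : ContDiffOn ℝ ∞ g W) (hx : x ∈ W) :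
    lap (fun y => f y * g y) x = f x * lap g x + 2 * ∑ i, D i f x * D i g x + g x * lap f x := by
  simp only [lap_eq, Finset.mul_sum, ← Finset.sum_add_distrib]
  refine Finset.sum_congr rfl fun i _ => ?_
  have h : Set.EqOn (D i (fun y => f y * g y)) (fun y => f y * D i g y + g y * D i f y) W :=
    fun y hy => D_mul (dat hW hf hy) (dat hW hg hy) i
  have hf' := D_smooth hW hf i
  have hg' := D_smooth hW hg i
  rw [D_congr hW h i hx, D_add (dat hW (hf.mul hg') hx) (dat hW (hg.mul hf') hx),
    D_mul (dat hW hf hx) (dat hW hg' hx), D_mul (dat hW hg hx) (dat hW hf' hx)]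
  ring

lemma lap_add (hW : IsOpen W) (hf : ContDiffOn ℝ ∞ f W) (hg : ContDiffOn ℝ ∞ g W) (hx : x ∈ W) :
    lap (fun y => f y + g y) x = lap f x + lap g x := by
  simp only [lap_eq, ← Finset.sum_add_distrib]
  refine Finset.sum_congr rfl fun i _ => ?_
  have h : Set.EqOn (D i (fun y => f y + g y)) (fun y => D i f y + D i g y) W :=
    fun y hy => D_add (dat hW hf hy) (dat hW hg hy) i
  rw [D_congr hW h i hx, D_add (dat hW (D_smooth hW hf i) hx) (dat hW (D_smooth hW hg i) hx)]

lemma lap_const_mul (hW : IsOpen W) (c : ℝ) (hf : ContDiffOn ℝ ∞ f W) (hx : x ∈ W) :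
    lap (fun y => c * f y) x = c * lap f x := by
  simp only [lap_eq, Finset.mul_sum]
  refine Finset.sum_congr rfl fun i _ => ?_
  have h : Set.EqOn (D i (fun y => c * f y)) (fun y => c * D i f y) W :=
    fun y hy => D_const_mul c (dat hW hf hy) i
  rw [D_congr hW h i hx, D_const_mul c (dat hW (D_smooth hW hf i) hx)]

lemma lap_sum (hW : IsOpen W) {F : Fin n → EuclideanSpace ℝ (Fin n) → ℝ}
    (hF : ∀ j, ContDiffOn ℝ ∞ (F j) W) (hx : x ∈ W) :
    lap (fun y => ∑ j, F j y) x = ∑ j, lap (F j) x := by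
  simp only [lap_eq]
  rw [Finset.sum_comm]
  refine Finset.sum_congr rfl fun i _ => ?_
  have h : Set.EqOn (D i (fun y => ∑ j, F j y)) (fun y => ∑ j, D i (F j) y) W :=
    fun y hy => D_sum (fun j => dat hW (hF j) hy) i
  rw [D_congr hW h i hx, D_sum (fun j => dat hW (D_smooth hW (hF j) i) hx)]

lemma lap_D (hW : IsOpen W) (hf : ContDiffOn ℝ ∞ f W) (hx : x ∈ W) (j : Fin n) :
    lap (D j f) x = D j (lap f) x := by
  have h0 : lap f = fun x => ∑ i, D i (D i f) x := rfl
  rw [h0, D_sum (fun i => dat hW (D_smooth hW (D_smooth hW hf i) i) hx), lap_eq]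
  refine Finset.sum_congr rfl fun i _ => ?_
  rw [D_congr hW (fun y hy => D_comm hW hf hy i j) i hx, D_comm hW (D_smooth hW hf i) hx]

lemma coord_smooth (j : Fin n) : ContDiffOn ℝ ∞ (fun y : EuclideanSpace ℝ (Fin n) => y j) W :=
  (EuclideanSpace.proj (𝕜 := ℝ) j).contDiff.contDiffOn

lemma D_coord (i j : Fin n) (x) :
    D i (fun y : EuclideanSpace ℝ (Fin n) => y j) x = if i = j then 1 else 0 := by
  simp only [D]
  have : fderiv ℝ (fun y : EuclideanSpace ℝ (Fin n) => y j) x = EuclideanSpace.proj (𝕜 := ℝ) j :=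
    (EuclideanSpace.proj (𝕜 := ℝ) j).hasFDerivAt.fderiv
  rw [this]
  simp [Pi.single_apply, eq_comm]

lemma D_const (c : ℝ) (i : Fin n) (x) : D i (fun _ => c) x = 0 := by simp [D]

lemma lap_coord (j : Fin n) (x) :
    lap (fun y : EuclideanSpace ℝ (Fin n) => y j) x = 0 := by
  rw [lap_eq]
  refine Finset.sum_eq_zero fun i _ => ?_
  have : D i (fun y : EuclideanSpace ℝ (Fin n) => y j) = fun _ => if i = j then 1 else 0 :=
    funext (D_coord i j)
  rw [this, D_const]

lemma nsq_smooth : ContDiffOn ℝ ∞ (fun y : EuclideanSpace ℝ (Fin n) => ‖y‖ ^ 2) W :=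
  (contDiff_norm_sq ℝ).contDiffOn

lemma D_nsq (i : Fin n) (x) : D i (fun y : EuclideanSpace ℝ (Fin n) => ‖y‖ ^ 2) x = 2 * x i := by
  simp only [D]
  have := (hasStrictFDerivAt_norm_sq x).hasFDerivAt.fderiv
  rw [this]; simp [EuclideanSpace.inner_single_right]

lemma lap_nsq (x) : lap (fun y : EuclideanSpace ℝ (Fin n) => ‖y‖ ^ 2) x = 2 * n := by
  rw [lap_eq]
  have : ∀ i, D i (fun y : EuclideanSpace ℝ (Fin n) => ‖y‖ ^ 2) = fun x => 2 * x i :=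
    fun i => funext (D_nsq i)
  simp only [this]
  rw [Finset.sum_congr rfl fun i _ => D_const_mul (2 : ℝ)
    (dat isOpen_univ (coord_smooth i) (Set.mem_univ x)) i]
  simp [D_coord, mul_comm]

noncomputable def E (f : EuclideanSpace ℝ (Fin n) → ℝ) (x : EuclideanSpace ℝ (Fin n)) : ℝ :=
  ∑ j, x j * D j f x

lemma E_smooth (hW : IsOpen W) (hf : ContDiffOn ℝ ∞ f W) : ContDiffOn ℝ ∞ (E f) W :=
  ContDiffOn.sum fun j _ => (coord_smooth j).mul (D_smooth hW hf j)

lemma lap_E (hW : IsOpen W) (hf : ContDiffOn ℝ ∞ f W) (hx : x ∈ W) :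
    lap (E f) x = E (lap f) x + 2 * lap f x := by
  have h0 : E f = fun x => ∑ j, x j * D j f x := rfl
  rw [h0, lap_sum hW (fun j => (coord_smooth j).mul (D_smooth hW hf j)) hx]
  rw [Finset.sum_congr rfl fun j _ => lap_mul hW (coord_smooth j) (D_smooth hW hf j) hx]
  simp only [lap_coord, D_coord, lap_D hW hf hx, Finset.sum_add_distrib, ite_mul, one_mul, zero_mul,
    Finset.sum_ite_eq', Finset.mem_univ, if_true, E, mul_zero, Finset.sum_const_zero, add_zero,
    ← Finset.mul_sum]
  rfl

lemma lap_nsq_mul (hW : IsOpen W) (hf : ContDiffOn ℝ ∞ f W) (hx : x ∈ W) :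
    lap (fun y => ‖y‖ ^ 2 * f y) x = ‖x‖ ^ 2 * lap f x + 4 * E f x + 2 * n * f x := by
  rw [lap_mul hW nsq_smooth hf hx]
  simp only [D_nsq, lap_nsq, E, mul_assoc, ← Finset.mul_sum]
  ring

noncomputable def Q (k : ℕ) (f : EuclideanSpace ℝ (Fin n) → ℝ) (x : EuclideanSpace ℝ (Fin n)) : ℝ :=
  (2 * k * (2 * k + 2 - n)) * f x + ((-4 * k) * E f x + ‖x‖ ^ 2 * lap f x)

lemma Q_smooth (hW : IsOpen W) (hf : ContDiffOn ℝ ∞ f W) (k : ℕ) : ContDiffOn ℝ ∞ (Q k f) W :=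
  (contDiffOn_const.mul hf).add
    ((contDiffOn_const.mul (E_smooth hW hf)).add (nsq_smooth.mul (lap_smooth hW hf)))

lemma lap_Q (hW : IsOpen W) (hf : ContDiffOn ℝ ∞ f W) (k : ℕ) :
    Set.EqOn (lap (Q (k + 1) f)) (Q k (lap f)) W := by
  intro x hx
  have hE := E_smooth hW hf
  have hL := lap_smooth hW hf
  unfold Q
  rw [lap_add hW (contDiffOn_const.mul hf)
    ((contDiffOn_const.mul hE).add (nsq_smooth.mul hL)) hx,
    lap_add hW (contDiffOn_const.mul hE) (nsq_smooth.mul hL) hx,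
    lap_const_mul hW _ hf hx, lap_const_mul hW _ hE hx, lap_nsq_mul hW hL hx, lap_E hW hf hx]
  push_cast
  ring

lemma lap_iter_Q (hW : IsOpen W) (k : ℕ) : ∀ {f : EuclideanSpace ℝ (Fin n) → ℝ},
    ContDiffOn ℝ ∞ f W →
    Set.EqOn (lap^[k] (Q k f)) (fun x => ‖x‖ ^ 2 * lap^[k + 1] f x) W := by
  induction k with
  | zero => intro f hf x hx; simp [Q]
  | succ k ih =>
    intro f hf x hx
    rw [Function.iterate_succ_apply, lap_iter_congr hW k (lap_Q hW hf k) hx,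
      ih (lap_smooth hW hf) hx]
    rfl

end
end KT

namespace KT
open Filter Topology
open scoped ContDiff
section
variable {n : ℕ} {W V : Set (EuclideanSpace ℝ (Fin n))} {f g u : EuclideanSpace ℝ (Fin n) → ℝ}
  {x : EuclideanSpace ℝ (Fin n)}

noncomputable def P (a : ℝ) (y : EuclideanSpace ℝ (Fin n)) : ℝ := ‖y‖ ^ a

noncomputable def inv (y : EuclideanSpace ℝ (Fin n)) : EuclideanSpace ℝ (Fin n) :=
  (‖y‖ ^ 2)⁻¹ • y

lemma P_eq (a : ℝ) (y : EuclideanSpace ℝ (Fin n)) : P a y = (‖y‖ ^ 2) ^ (a / 2) := by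
  rw [P, ← Real.rpow_natCast, ← Real.rpow_mul (norm_nonneg y)]
  congr 1; push_cast; ring

lemma P_smooth (h0 : (0 : EuclideanSpace ℝ (Fin n)) ∉ V) (a : ℝ) : ContDiffOn ℝ ∞ (P a) V := by
  have : (P a : EuclideanSpace ℝ (Fin n) → ℝ) = fun y => (‖y‖ ^ 2) ^ (a / 2) := funext (P_eq a)
  rw [this]
  refine nsq_smooth.rpow_const_of_ne fun y hy => ?_
  have : y ≠ 0 := fun h => h0 (h ▸ hy)
  positivity

lemma P_sub_two (hx : x ≠ 0) (a : ℝ) : P (a - 2) x = P a x * (‖x‖ ^ 2)⁻¹ := by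
  have : 0 < ‖x‖ := by positivity
  rw [P, P, Real.rpow_sub this, div_eq_mul_inv]; norm_cast

lemma P_neg_two (x : EuclideanSpace ℝ (Fin n)) : P (-2) x = (‖x‖ ^ 2)⁻¹ := by
  rw [P, Real.rpow_neg (norm_nonneg _)]; norm_cast

lemma D_P (hx : x ≠ 0) (a : ℝ) (i : Fin n) : D i (P a) x = a * (x i * P (a - 2) x) := by
  have : (P a : EuclideanSpace ℝ (Fin n) → ℝ) = fun y => (‖y‖ ^ 2) ^ (a / 2) := funext (P_eq a)
  have h1 := (hasStrictFDerivAt_norm_sq x).hasFDerivAt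
  have hx' : ‖x‖ ^ 2 ≠ 0 := by positivity
  have h2 := h1.rpow_const (p := a / 2) (Or.inl hx')
  have h3 := h2.fderiv
  rw [this, D, h3, P_eq]
  have : (a - 2) / 2 = a / 2 - 1 := by ring
  rw [this]
  simp [EuclideanSpace.inner_single_right]
  ring

lemma sum_sq (x : EuclideanSpace ℝ (Fin n)) : ∑ i, x i * x i = ‖x‖ ^ 2 := by
  rw [EuclideanSpace.real_norm_sq_eq]; simp [sq]

lemma isOpen_ne0 : IsOpen ({0}ᶜ : Set (EuclideanSpace ℝ (Fin n))) := isOpen_compl_singleton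

lemma lap_P (hx : x ≠ 0) (a : ℝ) : lap (P a) x = a * (a + n - 2) * P (a - 2) x := by
  have hV := isOpen_ne0 (n := n)
  have h0 : (0 : EuclideanSpace ℝ (Fin n)) ∉ ({0}ᶜ : Set (EuclideanSpace ℝ (Fin n))) := by simp
  have hx' : ‖x‖ ^ 2 ≠ 0 := by positivity
  have key : ∀ i, D i (D i (P a)) x =
      a * P (a - 2) x + (a * (a - 2) * P (a - 2) x * (‖x‖ ^ 2)⁻¹) * (x i * x i) := by
    intro i
    have h : Set.EqOn (D i (P a)) (fun y => a * (y i * P (a - 2) y))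
      ({0}ᶜ : Set (EuclideanSpace ℝ (Fin n))) := fun y hy => D_P hy a i
    have h1 := dat hV (coord_smooth i) (x := x) hx
    have h2 := dat hV (P_smooth h0 (a - 2)) (x := x) hx
    rw [D_congr hV h i hx, D_const_mul a (h1.fun_mul h2), D_mul h1 h2, D_P hx, D_coord,
      P_sub_two hx (a - 2)]
    simp only [if_true]
    ring
  rw [lap_eq, Finset.sum_congr rfl fun i _ => key i, Finset.sum_add_distrib, ← Finset.mul_sum,
    ← Finset.mul_sum, sum_sq]
  simp only [Finset.sum_const, Finset.card_univ, Fintype.card_fin, nsmul_eq_mul]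
  field_simp
  ring

lemma inv_apply (y : EuclideanSpace ℝ (Fin n)) (j : Fin n) : inv y j = P (-2) y * y j := by
  simp [inv, P_neg_two]

lemma inv_smooth (h0 : (0 : EuclideanSpace ℝ (Fin n)) ∉ V) :
    ContDiffOn ℝ ∞ (inv : EuclideanSpace ℝ (Fin n) → _) V := by
  rw [contDiffOn_euclidean]
  intro j
  simp only [inv_apply]
  exact (P_smooth h0 _).mul (coord_smooth j)

/-- the `j`-th coordinate of the inversion -/
noncomputable def I (j : Fin n) (y : EuclideanSpace ℝ (Fin n)) : ℝ := P (-2) y * y j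

lemma I_smooth (h0 : (0 : EuclideanSpace ℝ (Fin n)) ∉ V) (j : Fin n) :
    ContDiffOn ℝ ∞ (I j) V := (P_smooth h0 _).mul (coord_smooth j)

lemma D_I (hx : x ≠ 0) (i j : Fin n) : D i (I j) x =
    (‖x‖ ^ 2)⁻¹ * (if i = j then 1 else 0) - 2 * (‖x‖ ^ 2)⁻¹ ^ 2 * (x i * x j) := by
  have hV := isOpen_ne0 (n := n)
  have h0 : (0 : EuclideanSpace ℝ (Fin n)) ∉ ({0}ᶜ : Set (EuclideanSpace ℝ (Fin n))) := by simp
  have h1 := dat hV (coord_smooth j) (x := x) hx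
  have h2 := dat hV (P_smooth h0 (-2)) (x := x) hx
  unfold I
  rw [D_mul h2 h1, D_P hx, D_coord, P_sub_two hx, P_neg_two]
  ring

lemma lap_I (hx : x ≠ 0) (j : Fin n) : lap (I j) x =
    (4 - 2 * n) * (‖x‖ ^ 2)⁻¹ ^ 2 * x j := by
  have hV := isOpen_ne0 (n := n)
  have h0 : (0 : EuclideanSpace ℝ (Fin n)) ∉ ({0}ᶜ : Set (EuclideanSpace ℝ (Fin n))) := by simp
  unfold I
  rw [lap_mul hV (P_smooth h0 (-2)) (coord_smooth j) hx, lap_coord, lap_P hx]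
  simp only [D_coord, D_P hx, P_sub_two hx, P_neg_two]
  simp
  ring

lemma D_comp_inv (hW : IsOpen W) (hu : ContDiffOn ℝ ∞ u W) (hx : x ≠ 0) (hxW : inv x ∈ W)
    (i : Fin n) : D i (fun y => u (inv y)) x = ∑ j, D i (I j) x * D j u (inv x) := by
  have hV := isOpen_ne0 (n := n)
  have h0 : (0 : EuclideanSpace ℝ (Fin n)) ∉ ({0}ᶜ : Set (EuclideanSpace ℝ (Fin n))) := by simp
  have hi : DifferentiableAt ℝ (inv : EuclideanSpace ℝ (Fin n) → _) x :=
    ((inv_smooth h0).contDiffAt (hV.mem_nhds hx)).differentiableAt (by simp)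
  have h1 : D i (fun y => u (inv y)) x
      = fderiv ℝ u (inv x) (fderiv ℝ inv x (EuclideanSpace.single i 1)) := by
    have := fderiv_comp x (dat hW hu hxW) hi
    change fderiv ℝ (u ∘ inv) x _ = _
    rw [this]; rfl
  have h2 : ∀ j, D i (I j) x = (fderiv ℝ inv x (EuclideanSpace.single i 1)) j := by
    intro j
    have h3 : I j = (EuclideanSpace.proj (𝕜 := ℝ) j) ∘ (inv : EuclideanSpace ℝ (Fin n) → _) := by
      funext y; simp [I, inv_apply]
    rw [h3, D, fderiv_comp x (EuclideanSpace.proj (𝕜 := ℝ) j).differentiableAt hi,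
      ContinuousLinearMap.fderiv]
    rfl
  rw [h1]
  simp only [h2]
  set w := fderiv ℝ inv x (EuclideanSpace.single i 1)
  conv_lhs => rw [← (EuclideanSpace.basisFun (Fin n) ℝ).sum_repr w]
  simp [D, map_sum]

lemma isOpen_V (hW : IsOpen W) : IsOpen {y : EuclideanSpace ℝ (Fin n) | y ≠ 0 ∧ inv y ∈ W} := by
  have h0 : (0 : EuclideanSpace ℝ (Fin n)) ∉ ({0}ᶜ : Set (EuclideanSpace ℝ (Fin n))) := by simp
  exact (inv_smooth h0).continuousOn.isOpen_inter_preimage isOpen_ne0 hW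

lemma comp_smooth (hu : ContDiffOn ℝ ∞ u W) :
    ContDiffOn ℝ ∞ (fun y => u (inv y)) {y : EuclideanSpace ℝ (Fin n) | y ≠ 0 ∧ inv y ∈ W} :=
  hu.comp (inv_smooth (by simp)) fun _ hy => hy.2

lemma sum_J (hx : x ≠ 0) (j l : Fin n) : ∑ i, D i (I j) x * D i (I l) x =
    (‖x‖ ^ 2)⁻¹ ^ 2 * (if j = l then 1 else 0) := by
  have hx' : ‖x‖ ^ 2 ≠ 0 := by positivity
  set q := (‖x‖ ^ 2)⁻¹ with hq
  have hq1 : q * ∑ i, x i * x i = 1 := by rw [sum_sq, hq]; field_simp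
  have : ∀ i, D i (I j) x * D i (I l) x =
      q ^ 2 * (if i = j then (if j = l then 1 else 0) else 0)
      - 2 * q ^ 3 * (if i = j then x j * x l else 0) - 2 * q ^ 3 * (if i = l then x l * x j else 0)
      + 4 * q ^ 4 * (x j * x l) * (x i * x i) := by
    intro i
    rw [D_I hx, D_I hx, ← hq]
    by_cases h1 : i = j
    · subst h1
      by_cases h2 : i = l
      · subst h2; simp; ring
      · simp [h2]; ring
    · by_cases h2 : i = l
      · subst h2; simp [h1]; ring
      · simp [h1, h2]; ring
  simp only [this, Finset.sum_add_distrib, Finset.sum_sub_distrib, ← Finset.mul_sum,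
    Finset.sum_ite_eq', Finset.mem_univ, if_true]
  linear_combination (4 * q ^ 3 * (x j * x l)) * hq1

lemma sum_xJ (hx : x ≠ 0) (j : Fin n) : ∑ i, x i * D i (I j) x = - ((‖x‖ ^ 2)⁻¹ * x j) := by
  have hx' : ‖x‖ ^ 2 ≠ 0 := by positivity
  set q := (‖x‖ ^ 2)⁻¹ with hq
  have hq1 : q * ∑ i, x i * x i = 1 := by rw [sum_sq, hq]; field_simp
  have : ∀ i, x i * D i (I j) x =
      q * (if i = j then x j else 0) - 2 * q ^ 2 * x j * (x i * x i) := by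
    intro i
    rw [D_I hx, ← hq]
    by_cases h1 : i = j
    · subst h1; simp; ring
    · simp [h1]; ring
  simp only [this, Finset.sum_sub_distrib, ← Finset.mul_sum,
    Finset.sum_ite_eq', Finset.mem_univ, if_true]
  linear_combination (-2 * q * x j) * hq1

lemma E_inv : E u (inv x) = (‖x‖ ^ 2)⁻¹ * ∑ j, x j * D j u (inv x) := by
  simp only [E, inv_apply, P_neg_two, Finset.mul_sum, mul_assoc]

lemma lap_comp_inv (hW : IsOpen W) (hu : ContDiffOn ℝ ∞ u W) (hx : x ≠ 0) (hxW : inv x ∈ W) :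
    lap (fun y => u (inv y)) x =
      (‖x‖ ^ 2)⁻¹ ^ 2 * lap u (inv x) + (4 - 2 * n) * (‖x‖ ^ 2)⁻¹ * E u (inv x) := by
  have hV := isOpen_V hW
  have hxV : x ∈ {y : EuclideanSpace ℝ (Fin n) | y ≠ 0 ∧ inv y ∈ W} := ⟨hx, hxW⟩
  have h0 : (0 : EuclideanSpace ℝ (Fin n)) ∉
    {y : EuclideanSpace ℝ (Fin n) | y ≠ 0 ∧ inv y ∈ W} := by simp
  have key : ∀ i, D i (D i (fun y => u (inv y))) x = ∑ j, (D i (D i (I j)) x * D j u (inv x)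
      + ∑ l, D i (I j) x * D i (I l) x * D l (D j u) (inv x)) := by
    intro i
    have h : Set.EqOn (D i (fun y => u (inv y))) (fun y => ∑ j, D i (I j) y * D j u (inv y))
      {y : EuclideanSpace ℝ (Fin n) | y ≠ 0 ∧ inv y ∈ W} :=
        fun y hy => D_comp_inv hW hu hy.1 hy.2 i
    have h1 := fun j => dat hV (D_smooth hV (I_smooth h0 j) i) hxV
    have h2 := fun j => dat hV (comp_smooth (D_smooth hW hu j)) hxV
    rw [D_congr hV h i hxV, D_sum (fun j => (h1 j).fun_mul (h2 j))]
    refine Finset.sum_congr rfl fun j _ => ?_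
    rw [D_mul (h1 j) (h2 j), D_comp_inv hW (D_smooth hW hu j) hx hxW, Finset.mul_sum]
    rw [add_comm, mul_comm]
    congr 1
    exact Finset.sum_congr rfl fun l _ => by ring
  have h3 : ∑ i, ∑ j, ∑ l, D i (I j) x * D i (I l) x * D l (D j u) (inv x)
      = (‖x‖ ^ 2)⁻¹ ^ 2 * lap u (inv x) := by
    rw [Finset.sum_comm, lap_eq, Finset.mul_sum]
    refine Finset.sum_congr rfl fun j _ => ?_
    rw [Finset.sum_comm]
    simp only [← Finset.sum_mul, sum_J hx]
    simp
  have h4 : ∑ i, ∑ j, D i (D i (I j)) x * D j u (inv x)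
      = (4 - 2 * n) * (‖x‖ ^ 2)⁻¹ * E u (inv x) := by
    rw [Finset.sum_comm, E_inv, Finset.mul_sum, Finset.mul_sum]
    refine Finset.sum_congr rfl fun j _ => ?_
    rw [← Finset.sum_mul, ← lap_eq, lap_I hx]
    ring
  rw [lap_eq, Finset.sum_congr rfl fun i _ => key i]
  simp only [Finset.sum_add_distrib]
  rw [h3, h4]; ring

lemma norm_inv_sq (hx : x ≠ 0) : ‖inv x‖ ^ 2 = (‖x‖ ^ 2)⁻¹ := by
  have hx' : ‖x‖ ≠ 0 := by positivity
  rw [inv, norm_smul, norm_inv, norm_pow, norm_norm]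
  field_simp

lemma lap_K (hW : IsOpen W) (hu : ContDiffOn ℝ ∞ u W) (hx : x ≠ 0) (hxW : inv x ∈ W) (k : ℕ) :
    lap (fun y => P (2 * ((k + 1 : ℕ) : ℝ) - n) y * u (inv y)) x =
      P (2 * (k : ℝ) - n) x * Q k u (inv x) := by
  have hV := isOpen_V hW
  have hxV : x ∈ {y : EuclideanSpace ℝ (Fin n) | y ≠ 0 ∧ inv y ∈ W} := ⟨hx, hxW⟩
  have h0 : (0 : EuclideanSpace ℝ (Fin n)) ∉
    {y : EuclideanSpace ℝ (Fin n) | y ≠ 0 ∧ inv y ∈ W} := by simp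
  have hx' : ‖x‖ ^ 2 ≠ 0 := by positivity
  set a : ℝ := 2 * ((k + 1 : ℕ) : ℝ) - n with ha
  have hk : 2 * (k : ℝ) - n = a - 2 := by rw [ha]; push_cast; ring
  have h5 : ∑ i, D i (P a) x * D i (fun y => u (inv y)) x = - (a * P (a - 2) x * E u (inv x)) := by
    have : ∀ i, D i (P a) x * D i (fun y => u (inv y)) x
        = a * P (a - 2) x * ∑ j, x i * D i (I j) x * D j u (inv x) := by
      intro i
      rw [D_P hx, D_comp_inv hW hu hx hxW, Finset.mul_sum, Finset.mul_sum]
      exact Finset.sum_congr rfl fun j _ => by ring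
    simp only [this]
    rw [← Finset.mul_sum, Finset.sum_comm]
    simp only [← Finset.sum_mul, sum_xJ hx]
    rw [E_inv, Finset.mul_sum, Finset.mul_sum, Finset.mul_sum, ← Finset.sum_neg_distrib]
    exact Finset.sum_congr rfl fun j _ => by ring
  rw [lap_mul hV (P_smooth h0 a) (comp_smooth hu) hxV, h5, lap_P hx, lap_comp_inv hW hu hx hxW, hk,
    Q, norm_inv_sq hx, P_sub_two hx, ha]
  push_cast
  field_simp
  ring

theorem main (k : ℕ) : ∀ {u : EuclideanSpace ℝ (Fin n) → ℝ} (_ : IsOpen W)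
    (_ : ContDiffOn ℝ ∞ u W) {x : EuclideanSpace ℝ (Fin n)} (_ : x ≠ 0) (_ : inv x ∈ W),
    lap^[k] (fun y => P (2 * (k : ℝ) - n) y * u (inv y)) x =
      P (-(2 * (k : ℝ)) - n) x * lap^[k] u (inv x) := by
  induction k with
  | zero => intro u hW hu x hx hxW; simp
  | succ k ih =>
    intro u hW hu x hx hxW
    have hxV : x ∈ {y : EuclideanSpace ℝ (Fin n) | y ≠ 0 ∧ inv y ∈ W} := ⟨hx, hxW⟩
    rw [Function.iterate_succ_apply,
      lap_iter_congr (isOpen_V hW) k (fun y hy => lap_K hW hu hy.1 hy.2 k) hxV,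
      ih hW (Q_smooth hW hu k) hx hxW, lap_iter_Q hW k hu hxW]
    have : -(2 * ((k + 1 : ℕ) : ℝ)) - n = (-(2 * (k : ℝ)) - n) - 2 := by push_cast; ring
    rw [this, P_sub_two hx]
    simp only [norm_inv_sq hx]
    ring

end
end KT

/-- Conformal covariance of `Δᵏ` under the inversion `ι(x) = x/|x|²`
(Kelvin-type transform): `Δᵏ(|y|^{2k-n} u(y/|y|²))(x) = |x|^{-2k-n} (Δᵏu)(x/|x|²)`;
in particular the Kelvin-type transform of a `Δᵏ`-harmonic function is
`Δᵏ`-harmonic. -/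
theorem kelvin_transform_laplacian_pow
    (n k : ℕ) (hn : 1 ≤ n) (hk : 1 ≤ k)
    (W : Set (EuclideanSpace ℝ (Fin n))) (hW : IsOpen W)
    (hW0 : (0 : EuclideanSpace ℝ (Fin n)) ∉ W)
    (u : EuclideanSpace ℝ (Fin n) → ℝ) (hu : ContDiffOn ℝ (⊤ : ℕ∞) u W) :
    (∀ x : EuclideanSpace ℝ (Fin n), x ≠ 0 → (‖x‖ ^ 2)⁻¹ • x ∈ W →
      lap^[k] (fun y => ‖y‖ ^ ((2 * k : ℝ) - n) * u ((‖y‖ ^ 2)⁻¹ • y)) x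
        = ‖x‖ ^ (-(2 * k : ℝ) - n) * lap^[k] u ((‖x‖ ^ 2)⁻¹ • x))
    ∧ ((∀ y ∈ W, lap^[k] u y = 0) →
      ∀ x : EuclideanSpace ℝ (Fin n), x ≠ 0 → (‖x‖ ^ 2)⁻¹ • x ∈ W →
        lap^[k] (fun y => ‖y‖ ^ ((2 * k : ℝ) - n) * u ((‖y‖ ^ 2)⁻¹ • y)) x = 0) := by
  have key : ∀ x : EuclideanSpace ℝ (Fin n), x ≠ 0 → (‖x‖ ^ 2)⁻¹ • x ∈ W →
      lap^[k] (fun y => ‖y‖ ^ ((2 * k : ℝ) - n) * u ((‖y‖ ^ 2)⁻¹ • y)) x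
        = ‖x‖ ^ (-(2 * k : ℝ) - n) * lap^[k] u ((‖x‖ ^ 2)⁻¹ • x) :=
    fun x hx hxW => KT.main k hW hu hx hxW
  refine ⟨key, fun h x hx hxW => ?_⟩
  rw [key x hx hxW, h _ hxW, mul_zero]
end

section
/- Let k, n be integers with 1 ≤ k and n > 2k. Set S_{n,k} = [ ∏_{ℓ=1}^{k} ((n+2ℓ−2)(n−2ℓ)/4) ] · ( 2π^{(n+1)/2} / Γ((n+1)/2) )^{2k/n}. Then for every smooth compactly supported function u : ℝⁿ → ℝ, ∫_{ℝⁿ} u(x) · ((−Δ)^k u)(x) dx ≥ S_{n,k} · ( ∫_{ℝⁿ} |u(x)|^{2n/(n−2k)} dx )^{(n−2k)/n}. -/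
open scoped Real

namespace SharpSob
open MeasureTheory Filter Topology
open scoped ContDiff

abbrev RR (n : ℕ) := EuclideanSpace ℝ (Fin n)

/-- smooth functions on `ℝⁿ` as an algebra -/
def SF (n : ℕ) : Subalgebra ℝ (RR n → ℝ) where
  carrier := {f | ContDiff ℝ ∞ f}
  mul_mem' := fun {_ _} (hf : ContDiff ℝ ∞ _) (hg : ContDiff ℝ ∞ _) => hf.mul hg
  add_mem' := fun {_ _} (hf : ContDiff ℝ ∞ _) (hg : ContDiff ℝ ∞ _) => hf.add hg
  algebraMap_mem' := fun r => show ContDiff ℝ ∞ (fun _ : RR n => r) from contDiff_const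

variable {n : ℕ}

noncomputable instance : CoeFun (SF n) (fun _ => RR n → ℝ) := ⟨fun f => f.1⟩

lemma sf_smooth (f : SF n) : ContDiff ℝ ∞ (fun x => f x) := f.2
lemma sf_diffble (f : SF n) : Differentiable ℝ (fun x => f x) :=
  (sf_smooth f).differentiable (by simp)
lemma sf_cont (f : SF n) : Continuous (fun x => f x) := (sf_smooth f).continuous
@[ext] lemma SF.ext' {f g : SF n} (h : ∀ x, f x = g x) : f = g := Subtype.ext (funext h)

@[simp] lemma SF.add_app (f g : SF n) (x) : (f + g) x = f x + g x := rfl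
@[simp] lemma SF.sub_app (f g : SF n) (x) : (f - g) x = f x - g x := rfl
@[simp] lemma SF.neg_app (f : SF n) (x) : (-f) x = -f x := rfl
@[simp] lemma SF.mul_app (f g : SF n) (x) : (f * g) x = f x * g x := rfl
@[simp] lemma SF.zero_app (x) : (0 : SF n) x = 0 := rfl
@[simp] lemma SF.one_app (x) : (1 : SF n) x = 1 := rfl
@[simp] lemma SF.smul_app (c : ℝ) (f : SF n) (x) : (c • f) x = c * f x := rfl
@[simp] lemma SF.pow_app (f : SF n) (k : ℕ) (x) : (f ^ k) x = f x ^ k := rfl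
@[simp] lemma SF.natCast_app (k : ℕ) (x) : ((k : SF n)) x = (k : ℝ) := rfl
@[simp] lemma SF.algebraMap_app (r : ℝ) (x) : (algebraMap ℝ (SF n) r) x = r := rfl
@[simp] lemma SF.sum_app {ι : Type*} (s : Finset ι) (f : ι → SF n) (x) :
    (∑ i ∈ s, f i) x = ∑ i ∈ s, f i x := by
  induction s using Finset.cons_induction with
  | empty => rfl
  | cons a s ha ih => simp [Finset.sum_cons, ih]

/-- partial derivative -/
noncomputable def pd (i : Fin n) : Derivation ℝ (SF n) (SF n) where
  toFun f := ⟨fun x => fderiv ℝ (fun y => f y) x (EuclideanSpace.single i 1),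
    ((sf_smooth f).fderiv_right (m := ∞) (by simp)).clm_apply contDiff_const⟩
  map_add' f g := by
    ext x
    change fderiv ℝ (fun y => f y + g y) x _ = _
    rw [fderiv_fun_add ((sf_diffble f) x) ((sf_diffble g) x)]; rfl
  map_smul' c f := by
    ext x
    change fderiv ℝ (fun y => c • f y) x _ = _
    rw [fderiv_fun_const_smul ((sf_diffble f) x)]; rfl
  map_one_eq_zero' := by
    ext x
    change fderiv ℝ (fun y => (1:ℝ)) x _ = _
    simp
  leibniz' f g := by
    ext x
    change fderiv ℝ (fun y => f y * g y) x _ = _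
    rw [fderiv_fun_mul ((sf_diffble f) x) ((sf_diffble g) x)]; rfl

lemma pd_app (i : Fin n) (f : SF n) (x) :
    pd i f x = fderiv ℝ (fun y => f y) x (EuclideanSpace.single i 1) := rfl

lemma pd_mul (i : Fin n) (f g : SF n) : pd i (f * g) = f * pd i g + g * pd i f := by
  simp [Derivation.leibniz]

lemma pd_comm (i j : Fin n) (f : SF n) : pd i (pd j f) = pd j (pd i f) := by
  have key : ∀ (a b : Fin n) (x : RR n), pd a (pd b f) x =
      fderiv ℝ (fderiv ℝ (fun y => f y)) x (EuclideanSpace.single a 1) (EuclideanSpace.single b 1) := by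
    intro a b x
    have hd : DifferentiableAt ℝ (fderiv ℝ (fun y => f y)) x :=
      (((sf_smooth f).fderiv_right (m := ∞) (by simp)).differentiable (by simp)) x
    change fderiv ℝ (fun y => fderiv ℝ (fun y => f y) y (EuclideanSpace.single b 1)) x _ = _
    rw [fderiv_clm_apply hd (by fun_prop)]
    simp
  ext x
  rw [key, key]
  have := ((sf_smooth f).contDiffAt (x := x)).isSymmSndFDerivAt
    (by rw [minSmoothness_of_isRCLikeNormedField]; exact ENat.LEInfty.out)
  exact this _ _

/-- coordinate function -/
noncomputable def X (i : Fin n) : SF n := ⟨fun x => x i, show ContDiff ℝ ∞ (fun x : RR n => x i) by fun_prop⟩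
@[simp] lemma X_app (i : Fin n) (x) : X i x = x i := rfl

lemma pd_X (i j : Fin n) : pd i (X j) = if i = j then 1 else 0 := by
  ext x
  rw [pd_app]
  have : (fun y : RR n => X j y) = fun y => EuclideanSpace.proj (𝕜 := ℝ) j y := rfl
  rw [this, ContinuousLinearMap.fderiv]
  by_cases h : i = j
  · subst h; simp
  · simp [h, Ne.symm h]

noncomputable def nl : SF n →ₗ[ℝ] SF n := - ∑ i, (pd i).toLinearMap ∘ₗ (pd i).toLinearMap
lemma nl_eq (f : SF n) : nl f = - ∑ i, pd i (pd i f) := by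
  simp [nl]

lemma lap_eq (f : SF n) (x) : lap f.1 x = - (nl f) x := by
  rw [nl_eq]; simp; rfl

lemma lap_iter (f : SF n) (k : ℕ) : (fun x => (-1 : ℝ) ^ k * lap^[k] f.1 x) = ((nl ^ k) f).1 := by
  have : ∀ k, lap^[k] f.1 = (((-1 : ℝ) ^ k) • ((nl ^ k) f)).1 := by
    intro k
    induction k with
    | zero => ext x; simp
    | succ k ih =>
      rw [Function.iterate_succ_apply', ih]
      ext x
      rw [lap_eq, map_smul, pow_succ' (nl (n := n))]
      simp [pow_succ]
  rw [this]
  ext x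
  simp [← mul_assoc, ← mul_pow]

noncomputable def eul : SF n →ₗ[ℝ] SF n :=
  ∑ i, (LinearMap.mulLeft ℝ (X i)) ∘ₗ (pd i).toLinearMap
lemma eul_eq (f : SF n) : eul f = ∑ i, X i * pd i f := by simp [eul]

lemma nl_mul (f g : SF n) : nl (f * g) = f * nl g + g * nl f - 2 * ∑ i, pd i f * pd i g := by
  simp only [nl_eq, pd_mul, map_add, mul_neg, Finset.mul_sum, ← Finset.sum_neg_distrib,
    ← Finset.sum_add_distrib, ← Finset.sum_sub_distrib]
  refine Finset.sum_congr rfl fun i _ => ?_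
  ring

lemma nl_pd (i : Fin n) (f : SF n) : nl (pd i f) = pd i (nl f) := by
  simp only [nl_eq, map_neg, map_sum]
  congr 1
  refine Finset.sum_congr rfl fun j _ => ?_
  rw [pd_comm j i, pd_comm j i]

lemma nl_X (i : Fin n) : nl (X i) = 0 := by
  simp only [nl_eq, pd_X]
  rw [neg_eq_zero]
  refine Finset.sum_eq_zero fun j _ => ?_
  split_ifs <;> simp

lemma nl_Xmul (i : Fin n) (f : SF n) : nl (X i * f) = X i * nl f - 2 * pd i f := by
  rw [nl_mul, nl_X]
  simp [pd_X]

lemma nl_eul (f : SF n) : nl (eul f) = eul (nl f) + 2 * nl f := by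
  simp only [eul_eq, map_sum, nl_Xmul, nl_pd]
  rw [Finset.sum_sub_distrib, nl_eq f, ← Finset.mul_sum]
  ring

noncomputable def rho : SF n := (1/2 : ℝ) • (1 + ∑ i, X i ^ 2)

lemma rho_app (x : RR n) : rho x = (1 + ‖x‖^2)/2 := by
  rw [EuclideanSpace.norm_sq_eq]
  simp [rho]
  ring

lemma pd_rho (i : Fin n) : pd i rho = X i := by
  have : pd i (∑ j, X j ^ 2 : SF n) = 2 * X i := by
    rw [map_sum]
    simp only [pow_two, pd_mul, pd_X]
    simp [Finset.sum_add_distrib]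
    ring
  rw [rho, Derivation.map_smul, map_add, this]
  ext x
  simp [show (2 : SF n) x = 2 from rfl]

lemma nl_rhomul (f : SF n) : nl (rho * f) = rho * nl f - 2 * eul f - (n : SF n) * f := by
  rw [nl_mul]
  have : nl (rho : SF n) = -(n : SF n) := by
    simp [nl_eq, pd_rho, pd_X]
  rw [this]
  simp only [pd_rho, eul_eq]
  ring

lemma nlpow_succ (k : ℕ) (f : SF n) : (nl ^ (k+1)) f = nl ((nl ^ k) f) := by
  rw [pow_succ']; rfl
lemma nlpow_succ' (k : ℕ) (f : SF n) : (nl ^ (k+1)) f = (nl ^ k) (nl f) := by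
  rw [pow_succ]; rfl
lemma nlpow_pd (k : ℕ) (i : Fin n) (f : SF n) : (nl ^ k) (pd i f) = pd i ((nl ^ k) f) := by
  induction k with
  | zero => rfl
  | succ k ih => rw [nlpow_succ, ih, nl_pd, nlpow_succ]

lemma nl_natmul (k : ℕ) (f : SF n) : nl ((k : SF n) * f) = (k : SF n) * nl f := by
  rw [← nsmul_eq_mul, map_nsmul, nsmul_eq_mul]

lemma nl_two (f : SF n) : nl (2 * f) = 2 * nl f := by
  simpa using nl_natmul 2 f

lemma nlpow_Xmul (k : ℕ) (i : Fin n) (f : SF n) :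
    (nl ^ (k+1)) (X i * f) = X i * (nl ^ (k+1)) f - 2 * ((k:SF n)+1) * pd i ((nl ^ k) f) := by
  induction k with
  | zero => simp [nl_Xmul]
  | succ k ih =>
    rw [nlpow_succ, ih, map_sub, nl_Xmul, nlpow_succ (k+1)]
    have : nl (2 * ((k:SF n)+1) * pd i ((nl ^ k) f)) = 2 * ((k:SF n)+1) * pd i ((nl ^ (k+1)) f) := by
      have := nl_natmul (2 * (k+1)) (pd i ((nl ^ k) f))
      push_cast at this
      rw [this, nl_pd, nlpow_succ]
    rw [this]
    push_cast
    ring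

lemma nlpow_rhomul (k : ℕ) (f : SF n) :
    (nl ^ (k+1)) (rho * f) = rho * (nl ^ (k+1)) f
      - ((k:SF n)+1) * (2 * eul ((nl ^ k) f) + ((n:SF n) + 2 * (k:SF n)) * (nl ^ k) f) := by
  induction k with
  | zero => simp [nl_rhomul]; ring
  | succ k ih =>
    rw [nlpow_succ, ih, map_sub, nl_rhomul, nlpow_succ (k+1)]
    have h1 : nl (((k:SF n)+1) * (2 * eul ((nl ^ k) f) + ((n:SF n) + 2 * (k:SF n)) * (nl ^ k) f))
       = ((k:SF n)+1) * (2 * (eul ((nl ^ (k+1)) f) + 2 * (nl ^ (k+1)) f) + ((n:SF n) + 2 * (k:SF n)) * (nl ^ (k+1)) f) := by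
      have := nl_natmul (k+1) (2 * eul ((nl ^ k) f) + ((n:SF n) + 2 * (k:SF n)) * (nl ^ k) f)
      push_cast at this
      rw [this, map_add, nl_two, nl_eul]
      have := nl_natmul (n + 2 * k) ((nl ^ k) f)
      push_cast at this
      rw [this, nlpow_succ]
    rw [h1]
    push_cast
    ring

noncomputable def Mop (k : ℕ) (v : SF n) : SF n :=
  rho * nl v + (k : SF n) * (2 * eul v + ((n : SF n) - 2 * (k : SF n) - 2) * v)

lemma nl_intmul (k : ℤ) (f : SF n) : nl ((k : SF n) * f) = (k : SF n) * nl f := by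
  rw [← zsmul_eq_mul, map_zsmul, zsmul_eq_mul]

lemma rho_nlpow (k : ℕ) (v : SF n) : rho * (nl ^ (k+1)) v = (nl ^ k) (Mop k v) := by
  induction k generalizing v with
  | zero => simp [Mop]
  | succ k ih =>
    rw [nlpow_succ' (k+1), ih, nlpow_succ' k (Mop _ _)]
    congr 1
    simp only [Mop]
    rw [map_add, nl_rhomul, nl_natmul, map_add, nl_two, nl_eul]
    have := nl_intmul ((n : ℤ) - 2 * (k+1 : ℕ) - 2) v
    push_cast at this ⊢
    rw [this]
    ring

end SharpSob

namespace SharpSob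
open MeasureTheory Filter Topology
open scoped ContDiff
variable {n : ℕ}

lemma wbase_pos (x : RR n) : (0:ℝ) < 2 / (1 + ‖x‖^2) := by positivity

noncomputable def wp (α : ℝ) : SF n := ⟨fun x => (2 / (1 + ‖x‖^2)) ^ α,
  show ContDiff ℝ ∞ (fun x : RR n => (2 / (1 + ‖x‖^2)) ^ α) by
    refine ContDiff.rpow_const_of_ne ?_ (fun x => (wbase_pos x).ne')
    refine ContDiff.div contDiff_const (contDiff_const.add (contDiff_norm_sq ℝ)) (fun x => by positivity)⟩

lemma wp_app (α : ℝ) (x : RR n) : wp α x = (2 / (1 + ‖x‖^2)) ^ α := rfl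
lemma wp_pos (α : ℝ) (x : RR n) : 0 < wp α x := Real.rpow_pos_of_pos (wbase_pos x) _
lemma wp_mul (α β : ℝ) : (wp α * wp β : SF n) = wp (α + β) := by
  ext x; simp [wp_app, Real.rpow_add (wbase_pos x)]
lemma wp_zero : (wp 0 : SF n) = 1 := by ext x; simp [wp_app]
lemma wp_one_app (x : RR n) : wp 1 x = 2 / (1 + ‖x‖^2) := by simp [wp_app]
lemma rho_eq : (rho : SF n) = wp (-1) := by
  ext x; rw [rho_app, wp_app, Real.rpow_neg_one]; simp
lemma wp_rho (α : ℝ) : (wp α * rho : SF n) = wp (α - 1) := by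
  rw [rho_eq, wp_mul]; rfl
lemma wp_one_rho : (wp 1 * rho : SF n) = 1 := by rw [wp_rho, sub_self, wp_zero]
lemma wp_succ (α : ℝ) : (wp (α + 1) * rho : SF n) = wp α := by rw [wp_rho]; simp

lemma sumX : (∑ i, X i * X i : SF n) = 2 * rho - 1 := by
  ext x
  simp [rho, show (2 : SF n) x = 2 from rfl, pow_two]
  ring

lemma wp_rpow (α β : ℝ) (x : RR n) : (wp α x) ^ β = wp (α * β) x := by
  rw [wp_app, wp_app, Real.rpow_mul (wbase_pos x).le]

lemma pd_wp_one (i : Fin n) : pd i (wp 1 : SF n) = - (wp 2 * X i) := by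
  have h := congrArg (pd i) (wp_one_rho (n := n))
  rw [pd_mul, pd_rho, Derivation.map_one_eq_zero] at h
  have h2 : (wp 2 : SF n) = wp 1 * wp 1 := by rw [wp_mul]; norm_num
  rw [h2]
  linear_combination (wp 1) * h - pd i (wp 1) * wp_one_rho (n := n)

lemma pd_wp (i : Fin n) (α : ℝ) : pd i (wp α : SF n) = (-α) • (wp (α + 1) * X i) := by
  ext x
  have hd : HasFDerivAt (fun y : RR n => wp 1 y) (fderiv ℝ (fun y : RR n => wp 1 y) x) x :=
    ((sf_diffble (wp 1 : SF n)) x).hasFDerivAt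
  have h2 := hd.rpow_const (p := α) (Or.inl (wp_pos 1 x).ne')
  have h3 : (fun y : RR n => wp α y) = fun y => (wp 1 y) ^ α := by
    ext y; rw [wp_rpow, one_mul]
  rw [pd_app, h3, h2.fderiv]
  have h4 := congrArg (fun f : SF n => f x) (pd_wp_one (n := n) i)
  simp only [pd_app] at h4
  simp only [ContinuousLinearMap.smul_apply, smul_eq_mul]
  rw [h4, wp_rpow]
  simp only [SF.smul_app, SF.mul_app, SF.neg_app]
  have : wp (α + 1) x = wp (1 * (α - 1)) x * wp 2 x := by
    rw [← SF.mul_app, wp_mul]; ring_nf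
  rw [this]; ring

lemma nl_wp (b : ℝ) : nl (wp b : SF n) =
    b • ((n:ℝ) • wp (b+1) - (b+1) • (wp (b+2) * (2 * rho - 1))) := by
  rw [nl_eq, ← sumX]
  simp only [pd_wp, Derivation.map_smul, pd_mul, pd_X]
  ext x
  have e2 : b + 1 + 1 = b + 2 := by ring
  simp only [SF.sum_app, SF.neg_app, SF.smul_app, SF.add_app, SF.mul_app, SF.sub_app, X_app, e2,
    if_true, SF.one_app]
  have : ∀ i : Fin n, (-b) * (wp (b + 1) x * 1 + x i * (-(b + 1) * (wp (b + 2) x * x i)))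
     = (-b) * wp (b+1) x + (b * (b+1) * wp (b+2) x) * (x i * x i) := fun i => by ring
  rw [Finset.sum_congr rfl (fun i _ => this i), Finset.sum_add_distrib]
  simp only [← Finset.mul_sum, Finset.sum_const, Finset.card_univ, Fintype.card_fin, nsmul_eq_mul]
  ring

lemma sum_pd_wp (b : ℝ) (V : SF n) : ∑ i, pd i (wp b) * pd i V = (-b) • (wp (b+1) * eul V) := by
  simp only [pd_wp, eul_eq, Finset.mul_sum, Finset.smul_sum]
  refine Finset.sum_congr rfl fun i _ => ?_
  rw [smul_mul_assoc, mul_assoc]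

lemma eul_mul (f g : SF n) : eul (f * g) = f * eul g + g * eul f := by
  simp only [eul_eq, pd_mul, Finset.mul_sum, ← Finset.sum_add_distrib]
  refine Finset.sum_congr rfl fun i _ => ?_
  ring

lemma eul_wp (b : ℝ) : eul (wp b : SF n) = (-b) • (wp (b+1) * (2 * rho - 1)) := by
  rw [← sumX]
  simp only [eul_eq, pd_wp, Finset.mul_sum, Finset.smul_sum]
  refine Finset.sum_congr rfl fun i _ => ?_
  rw [mul_smul_comm]; congr 1; ring

noncomputable def Lop : SF n →ₗ[ℝ] SF n where
  toFun V := rho^2 * nl V + ((n:ℝ)-2) • (rho * eul V)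
  map_add' f g := by rw [map_add, map_add]; ext x; simp; ring
  map_smul' c f := by rw [map_smul, map_smul]; ext x; simp; ring
lemma Lop_eq (V : SF n) : Lop V = rho^2 * nl V + ((n:ℝ)-2) • (rho * eul V) := rfl

noncomputable def cc (n : ℕ) (l : ℕ) : ℝ := ((n : ℝ) + 2 * l - 2) * ((n : ℝ) - 2 * l) / 4
noncomputable def bb (n : ℕ) (k : ℕ) : ℝ := ((n : ℝ) - 2 * k) / 2

lemma bb_succ (k : ℕ) : bb n k = bb n (k+1) + 1 := by simp [bb]; ring

lemma Mop_wp (k : ℕ) (V : SF n) : Mop k (wp (bb n (k+1)) * V)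
    = wp (bb n k) * (Lop V + cc n (k+1) • V) := by
  rw [Mop, nl_mul, nl_wp, eul_mul, eul_wp, sum_pd_wp, Lop_eq]
  have hb : bb n k = bb n (k+1) + 1 := bb_succ k
  rw [hb]
  have hn : (n:ℝ) = 2 * bb n (k+1) + 2 * k + 2 := by simp [bb]; ring
  have hc : cc n (k+1) = bb n (k+1) * ((n:ℝ) + 2 * k) / 2 := by simp [bb, cc]; ring
  rw [hc]
  set b := bb n (k+1)
  ext x
  have h1 : wp (b+1) x = wp (b+2) x * rho x := by
    rw [← SF.mul_app, wp_rho]; ring_nf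
  have h2 : wp b x = wp (b+2) x * rho x * rho x := by
    rw [← h1, ← SF.mul_app, wp_rho]; ring_nf
  simp only [SF.add_app, SF.mul_app, SF.smul_app, SF.sub_app, SF.natCast_app, SF.pow_app, SF.one_app,
    show (2 : SF n) x = 2 from rfl, h1, h2, hn]
  ring

/-! commutator identity -/
lemma commut (k : ℕ) (v : SF n) :
    ∑ i, (wp 1 * X i) * (nl^(k+1)) ((wp 1 * X i) * v) + (wp 1 - 1) * (nl^(k+1)) ((wp 1 - 1) * v)
    = (nl^(k+1)) v + ((k:SF n)+1) * ((n:SF n)+2*(k:SF n)) * (wp 1 * (nl^k) (wp 1 * v)) := by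
  set φ := wp 1 * v with hφ
  have hv : v = rho * φ := by linear_combination (-v) * wp_one_rho (n := n)
  have h0 := nlpow_rhomul k φ
  rw [← hv] at h0
  have h1 : (nl^(k+1)) ((wp 1 - 1) * v) = (nl^(k+1)) φ - (nl^(k+1)) v := by
    rw [← map_sub]; congr 1; rw [hφ]; ring
  have h2 : ∀ i, (wp 1 * X i) * (nl^(k+1)) ((wp 1 * X i) * v) =
     wp 1 * (nl^(k+1)) φ * (X i * X i) - 2 * ((k:SF n)+1) * wp 1 * (X i * pd i ((nl^k) φ)) := by
    intro i
    rw [show wp 1 * X i * v = X i * φ by rw [hφ]; ring, nlpow_Xmul]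
    ring
  rw [h1, Finset.sum_congr rfl (fun i _ => h2 i), Finset.sum_sub_distrib, ← Finset.mul_sum,
    ← Finset.mul_sum, sumX, ← eul_eq]
  linear_combination (-wp 1) * h0 + (nl^(k+1)) φ * wp_one_rho (n := n)

end SharpSob

namespace SharpSob
open MeasureTheory Filter Topology
open scoped ContDiff
variable {n : ℕ}

/-- compact support -/
def IsC (f : SF n) : Prop := HasCompactSupport (fun x => f x)

lemma IsC.mul_left {f : SF n} (hf : IsC f) (g : SF n) : IsC (g * f) :=
  HasCompactSupport.mul_left (f' := fun x => f x) (f := fun x => g x) hf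
lemma IsC.mul_right {f : SF n} (hf : IsC f) (g : SF n) : IsC (f * g) :=
  HasCompactSupport.mul_right (f' := fun x => g x) (f := fun x => f x) hf
lemma IsC.add {f g : SF n} (hf : IsC f) (hg : IsC g) : IsC (f + g) :=
  HasCompactSupport.add (f' := fun x => g x) (f := fun x => f x) hf hg
lemma IsC.smul {f : SF n} (hf : IsC f) (c : ℝ) : IsC (c • f) := by
  have := hf.mul_left (algebraMap ℝ (SF n) c)
  rwa [← Algebra.smul_def] at this
lemma IsC.neg {f : SF n} (hf : IsC f) : IsC (-f) := by
  have := hf.smul (-1); rwa [neg_one_smul] at this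
lemma IsC.sub {f g : SF n} (hf : IsC f) (hg : IsC g) : IsC (f - g) := by
  rw [sub_eq_add_neg]; exact hf.add hg.neg
lemma isC_zero : IsC (0 : SF n) := HasCompactSupport.zero
lemma isC_sum {ι : Type*} (s : Finset ι) (f : ι → SF n) (h : ∀ i ∈ s, IsC (f i)) :
    IsC (∑ i ∈ s, f i) := by
  induction s using Finset.cons_induction with
  | empty => simpa using isC_zero
  | cons a s ha ih =>
    rw [Finset.sum_cons]
    exact (h a (by simp)).add (ih fun i hi => h i (by simp [hi]))
lemma IsC.pd {f : SF n} (hf : IsC f) (i : Fin n) : IsC (pd i f) :=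
  HasCompactSupport.fderiv_apply (𝕜 := ℝ) hf _
lemma IsC.nl {f : SF n} (hf : IsC f) : IsC (nl f) := by
  rw [nl_eq]; exact (isC_sum _ _ fun i _ => (hf.pd i).pd i).neg
lemma IsC.nlpow {f : SF n} (hf : IsC f) (k : ℕ) : IsC ((SharpSob.nl^k) f) := by
  induction k with
  | zero => exact hf
  | succ k ih => rw [nlpow_succ]; exact ih.nl
lemma IsC.eul {f : SF n} (hf : IsC f) : IsC (eul f) := by
  rw [eul_eq]; exact isC_sum _ _ fun i _ => (hf.pd i).mul_left _
lemma IsC.Lop {f : SF n} (hf : IsC f) : IsC (Lop f) := by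
  rw [Lop_eq]; exact (hf.nl.mul_left _).add ((hf.eul.mul_left _).smul _)
lemma IsC.int {f : SF n} (hf : IsC f) : Integrable (fun x => f x) :=
  (sf_cont f).integrable_of_hasCompactSupport hf

noncomputable def In (f : SF n) : ℝ := ∫ x, f x

lemma In_add {f g : SF n} (hf : IsC f) (hg : IsC g) : In (f + g) = In f + In g :=
  integral_add hf.int hg.int
lemma In_sub {f g : SF n} (hf : IsC f) (hg : IsC g) : In (f - g) = In f - In g :=
  integral_sub hf.int hg.int
lemma In_smul (c : ℝ) (f : SF n) : In (c • f) = c * In f :=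
  integral_const_mul c _
lemma In_neg (f : SF n) : In (-f) = - In f := integral_neg _
lemma In_sum {ι : Type*} (s : Finset ι) (f : ι → SF n) (h : ∀ i ∈ s, IsC (f i)) :
    In (∑ i ∈ s, f i) = ∑ i ∈ s, In (f i) := by
  unfold In
  simp only [SF.sum_app]
  exact integral_finset_sum s fun i hi => (h i hi).int
lemma In_nonneg {f : SF n} (h : ∀ x, 0 ≤ f x) : 0 ≤ In f := integral_nonneg h
lemma In_zero : In (0 : SF n) = 0 := integral_zero _ _

lemma In_pd {f : SF n} (hf : IsC f) (i : Fin n) : In (pd i f) = 0 := by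
  have h := integral_mul_fderiv_eq_neg_fderiv_mul_of_integrable (𝕜 := ℝ)
    (μ := (volume : Measure (RR n))) (f := fun _ => (1:ℝ)) (g := fun x => f x)
    (v := EuclideanSpace.single i 1)
    (by simp) (by simp only [one_mul]; exact (hf.pd i).int) (by simpa using hf.int)
    (by fun_prop) (fun x _ => sf_diffble f x)
  simp at h
  exact h

lemma In_nl {f g : SF n} (h : IsC f ∨ IsC g) : In (f * nl g) = ∑ i, In (pd i f * pd i g) := by
  have h1 : ∀ i, IsC (f * pd i g) := fun i => h.elim (fun h => h.mul_right _) (fun h => (h.pd i).mul_left _)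
  have h2 : ∀ i, IsC (pd i f * pd i g) := fun i => h.elim (fun h => (h.pd i).mul_right _) (fun h => (h.pd i).mul_left _)
  have h3 : IsC (f * nl g) := h.elim (fun h => h.mul_right _) (fun h => h.nl.mul_left _)
  have e : f * nl g = ∑ i, pd i f * pd i g - ∑ i, pd i (f * pd i g) := by
    rw [nl_eq, ← Finset.sum_sub_distrib]
    simp only [mul_neg, Finset.mul_sum, ← Finset.sum_neg_distrib]
    refine Finset.sum_congr rfl fun i _ => ?_
    rw [pd_mul]; ring
  rw [e, In_sub (isC_sum _ _ fun i _ => h2 i) (isC_sum _ _ fun i _ => (h1 i).pd i),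
    In_sum _ _ (fun i _ => h2 i), In_sum _ _ (fun i _ => (h1 i).pd i)]
  rw [Finset.sum_eq_zero (fun i _ => In_pd (h1 i) i), sub_zero]

lemma In_nl_symm {f g : SF n} (h : IsC f ∨ IsC g) : In (f * nl g) = In (g * nl f) := by
  rw [In_nl h, In_nl h.symm]
  refine Finset.sum_congr rfl fun i _ => ?_
  rw [mul_comm]

noncomputable def E (k : ℕ) (u v : SF n) : ℝ := In (u * (nl^k) v)

lemma E_symm (k : ℕ) {u v : SF n} (h : IsC u ∨ IsC v) : E k u v = E k v u := by
  unfold E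
  induction k generalizing u v with
  | zero => simp [mul_comm]
  | succ k ih =>
    rw [nlpow_succ, nlpow_succ', In_nl_symm (h.imp id fun h => h.nlpow k), mul_comm,
      ih (u := nl u) (v := v) (h.imp (fun h => h.nl) id)]

lemma E_isC {u v : SF n} (h : IsC u ∨ IsC v) (k : ℕ) : IsC (u * (nl^k) v) :=
  h.elim (fun h => h.mul_right _) (fun h => (h.nlpow k).mul_left _)

lemma E_add_right (k : ℕ) {u v w : SF n} (h : IsC u ∨ (IsC v ∧ IsC w)) :
    E k u (v + w) = E k u v + E k u w := by
  unfold E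
  rw [map_add, mul_add, In_add (E_isC (h.imp id And.left) k) (E_isC (h.imp id And.right) k)]
lemma E_smul_right (k : ℕ) (c : ℝ) (u v : SF n) : E k u (c • v) = c * E k u v := by
  unfold E; rw [map_smul, mul_smul_comm, In_smul]
lemma E_add_left (k : ℕ) {u v w : SF n} (h : IsC u ∨ (IsC v ∧ IsC w)) :
    E k (v + w) u = E k v u + E k w u := by
  unfold E
  rw [add_mul, In_add (E_isC (h.symm.imp And.left id) k) (E_isC (h.symm.imp And.right id) k)]
lemma E_smul_left (k : ℕ) (c : ℝ) (u v : SF n) : E k (c • u) v = c * E k u v := by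
  unfold E; rw [smul_mul_assoc, In_smul]

noncomputable def A (k : ℕ) (U V : SF n) : ℝ := E k (wp (bb n k) * U) (wp (bb n k) * V)

lemma A_symm (k : ℕ) {u v : SF n} (h : IsC u ∨ IsC v) : A k u v = A k v u :=
  E_symm k (h.imp (fun h => h.mul_left _) (fun h => h.mul_left _))
lemma A_add_right (k : ℕ) {u v w : SF n} (h : IsC u ∨ (IsC v ∧ IsC w)) :
    A k u (v + w) = A k u v + A k u w := by
  unfold A
  rw [mul_add, E_add_right k (h.imp (fun h => h.mul_left _) (fun h => ⟨h.1.mul_left _, h.2.mul_left _⟩))]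
lemma A_smul_right (k : ℕ) (c : ℝ) (u v : SF n) : A k u (c • v) = c * A k u v := by
  unfold A; rw [mul_smul_comm, E_smul_right]
lemma A_add_left (k : ℕ) {u v w : SF n} (h : IsC u ∨ (IsC v ∧ IsC w)) :
    A k (v + w) u = A k v u + A k w u := by
  unfold A
  rw [mul_add, E_add_left k (h.imp (fun h => h.mul_left _) (fun h => ⟨h.1.mul_left _, h.2.mul_left _⟩))]
lemma A_smul_left (k : ℕ) (c : ℝ) (u v : SF n) : A k (c • u) v = c * A k u v := by
  unfold A; rw [mul_smul_comm, E_smul_left]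

lemma A_succ (k : ℕ) (U V : SF n) : A (k+1) U V = A k U (Lop V + cc n (k+1) • V) := by
  unfold A E
  congr 1
  rw [← Mop_wp, ← rho_nlpow, bb_succ k, ← wp_succ (bb n (k+1))]
  ring

lemma A_zero (U V : SF n) : A 0 U V = In (wp n * (U * V)) := by
  unfold A E
  congr 1
  have : (wp (n:ℝ) : SF n) = wp (bb n 0) * wp (bb n 0) := by
    rw [wp_mul]; congr 1; simp [bb]
  rw [this]; simp only [pow_zero, Module.End.one_apply]; ring

lemma A_zero_Lop {U V : SF n} (h : IsC U ∨ IsC V) :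
    A 0 U (Lop V) = ∑ i, In (wp ((n:ℝ)-2) * (pd i U * pd i V)) := by
  have h1 : ∀ i, IsC (wp ((n:ℝ)-2) * (U * pd i V)) := fun i =>
    IsC.mul_left (h.elim (fun h => h.mul_right _) (fun h => (h.pd i).mul_left _)) _
  have h2 : ∀ i, IsC (wp ((n:ℝ)-2) * (pd i U * pd i V)) := fun i =>
    IsC.mul_left (h.elim (fun h => (h.pd i).mul_right _) (fun h => (h.pd i).mul_left _)) _
  have hw1 : (wp (n:ℝ) * rho^2 : SF n) = wp ((n:ℝ) - 2) := by
    rw [pow_two, ← mul_assoc, wp_rho, wp_rho]; congr 1; ring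
  have hw2 : (wp (n:ℝ) * rho : SF n) = wp ((n:ℝ) - 2 + 1) := by
    rw [wp_rho]; congr 1; ring
  have e : wp (n:ℝ) * (U * Lop V) = ∑ i, wp ((n:ℝ)-2) * (pd i U * pd i V)
      - ∑ i, pd i (wp ((n:ℝ)-2) * (U * pd i V)) := by
    have e1 : wp (n:ℝ) * (U * Lop V) = U * (wp ((n:ℝ)-2) * nl V) + ((n:ℝ)-2) • (U * (wp ((n:ℝ)-2+1) * eul V)) := by
      rw [Lop_eq, ← hw1, ← hw2, mul_add, mul_add, mul_smul_comm, mul_smul_comm]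
      congr 1
      · ring
      · congr 1; ring
    rw [e1, nl_eq, eul_eq, ← Finset.sum_sub_distrib]
    simp only [mul_neg, Finset.mul_sum, Finset.smul_sum, ← Finset.sum_neg_distrib, ← Finset.sum_add_distrib]
    refine Finset.sum_congr rfl fun i _ => ?_
    rw [pd_mul, pd_mul, pd_wp]
    ext x
    simp only [SF.add_app, SF.sub_app, SF.neg_app, SF.smul_app, SF.mul_app]
    ring
  rw [A_zero, e, In_sub (isC_sum _ _ fun i _ => h2 i) (isC_sum _ _ fun i _ => (h1 i).pd i),
    In_sum _ _ (fun i _ => h2 i), In_sum _ _ (fun i _ => (h1 i).pd i)]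
  rw [Finset.sum_eq_zero (fun i _ => In_pd (h1 i) i), sub_zero]

lemma A_zero_Lop_symm {U V : SF n} (h : IsC U ∨ IsC V) : A 0 U (Lop V) = A 0 (Lop U) V := by
  rw [A_symm 0 (u := Lop U) (h.imp (fun h => h.Lop) id), A_zero_Lop h, A_zero_Lop h.symm]
  refine Finset.sum_congr rfl fun i _ => ?_
  rw [mul_comm (pd i U)]

lemma Lpow_succ (k : ℕ) (f : SF n) : (Lop ^ (k+1)) f = Lop ((Lop ^ k) f) := by
  rw [pow_succ']; rfl
lemma Lpow_succ' (k : ℕ) (f : SF n) : (Lop ^ (k+1)) f = (Lop ^ k) (Lop f) := by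
  rw [pow_succ]; rfl
lemma IsC.Lpow {f : SF n} (hf : IsC f) (k : ℕ) : IsC ((SharpSob.Lop^k) f) := by
  induction k with
  | zero => exact hf
  | succ k ih => rw [Lpow_succ]; exact ih.Lop

noncomputable def T (k j : ℕ) (V : SF n) : ℝ := A k V ((Lop^j) V)

lemma T_succ (k j : ℕ) {V : SF n} (h : IsC V) : T (k+1) j V = T k (j+1) V + cc n (k+1) * T k j V := by
  unfold T
  rw [A_succ, A_add_right k (Or.inl h), A_smul_right, Lpow_succ]

lemma A_zero_nonneg (V : SF n) : 0 ≤ A 0 V V := by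
  rw [A_zero]; refine In_nonneg fun x => ?_
  simp only [SF.mul_app]
  exact mul_nonneg (wp_pos _ x).le (mul_self_nonneg _)

lemma A_zero_Lop_nonneg {V : SF n} (h : IsC V) : 0 ≤ A 0 V (Lop V) := by
  rw [A_zero_Lop (Or.inl h)]
  refine Finset.sum_nonneg fun i _ => In_nonneg fun x => ?_
  simp only [SF.mul_app]
  exact mul_nonneg (wp_pos _ x).le (mul_self_nonneg _)

lemma A_zero_Lpow (m : ℕ) {U V : SF n} (h : IsC U) (hV : IsC V) : A 0 U ((Lop^m) V) = A 0 ((Lop^m) U) V := by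
  induction m generalizing V with
  | zero => rfl
  | succ m ih =>
    rw [Lpow_succ', ih hV.Lop, A_zero_Lop_symm (Or.inl (h.Lpow m)), Lpow_succ]

lemma T_zero_nonneg (j : ℕ) {V : SF n} (h : IsC V) : 0 ≤ T 0 j V := by
  unfold T
  rcases Nat.even_or_odd' j with ⟨m, rfl | rfl⟩
  · have : (Lop^(2*m)) V = (Lop^m) ((Lop^m) V) := by rw [two_mul, pow_add]; rfl
    rw [this, A_zero_Lpow m h (h.Lpow m)]
    exact A_zero_nonneg _
  · have : (Lop^(2*m+1)) V = (Lop^m) (Lop ((Lop^m) V)) := by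
      rw [← Lpow_succ, show 2*m+1 = m + (m+1) by ring, pow_add]; rfl
    rw [this, A_zero_Lpow m h (h.Lpow m).Lop]
    exact A_zero_Lop_nonneg (h.Lpow m)

noncomputable def Lam (n k : ℕ) : ℝ := ∏ l ∈ Finset.Icc 1 k, cc n l
lemma Lam_succ (k : ℕ) : Lam n (k+1) = Lam n k * cc n (k+1) := by
  unfold Lam; rw [Finset.prod_Icc_succ_top (by simp)]
lemma cc_pos {l : ℕ} (h1 : 1 ≤ l) (h : 2 * l < n) : 0 < cc n l := by
  have h1' : (1:ℝ) ≤ l := by exact_mod_cast h1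
  have h' : 2 * (l:ℝ) < n := by exact_mod_cast h
  unfold cc
  have : 0 < (n:ℝ) + 2 * l - 2 := by linarith
  have : 0 < (n:ℝ) - 2 * l := by linarith
  positivity
lemma Lam_pos {k : ℕ} (h : 2 * k < n) : 0 < Lam n k :=
  Finset.prod_pos fun l hl => by
    rw [Finset.mem_Icc] at hl
    exact cc_pos hl.1 (by omega)

lemma T_ge {k : ℕ} (hk : 2 * k < n) (j : ℕ) {V : SF n} (h : IsC V) : Lam n k * T 0 j V ≤ T k j V := by
  induction k generalizing j with
  | zero => simp [Lam]
  | succ k ih =>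
    rw [T_succ _ _ h, Lam_succ]
    have h1 := ih (by omega) (j+1)
    have h2 := ih (by omega) j
    have hc : 0 < cc n (k+1) := cc_pos (by omega) hk
    have hL := Lam_pos (n := n) (k := k) (by omega)
    have h3 := mul_le_mul_of_nonneg_left h2 hc.le
    have h4 := mul_nonneg hL.le (T_zero_nonneg (j+1) h)
    linarith

lemma T_nonneg {k : ℕ} (hk : 2 * k < n) (j : ℕ) {V : SF n} (h : IsC V) : 0 ≤ T k j V :=
  (mul_nonneg (Lam_pos hk).le (T_zero_nonneg j h)).trans (T_ge hk j h)

lemma T_gap {k : ℕ} (hk : 2 * (k + 1) < n) : ∃ C : ℝ, 0 ≤ C ∧ ∀ V : SF n, IsC V →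
    T (k+1) 0 V - Lam n (k+1) * T 0 0 V ≤ C * T k 1 V := by
  induction k with
  | zero =>
    refine ⟨1, by norm_num, fun V h => ?_⟩
    rw [T_succ _ _ h, Lam_succ]
    simp [Lam]
  | succ k ih =>
    obtain ⟨C, hC, H⟩ := ih (by omega)
    have hc1 : 0 < cc n (k+1) := cc_pos (by omega) (by omega)
    have hc2 : 0 < cc n (k+1+1) := cc_pos (by omega) (by omega)
    refine ⟨1 + cc n (k+1+1) * (C / cc n (k+1)), by positivity, fun V h => ?_⟩
    have h1 := H V h
    have h2 : T (k+1) 1 V = T k 2 V + cc n (k+1) * T k 1 V := T_succ _ _ h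
    have h3 : 0 ≤ T k 2 V := T_nonneg (by omega) 2 h
    have h4 : C * T k 1 V ≤ C / cc n (k+1) * T (k+1) 1 V := by
      rw [h2]
      have : C * T k 1 V = C / cc n (k+1) * (cc n (k+1) * T k 1 V) := by field_simp
      rw [this]
      gcongr
      linarith
    rw [T_succ _ _ h, Lam_succ]
    have h5 := mul_le_mul_of_nonneg_left (h1.trans h4) hc2.le
    linarith

noncomputable def B (k : ℕ) (U V : SF n) : ℝ := A k U V - Lam n k * A 0 U V

lemma B_nonneg {k : ℕ} (hk : 2 * k < n) {V : SF n} (h : IsC V) : 0 ≤ B k V V := by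
  have := T_ge hk 0 h
  simp only [T, pow_zero, Module.End.one_apply] at this
  unfold B; linarith

lemma B_CS {k : ℕ} (hk : 2 * k < n) {U V : SF n} (hU : IsC U) (hV : IsC V) :
    (B k U V)^2 ≤ B k U U * B k V V := by
  have key : ∀ t : ℝ, 0 ≤ B k U U * (t * t) + (2 * B k U V) * t + B k V V := by
    intro t
    have h := B_nonneg hk ((hU.smul t).add hV)
    have e : ∀ m, A m (t • U + V) (t • U + V) = A m U U * (t*t) + 2 * A m U V * t + A m V V := by
      intro m
      rw [A_add_right m (Or.inl ((hU.smul t).add hV)), A_add_left m (Or.inl (hU.smul t)),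
        A_add_left m (Or.inl hV), A_smul_right, A_smul_left, A_smul_right, A_smul_left,
        A_symm m (u := V) (v := U) (Or.inl hV)]
      ring
    unfold B at h ⊢
    rw [e, e] at h
    linarith
  have := discrim_le_zero key
  unfold discrim at this
  nlinarith

lemma E_nonneg {k : ℕ} (hk : 2 * k < n) {v : SF n} (h : IsC v) : 0 ≤ E k v v := by
  have h1 := T_nonneg hk 0 (h.mul_left (wp (-bb n k)))
  simp only [T, pow_zero, Module.End.one_apply, A] at h1
  rw [← mul_assoc, wp_mul, add_neg_cancel, wp_zero, one_mul] at h1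
  exact h1

lemma commut_int (k : ℕ) {v : SF n} (h : IsC v) :
    ∑ i, E (k+1) ((wp 1 * X i) * v) ((wp 1 * X i) * v) + E (k+1) ((wp 1 - 1) * v) ((wp 1 - 1) * v)
    = E (k+1) v v + ((k:ℝ)+1) * ((n:ℝ)+2*k) * E k (wp 1 * v) (wp 1 * v) := by
  have h1 := congrArg (fun f => In (v * f)) (commut k v)
  have c1 : ∀ i, IsC (v * ((wp 1 * X i) * (nl^(k+1)) ((wp 1 * X i) * v))) := fun i => h.mul_right _
  rw [mul_add, mul_add, In_add (h.mul_right _) (h.mul_right _), In_add (h.mul_right _) (h.mul_right _),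
    Finset.mul_sum, In_sum _ _ (fun i _ => h.mul_right _)] at h1
  have e3 : v * (((k:SF n)+1) * ((n:SF n)+2*(k:SF n)) * (wp 1 * (nl^k) (wp 1 * v)))
     = (((k:ℝ)+1) * ((n:ℝ)+2*k)) • (wp 1 * v * (nl^k) (wp 1 * v)) := by
    ext x
    simp only [SF.mul_app, SF.smul_app, SF.add_app, SF.natCast_app, SF.one_app, show (2 : SF n) x = 2 from rfl]
    ring
  rw [e3, In_smul] at h1
  unfold E
  rw [← h1]
  congr 1
  · refine Finset.sum_congr rfl fun i _ => ?_
    congr 1; ring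
  · congr 1; ring

end SharpSob

namespace SharpSob
open MeasureTheory Filter Topology
open scoped ContDiff NNReal ENNReal
variable {n : ℕ}

lemma vec_sum (y : RR n) : y = ∑ i, y i • (EuclideanSpace.single i (1:ℝ) : RR n) := by
  have := (EuclideanSpace.basisFun (Fin n) ℝ).sum_repr y
  simpa using this.symm

lemma fderiv_apply_sum (f : SF n) (x y : RR n) : fderiv ℝ (fun z => f z) x y = ∑ i, y i * pd i f x := by
  conv_lhs => rw [vec_sum y]
  rw [map_sum]
  simp only [map_smul, smul_eq_mul]
  rfl

lemma fderiv_norm_le (f : SF n) (x : RR n) : ‖fderiv ℝ (fun z => f z) x‖ ≤ ∑ i, |pd i f x| := by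
  refine ContinuousLinearMap.opNorm_le_bound _ (Finset.sum_nonneg fun i _ => abs_nonneg _) fun y => ?_
  rw [fderiv_apply_sum, Real.norm_eq_abs, Finset.sum_mul]
  refine (Finset.abs_sum_le_sum_abs _ _).trans (Finset.sum_le_sum fun i _ => ?_)
  rw [abs_mul, mul_comm]
  gcongr
  exact PiLp.norm_apply_le y i

lemma E_succ_sum (k : ℕ) {v : SF n} (h : IsC v) : E (k+1) v v = ∑ i, E k (pd i v) (pd i v) := by
  unfold E
  rw [nlpow_succ, In_nl (Or.inl h)]
  simp only [nlpow_pd]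

lemma sob (k : ℕ) (hk : 2 * k < n) : ∃ C : ℝ≥0, ∀ v : SF n, IsC v →
    eLpNorm (fun x => v x) ((2 * n / (n - 2 * k) : ℝ).toNNReal : ℝ≥0) volume ≤ C * ENNReal.ofReal (√(E k v v)) := by
  induction k with
  | zero =>
    refine ⟨1, fun v hv => ?_⟩
    have hn : (n:ℝ) ≠ 0 := by have : 0 < n := by omega
                              positivity
    have e2 : (2 * n / (n - 2 * (0:ℕ)) : ℝ).toNNReal = 2 := by
      rw [show (2 * n / (n - 2 * (0:ℕ)) : ℝ) = 2 by field_simp; simp; omega]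
      simp
    rw [e2]
    have hm : MemLp (fun x => v x) ((2:ℝ≥0) : ℝ≥0∞) volume := (sf_cont v).memLp_of_hasCompactSupport hv
    rw [hm.eLpNorm_eq_integral_rpow_norm (by norm_num) (by norm_num)]
    simp only [ENNReal.coe_one, one_mul]
    apply ENNReal.ofReal_le_ofReal
    rw [Real.sqrt_eq_rpow]
    apply le_of_eq
    simp [E, In, ← pow_two]
  | succ k ih =>
    obtain ⟨C, hC⟩ := ih (by omega)
    have hkR : 2 * ((k:ℝ) + 1) < n := by exact_mod_cast hk
    have hk0 : (0:ℝ) ≤ k := by positivity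
    set p : ℝ≥0 := (2 * n / (n - 2 * k) : ℝ).toNNReal with hp
    set p' : ℝ≥0 := (2 * n / (n - 2 * (k+1:ℕ)) : ℝ).toNNReal with hp'
    have pe : (p:ℝ) = 2 * n / (n - 2 * k) := Real.coe_toNNReal _ (div_nonneg (by positivity) (by linarith))
    have pe' : (p':ℝ) = 2 * n / (n - 2 * (k+1)) := by
      rw [hp']; push_cast
      exact Real.coe_toNNReal _ (div_nonneg (by positivity) (by linarith))
    have hp1 : 1 ≤ p := by
      rw [← NNReal.coe_le_coe, pe, NNReal.coe_one, le_div_iff₀ (by linarith)]; linarith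
    have hpp : (p':ℝ)⁻¹ = p⁻¹ - (Module.finrank ℝ (RR n) : ℝ)⁻¹ := by
      rw [finrank_euclideanSpace_fin, NNReal.coe_inv, pe, pe']
      have : (n:ℝ) ≠ 0 := by linarith
      field_simp; ring
    refine ⟨SNormLESNormFDerivOfEqConst ℝ (volume : Measure (RR n)) p * (n * C), fun v hv => ?_⟩
    have h1 := eLpNorm_le_eLpNorm_fderiv_of_eq (μ := (volume : Measure (RR n))) (u := fun x => v x)
      ((sf_smooth v).of_le (by simp)) hv hp1 (by rw [finrank_euclideanSpace_fin]; omega) hpp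
    refine h1.trans ?_
    rw [ENNReal.coe_mul, mul_assoc]
    gcongr
    have h2 : eLpNorm (fderiv ℝ (fun x => v x)) p volume ≤ eLpNorm (∑ i, fun x => |pd i v x|) p volume := by
      refine eLpNorm_mono_real fun x => ?_
      rw [Finset.sum_apply]
      exact fderiv_norm_le v x
    refine h2.trans ((eLpNorm_sum_le (fun i _ => ((sf_cont (pd i v)).abs).aestronglyMeasurable) (by exact_mod_cast hp1)).trans ?_)
    have h3 : ∀ i ∈ Finset.univ, eLpNorm (fun x => |pd i v x|) p volume ≤ C * ENNReal.ofReal (√(E (k+1) v v)) := by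
      intro i _
      have h4 : eLpNorm (fun x => |pd i v x|) p volume = eLpNorm (fun x => pd i v x) p volume :=
        eLpNorm_norm (fun x => pd i v x)
      rw [h4]
      refine (hC _ (hv.pd i)).trans ?_
      gcongr
      rw [E_succ_sum k hv]
      exact Finset.single_le_sum (f := fun i => E k (pd i v) (pd i v))
        (fun j _ => E_nonneg (by omega) (hv.pd j)) (Finset.mem_univ i)
    refine (Finset.sum_le_sum h3).trans ?_
    simp [mul_assoc]

/-! affine maps -/
noncomputable def aff (r : ℝ) (z : RR n) (f : SF n) : SF n :=
  ⟨fun x => f (r • x + z), show ContDiff ℝ ∞ (fun x : RR n => f (r • x + z)) from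
    (sf_smooth f).comp (by fun_prop)⟩
lemma aff_app (r : ℝ) (z : RR n) (f : SF n) (x : RR n) : aff r z f x = f (r • x + z) := rfl

lemma aff_pd (r : ℝ) (z : RR n) (f : SF n) (i : Fin n) : pd i (aff r z f) = r • aff r z (pd i f) := by
  ext x
  have h1 : HasFDerivAt (fun x : RR n => r • x + z) (r • ContinuousLinearMap.id ℝ (RR n)) x :=
    ((hasFDerivAt_id x).const_smul r).add_const z
  have h2 := ((sf_diffble f) (r • x + z)).hasFDerivAt.comp x h1
  rw [pd_app]
  have h3 : (fun y => aff r z f y) = (fun y => f y) ∘ (fun x : RR n => r • x + z) := rfl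
  rw [h3, h2.fderiv]
  simp [aff_app, pd_app]

lemma aff_mul (r : ℝ) (z : RR n) (f g : SF n) : aff r z (f * g) = aff r z f * aff r z g := rfl

lemma aff_nl (r : ℝ) (z : RR n) (f : SF n) : nl (aff r z f) = (r^2) • aff r z (nl f) := by
  simp only [nl_eq, aff_pd, Derivation.map_smul]
  ext x
  simp only [SF.neg_app, SF.sum_app, SF.smul_app, aff_app]
  rw [mul_neg, Finset.mul_sum]
  congr 1
  refine Finset.sum_congr rfl fun i _ => by ring

lemma aff_nlpow (k : ℕ) (r : ℝ) (z : RR n) (f : SF n) : (nl^k) (aff r z f) = (r^(2*k)) • aff r z ((nl^k) f) := by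
  induction k with
  | zero => simp
  | succ k ih => rw [nlpow_succ, ih, map_smul, aff_nl, smul_smul, nlpow_succ]; congr 1; ring

lemma int_aff {r : ℝ} (hr : 0 < r) (z : RR n) (f : RR n → ℝ) :
    ∫ x, f (r • x + z) = (r^n)⁻¹ * ∫ x, f x := by
  have := Measure.integral_comp_smul (volume : Measure (RR n)) (fun x => f (x + z)) r
  rw [this, integral_add_right_eq_self, finrank_euclideanSpace_fin, abs_of_pos (by positivity), smul_eq_mul]

lemma aff_E (k : ℕ) {r : ℝ} (hr : 0 < r) (z : RR n) (f : SF n) :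
    E k (aff r z f) (aff r z f) = r^(2*k) * (r^n)⁻¹ * E k f f := by
  unfold E
  rw [aff_nlpow, mul_smul_comm, In_smul, ← aff_mul, mul_assoc]
  congr 1
  exact int_aff hr z (fun x => (f * (nl^k) f) x)

lemma aff_isC {r : ℝ} (hr : r ≠ 0) (z : RR n) {f : SF n} (h : IsC f) : IsC (aff r z f) := by
  have : IsClosedEmbedding (fun x : RR n => r • x + z) :=
    ((Homeomorph.smulOfNeZero r hr).trans (Homeomorph.addRight z)).isClosedEmbedding
  exact HasCompactSupport.comp_isClosedEmbedding h this

end SharpSob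

namespace SharpSob
open MeasureTheory Filter Topology
open scoped ContDiff NNReal ENNReal Real
variable {n : ℕ}

lemma lint_of_int {α : Type*} [MeasurableSpace α] {μ : Measure α} {g : α → ℝ} {c : ℝ} (hg : 0 ≤ᵐ[μ] g)
    (h : ∫ x, g x ∂μ = c) (hc : c ≠ 0) : ∫⁻ x, ENNReal.ofReal (g x) ∂μ = ENNReal.ofReal c := by
  have : Integrable g μ := by
    by_contra h'
    rw [integral_undef h'] at h
    exact hc h.symm
  rw [← ofReal_integral_eq_lintegral_ofReal this hg, h]

lemma integrable_wp (hn : 0 < n) : Integrable (fun x : RR n => wp n x) := by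
  have h := integrable_rpow_neg_one_add_norm_sq (E := RR n) (μ := volume) (r := 2 * n)
    (by rw [finrank_euclideanSpace_fin]; have : (0:ℝ) < n := by exact_mod_cast hn
        linarith)
  refine (h.const_mul (2^(n:ℝ))).congr (Eventually.of_forall fun x => ?_)
  simp only
  rw [wp_app, Real.div_rpow (by norm_num) (by positivity),
    show (-(2 * (n:ℝ)) / 2) = -(n:ℝ) by ring, Real.rpow_neg (by positivity), div_eq_mul_inv]

noncomputable def vol (n : ℕ) : ℝ := ∫ x : RR n, wp n x

lemma vol_pos (hn : 0 < n) : 0 < vol n := by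
  unfold vol
  rw [integral_pos_iff_support_of_nonneg (fun x => (wp_pos _ x).le) (integrable_wp hn)]
  have : (Function.support fun x : RR n => wp n x) = Set.univ := by
    ext x; simp [(wp_pos (n:ℝ) x).ne']
  rw [this]; exact isOpen_univ.measure_pos _ ⟨0, trivial⟩

lemma vol_eq' (hn : 0 < n) : vol n * Real.Gamma n = 2^(n:ℝ) * π^((n:ℝ)/2) * Real.Gamma ((n:ℝ)/2) := by
  have hn' : (0:ℝ) < n := by exact_mod_cast hn
  have h1 : ∀ x : RR n, ∫⁻ t in Set.Ioi (0:ℝ), ENNReal.ofReal (t^((n:ℝ)-1) * Real.exp (-((1+‖x‖^2) * t)))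
      = ENNReal.ofReal (2^(-(n:ℝ)) * Real.Gamma n * wp n x) := by
    intro x
    refine lint_of_int ?_ ?_ (mul_pos (mul_pos (by positivity) (Real.Gamma_pos_of_pos hn')) (wp_pos _ x)).ne'
    · filter_upwards [ae_restrict_mem measurableSet_Ioi] with t ht
      have : (0:ℝ) < t := ht
      simp only [Pi.zero_apply]; positivity
    · rw [Real.integral_rpow_mul_exp_neg_mul_Ioi hn' (by positivity), wp_app,
        Real.div_rpow (by norm_num) (by positivity), Real.div_rpow (by norm_num) (by positivity),
        Real.rpow_neg (by norm_num), Real.one_rpow]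
      field_simp
  have h2 : ∀ t ∈ Set.Ioi (0:ℝ), ∫⁻ x : RR n, ENNReal.ofReal (t^((n:ℝ)-1) * Real.exp (-((1+‖x‖^2) * t)))
      = ENNReal.ofReal (π^((n:ℝ)/2) * (t^((n:ℝ)/2-1) * Real.exp (-(1 * t)))) := by
    intro t ht
    have ht' : (0:ℝ) < t := ht
    refine lint_of_int (Eventually.of_forall fun x => ?_) ?_ (by positivity)
    · simp only [Pi.zero_apply]; positivity
    · have : ∀ x : RR n, t^((n:ℝ)-1) * Real.exp (-((1+‖x‖^2) * t)) = (t^((n:ℝ)-1) * Real.exp (-t)) * Real.exp (-t * ‖x‖^2) := by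
        intro x
        rw [mul_assoc, ← Real.exp_add]; congr 2; ring
      simp only [this]
      rw [integral_const_mul, GaussianFourier.integral_rexp_neg_mul_sq_norm ht', finrank_euclideanSpace_fin,
        Real.div_rpow (by positivity) ht'.le, one_mul]
      have e : t^((n:ℝ)-1) = t^((n:ℝ)/2-1) * t^((n:ℝ)/2) := by
        rw [← Real.rpow_add ht']; congr 1; ring
      rw [e]; field_simp
  have h3 : ∫⁻ t in Set.Ioi (0:ℝ), ENNReal.ofReal (π^((n:ℝ)/2) * (t^((n:ℝ)/2-1) * Real.exp (-(1 * t))))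
      = ENNReal.ofReal (π^((n:ℝ)/2) * Real.Gamma ((n:ℝ)/2)) := by
    have hG : 0 < Real.Gamma ((n:ℝ)/2) := Real.Gamma_pos_of_pos (by positivity)
    refine lint_of_int ?_ ?_ (by positivity)
    · filter_upwards [ae_restrict_mem measurableSet_Ioi] with t ht
      have : (0:ℝ) < t := ht
      simp only [Pi.zero_apply]; positivity
    · rw [integral_const_mul, Real.integral_rpow_mul_exp_neg_mul_Ioi (by positivity) (by norm_num)]
      simp
  have hs := lintegral_lintegral_swap (μ := (volume : Measure (RR n))) (ν := volume.restrict (Set.Ioi (0:ℝ)))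
    (f := fun x t => ENNReal.ofReal (t^((n:ℝ)-1) * Real.exp (-((1+‖x‖^2) * t)))) (by
      apply Measurable.aemeasurable
      unfold Function.uncurry
      fun_prop)
  rw [lintegral_congr h1, setLIntegral_congr_fun measurableSet_Ioi h2, h3,
    ← ofReal_integral_eq_lintegral_ofReal ((integrable_wp hn).const_mul _)
     (Eventually.of_forall fun x => by
       have := (wp_pos (n:ℝ) x).le
       have := (Real.Gamma_pos_of_pos hn').le
       simp only [Pi.zero_apply]; positivity), integral_const_mul] at hs
  have hG : 0 < Real.Gamma ((n:ℝ)/2) := Real.Gamma_pos_of_pos (by positivity)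
  have hG' : 0 < Real.Gamma (n:ℝ) := Real.Gamma_pos_of_pos (by positivity)
  have hv := vol_pos hn
  rw [ENNReal.ofReal_eq_ofReal_iff (by unfold vol at hv; positivity) (by positivity)] at hs
  change _ * vol n = _ at hs
  rw [mul_assoc, ← hs, Real.rpow_neg (by norm_num)]
  field_simp

lemma vol_eq (hn : 0 < n) : vol n = 2 * π^(((n:ℝ)+1)/2) / Real.Gamma (((n:ℝ)+1)/2) := by
  have hn' : (0:ℝ) < n := by exact_mod_cast hn
  have h := vol_eq' hn
  have hd := Real.Gamma_mul_Gamma_add_half ((n:ℝ)/2)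
  rw [show 2 * ((n:ℝ)/2) = n by ring, show (n:ℝ)/2 + 1/2 = ((n:ℝ)+1)/2 by ring] at hd
  have hG : 0 < Real.Gamma ((n:ℝ)/2) := Real.Gamma_pos_of_pos (by positivity)
  have hG' : 0 < Real.Gamma (n:ℝ) := Real.Gamma_pos_of_pos (by positivity)
  have hG2 : 0 < Real.Gamma (((n:ℝ)+1)/2) := Real.Gamma_pos_of_pos (by positivity)
  rw [eq_div_iff hG2.ne']
  apply mul_right_cancel₀ hG'.ne'
  have e1 : π^(((n:ℝ)+1)/2) = π^((n:ℝ)/2) * √π := by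
    rw [Real.sqrt_eq_rpow, ← Real.rpow_add Real.pi_pos]; congr 1; ring
  have e2 : (2:ℝ)^(1-(n:ℝ)) = 2 / 2^(n:ℝ) := by rw [Real.rpow_sub (by norm_num), Real.rpow_one]
  rw [e2] at hd
  have e3 : (0:ℝ) < 2^(n:ℝ) := by positivity
  calc vol n * Real.Gamma (((n:ℝ)+1)/2) * Real.Gamma n
      = (vol n * Real.Gamma n) * Real.Gamma (((n:ℝ)+1)/2) := by ring
    _ = 2^(n:ℝ) * π^((n:ℝ)/2) * (Real.Gamma ((n:ℝ)/2) * Real.Gamma (((n:ℝ)+1)/2)) := by rw [h]; ring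
    _ = _ := by rw [hd, e1]; field_simp

end SharpSob

namespace SharpSob
open MeasureTheory Filter Topology
open scoped ContDiff NNReal ENNReal Real
variable {n : ℕ}

noncomputable def sw (n k : ℕ) (q : ℝ) : ℝ := n - q * bb n k
noncomputable def qs (n k : ℕ) : ℝ := 2 * n / (n - 2 * k)
noncomputable def NN (k : ℕ) (q : ℝ) (v : SF n) : ℝ := ∫ x, |v x|^q * wp (sw n k q) x

lemma bb_pos {k : ℕ} (hk : 2 * k < n) : 0 < bb n k := by
  unfold bb
  have : 2 * (k:ℝ) < n := by exact_mod_cast hk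
  linarith

lemma qs_mul_bb {k : ℕ} (hk : 2 * k < n) : qs n k * bb n k = n := by
  unfold qs bb
  have : 2 * (k:ℝ) < n := by exact_mod_cast hk
  have : (n:ℝ) - 2 * k ≠ 0 := by linarith
  field_simp

lemma qs_pos {k : ℕ} (hk : 2 * k < n) : 0 < qs n k := by
  unfold qs
  have : 2 * (k:ℝ) < n := by exact_mod_cast hk
  have h2 : (0:ℝ) ≤ k := by positivity
  exact div_pos (by linarith) (by linarith)

lemma two_lt_qs {k : ℕ} (hk1 : 1 ≤ k) (hk : 2 * k < n) : 2 < qs n k := by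
  unfold qs
  have : 2 * (k:ℝ) < n := by exact_mod_cast hk
  have h2 : (1:ℝ) ≤ k := by exact_mod_cast hk1
  rw [lt_div_iff₀ (by linarith)]; linarith

lemma sw_eq {k : ℕ} (hk : 2 * k < n) (q : ℝ) : sw n k q = (qs n k - q) * bb n k := by
  unfold sw; rw [sub_mul, qs_mul_bb hk]

lemma mu_cont {k : ℕ} {q : ℝ} (hq : 0 < q) (v : SF n) {g : RR n → ℝ} (hg : Continuous g) :
    Continuous (fun x => g x * (|v x|^q * wp (sw n k q) x)) :=
  hg.mul (((sf_cont v).abs.rpow_const fun x => Or.inr hq.le).mul (sf_cont _))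

lemma mu_supp {k : ℕ} {q : ℝ} (hq : 0 < q) {v : SF n} (hv : IsC v) (g : RR n → ℝ) :
    HasCompactSupport (fun x => g x * (|v x|^q * wp (sw n k q) x)) := by
  refine HasCompactSupport.mono hv ?_
  intro x hx
  simp only [Function.mem_support] at hx ⊢
  intro h
  apply hx
  rw [h, abs_zero, Real.zero_rpow hq.ne']; simp

lemma mu_int {k : ℕ} {q : ℝ} (hq : 0 < q) {v : SF n} (hv : IsC v) {g : RR n → ℝ} (hg : Continuous g) :
    Integrable (fun x => g x * (|v x|^q * wp (sw n k q) x)) :=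
  (mu_cont hq v hg).integrable_of_hasCompactSupport (mu_supp hq hv g)

lemma NN_int {k : ℕ} {q : ℝ} (hq : 0 < q) {v : SF n} (hv : IsC v) :
    Integrable (fun x => |v x|^q * wp (sw n k q) x) := by
  simpa using mu_int (k := k) hq hv (g := fun _ => 1) continuous_const

lemma dens_nonneg (k : ℕ) (q : ℝ) (v : SF n) (x : RR n) : 0 ≤ |v x|^q * wp (sw n k q) x :=
  mul_nonneg (by positivity) (wp_pos _ x).le

lemma NN_nonneg (k : ℕ) (q : ℝ) (v : SF n) : 0 ≤ NN k q v :=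
  integral_nonneg fun x => dens_nonneg k q v x

lemma NN_smul (k : ℕ) (q : ℝ) (c : ℝ) (v : SF n) : NN k q (c • v) = |c|^q * NN k q v := by
  unfold NN
  rw [← integral_const_mul]
  congr 1; ext x
  rw [SF.smul_app, abs_mul, Real.mul_rpow (abs_nonneg _) (abs_nonneg _)]; ring

lemma NN_wp {k : ℕ} {q : ℝ} (V : SF n) : NN k q (wp (bb n k) * V) = ∫ x, |V x|^q * wp n x := by
  unfold NN
  congr 1; ext x
  rw [SF.mul_app, abs_mul, abs_of_pos (wp_pos _ x), Real.mul_rpow (wp_pos _ x).le (abs_nonneg _), wp_rpow]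
  have : wp (n:ℝ) x = wp (bb n k * q) x * wp (sw n k q) x := by
    rw [← SF.mul_app, wp_mul]; congr 2; unfold sw; ring
  rw [this]; ring

lemma NN_lp {k : ℕ} {q : ℝ} (hq : 0 < q) (v : SF n) :
    (NN k q v)^(1/q) = lpNorm (fun x => v x * wp (sw n k q / q) x) (ENNReal.ofReal q) volume := by
  rw [lpNorm_eq_integral_norm_rpow_toReal (by simpa using hq) (by simp)
    (show AEStronglyMeasurable (fun x => v x * wp (sw n k q / q) x) volume from
      ((sf_cont v).mul (sf_cont (wp (sw n k q / q)))).aestronglyMeasurable), ENNReal.toReal_ofReal hq.le, one_div]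
  congr 1
  unfold NN
  congr 1; ext x
  rw [Real.norm_eq_abs, abs_mul, abs_of_pos (wp_pos _ x), Real.mul_rpow (abs_nonneg _) (wp_pos _ x).le, wp_rpow]
  congr 3; field_simp

lemma NN_add_le {k : ℕ} {q : ℝ} (hq : 1 ≤ q) {u v : SF n} (hu : IsC u) :
    (NN k q (u + v))^(1/q) ≤ (NN k q u)^(1/q) + (NN k q v)^(1/q) := by
  have hq0 : 0 < q := by linarith
  rw [NN_lp hq0, NN_lp hq0, NN_lp hq0]
  have hm : MemLp (fun x => u x * wp (sw n k q / q) x) (ENNReal.ofReal q) volume :=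
    ((sf_cont u).mul (sf_cont _)).memLp_of_hasCompactSupport (IsC.mul_right hu (wp _))
  have := lpNorm_add_le (g := fun x => v x * wp (sw n k q / q) x) hm (by simpa using hq)
  refine le_trans (le_of_eq ?_) this
  congr 1; ext x; simp [add_mul]

lemma NN_holder {k : ℕ} (hk : 2 * k < n) {q : ℝ} (hq : 0 < q) (hq2 : q < qs n k) {v : SF n} (hv : IsC v) :
    NN k q v ≤ (∫ x, |v x|^(qs n k))^(q / qs n k) * (vol n)^(1 - q / qs n k) := by
  have hqs := qs_pos hk
  have hn : 0 < n := by omega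
  have hlt : q / qs n k < 1 := by rw [div_lt_one hqs]; exact hq2
  have hc : (qs n k / q).HolderConjugate ((1 - q / qs n k)⁻¹) := by
    rw [Real.holderConjugate_iff]
    constructor
    · rw [lt_div_iff₀ hq]; linarith
    · rw [inv_inv, inv_div]; ring
  have hpos : 0 < 1 - q / qs n k := by linarith
  have hwe : ∀ x : RR n, (wp (sw n k q) x)^((1 - q / qs n k)⁻¹) = wp n x := by
    intro x
    rw [wp_rpow]; congr 2
    rw [sw_eq hk, ← qs_mul_bb hk]
    have : qs n k - q ≠ 0 := by linarith
    field_simp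
  have h := integral_mul_le_Lp_mul_Lq_of_nonneg (μ := (volume : Measure (RR n))) hc
    (f := fun x => |v x|^q) (g := fun x => wp (sw n k q) x)
    (Eventually.of_forall fun x => by simp only [Pi.zero_apply]; positivity)
    (Eventually.of_forall fun x => (wp_pos _ x).le)
    (((sf_cont v).abs.rpow_const fun x => Or.inr hq.le).memLp_of_hasCompactSupport (by
      refine HasCompactSupport.mono hv ?_
      intro x hx hx'
      apply hx
      simp only at hx' ⊢
      rw [hx', abs_zero, Real.zero_rpow hq.ne']))
    (by
      rw [← integrable_norm_rpow_iff (sf_cont _).aestronglyMeasurable (by simpa using hlt) (by simp)]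
      rw [ENNReal.toReal_ofReal (by positivity)]
      refine (integrable_wp hn).congr (Eventually.of_forall fun x => ?_)
      simp only
      rw [Real.norm_of_nonneg (wp_pos _ x).le, hwe])
  unfold NN
  refine h.trans (le_of_eq ?_)
  simp only [hwe]
  congr 1
  · rw [one_div, inv_div]
    congr 2; ext x
    rw [← Real.rpow_mul (abs_nonneg _)]; congr 1; field_simp
  · rw [one_div, inv_inv]; rfl

lemma sob_NN {k : ℕ} (hk : 2 * k < n) : ∃ S0 : ℝ, 0 < S0 ∧ ∀ q : ℝ, 2 ≤ q → q < qs n k → ∀ v : SF n, IsC v →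
    S0 * (NN k q v)^(2/q) ≤ E k v v := by
  obtain ⟨C, hC⟩ := sob k hk
  have hn : 0 < n := by omega
  have hv0 := vol_pos hn
  have hqs := qs_pos hk
  set M := max 1 (vol n) with hM
  have hM1 : 1 ≤ M := le_max_left _ _
  refine ⟨((C:ℝ)^2 * M + 1)⁻¹, by positivity, fun q hq hq2 v hv => ?_⟩
  have hq0 : 0 < q := by linarith
  rw [inv_mul_le_iff₀ (by positivity)]
  have hE := E_nonneg hk hv
  have h1 := NN_holder hk hq0 hq2 hv
  have hI : 0 ≤ ∫ x, |v x|^(qs n k) := integral_nonneg fun x => by positivity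
  set Iv := ∫ x, |v x|^(qs n k) with hIdef
  have h2 : Iv^(qs n k)⁻¹ ≤ C * √(E k v v) := by
    have hm : MemLp (fun x => v x) ((qs n k).toNNReal : ℝ≥0∞) volume := (sf_cont v).memLp_of_hasCompactSupport hv
    have := hC v hv
    change eLpNorm _ ((qs n k).toNNReal : ℝ≥0∞) volume ≤ _ at this
    rw [hm.eLpNorm_eq_integral_rpow_norm (by simpa using hqs) (by simp), ENNReal.coe_toReal,
      Real.coe_toNNReal _ hqs.le, ← ENNReal.ofReal_coe_nnreal, ← ENNReal.ofReal_mul (by positivity),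
      ENNReal.ofReal_le_ofReal_iff (by positivity)] at this
    exact this
  have h3 : (NN k q v)^(2/q) ≤ (Iv^(q / qs n k) * (vol n)^(1 - q / qs n k))^(2/q) :=
    Real.rpow_le_rpow (NN_nonneg _ _ _) h1 (by positivity)
  refine h3.trans ?_
  rw [Real.mul_rpow (by positivity) (by positivity), ← Real.rpow_mul hI, ← Real.rpow_mul hv0.le]
  have e1 : Iv^(q / qs n k * (2/q)) = (Iv^(qs n k)⁻¹)^2 := by
    rw [← Real.rpow_natCast, ← Real.rpow_mul hI]; congr 1; push_cast; field_simp
  rw [e1]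
  have h4 : (vol n)^((1 - q / qs n k) * (2/q)) ≤ M := by
    have hlt : q / qs n k < 1 := by rw [div_lt_one hqs]; exact hq2
    have hexp0 : 0 ≤ (1 - q / qs n k) * (2/q) := mul_nonneg (by linarith) (by positivity)
    have hexp1 : (1 - q / qs n k) * (2/q) ≤ 1 := by
      have a1 : 2/q ≤ 1 := by rw [div_le_one hq0]; exact hq
      have a2 : 0 < q / qs n k := by positivity
      have a3 : 0 ≤ 2 / q := by positivity
      nlinarith
    calc (vol n)^((1 - q / qs n k) * (2/q)) ≤ M^((1 - q / qs n k) * (2/q)) :=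
          Real.rpow_le_rpow hv0.le (le_max_right _ _) hexp0
      _ ≤ M^(1:ℝ) := Real.rpow_le_rpow_of_exponent_le hM1 hexp1
      _ = M := Real.rpow_one M
  have h5 : (Iv^(qs n k)⁻¹)^2 ≤ (C:ℝ)^2 * E k v v := by
    calc (Iv^(qs n k)⁻¹)^2 ≤ (C * √(E k v v))^2 := by gcongr
      _ = _ := by rw [mul_pow, Real.sq_sqrt hE]
  calc (Iv^(qs n k)⁻¹)^2 * (vol n)^((1 - q / qs n k) * (2/q)) ≤ ((C:ℝ)^2 * E k v v) * M := by gcongr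
    _ ≤ _ := by nlinarith

end SharpSob

namespace SharpSob
open MeasureTheory Filter Topology
open scoped ContDiff NNReal ENNReal Real
variable {n : ℕ}

noncomputable def mm (k : ℕ) (q : ℝ) (v : SF n) (ξ : SF n) : ℝ := ∫ x, ξ x * (|v x|^q * wp (sw n k q) x)

lemma xi_sum : ∑ i, (wp 1 * X i) * (wp 1 * X i) + (wp 1 - 1) * (wp 1 - 1) = (1 : SF n) := by
  have : ∑ i, (wp 1 * X i) * (wp 1 * X i) = (wp 1 * wp 1 : SF n) * (2 * rho - 1) := by
    rw [← sumX, Finset.mul_sum]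
    exact Finset.sum_congr rfl fun i _ => by ring
  rw [this]
  linear_combination (2 * wp 1) * wp_one_rho (n := n)

lemma xi_sum_app (x : RR n) : ∑ i, ((wp 1 * X i : SF n) x)^2 + ((wp 1 - 1 : SF n) x)^2 = 1 := by
  have := congrArg (fun f : SF n => f x) (xi_sum (n := n))
  simp only [SF.add_app, SF.sum_app, SF.mul_app (_ * _) (_ * _), SF.mul_app (_ - _) (_ - _), SF.one_app] at this
  simpa only [pow_two] using this

lemma xi_abs (i : Fin n) (x : RR n) : |(wp 1 * X i : SF n) x| ≤ 1 := by
  have hs := xi_sum_app x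
  rw [← sq_le_one_iff_abs_le_one]
  have := Finset.single_le_sum (f := fun i => ((wp 1 * X i : SF n) x)^2) (fun j _ => sq_nonneg _) (Finset.mem_univ i)
  have h2 := sq_nonneg ((wp 1 - 1 : SF n) x)
  linarith

lemma xi0_abs (x : RR n) : |(wp 1 - 1 : SF n) x| ≤ 1 := by
  have hs := xi_sum_app x
  rw [← sq_le_one_iff_abs_le_one]
  have := Finset.sum_nonneg (s := Finset.univ) (f := fun i => ((wp 1 * X i : SF n) x)^2) (fun j _ => sq_nonneg _)
  linarith

lemma bern {s y : ℝ} (hs : 0 ≤ s) (hy : 0 < 1 + y) : 1 - s * y ≤ (1 + y)^(-s) := by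
  rw [Real.rpow_def_of_pos hy]
  have h1 := Real.add_one_le_exp (Real.log (1+y) * (-s))
  have h2 := Real.log_le_sub_one_of_pos hy
  nlinarith

/-- pointwise bound for the weight -/
lemma weight_bd {s w w' c y Y : ℝ} (hs : 0 ≤ s) (hw : 0 < w) (hc : 0 < c) (hy : 0 < 1 + y)
    (h : w' = c * (w * (1 + y)⁻¹)) (hY : y ≤ Y) : c^s * (w^s * (1 - s * Y)) ≤ w'^s := by
  rw [h, Real.mul_rpow hc.le (by positivity), Real.mul_rpow hw.le (by positivity), Real.inv_rpow hy.le, ← Real.rpow_neg hy.le]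
  have h1 := bern hs hy
  have h2 : 1 - s * Y ≤ (1+y)^(-s) := by nlinarith
  gcongr

lemma cm_real {s q a η : ℝ} (hs : 0 < s) (hη : 0 < η) : ∃ ε > 0, ∀ m : ℝ,
    (∀ t : ℝ, 1 - s * (t * m + t^2) ≤ (1 + ε/a)^(q/2)) → |m| ≤ η := by
  have ht : Tendsto (fun ε : ℝ => (1 + ε/a)^(q/2)) (𝓝 0) (𝓝 1) := by
    have : ContinuousAt (fun ε : ℝ => (1 + ε/a)^(q/2)) 0 := by
      refine ContinuousAt.rpow_const (by fun_prop) (Or.inl (by simp))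
    have h2 := this.tendsto
    simpa using h2
  have h1 : ∀ᶠ ε in 𝓝[>] (0:ℝ), (1 + ε/a)^(q/2) < 1 + s * (η/2)^2 :=
    (ht.mono_left nhdsWithin_le_nhds).eventually (gt_mem_nhds (by have : 0 < s * (η/2)^2 := by positivity
                                                                  linarith))
  obtain ⟨ε, hε, hε0⟩ := (h1.and self_mem_nhdsWithin).exists
  refine ⟨ε, hε0, fun m hm => ?_⟩
  have a1 := hm (η/2)
  have a2 := hm (-(η/2))
  rw [abs_le]
  have hp : 0 < s * (η/2) := by positivity
  constructor
  · by_contra h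
    push Not at h
    nlinarith
  · by_contra h
    push Not at h
    nlinarith

lemma cm_step {k : ℕ} {q a ε r Y : ℝ} (hq : 0 < q) (ha : 0 < a) (hε : 0 < ε) (hr : 0 < r) {v : SF n}
    (hlow : a * (NN k q v)^(2/q) ≤ E k v v) (h1 : r * Y ≤ NN k q v) (h2 : E k v v ≤ r^(2/q) * (a + ε)) :
    Y ≤ (1 + ε/a)^(q/2) := by
  rcases le_or_gt Y 0 with hY | hY
  · exact hY.trans (by positivity)
  have h3 : (r * Y)^(2/q) ≤ (NN k q v)^(2/q) := by gcongr
  rw [Real.mul_rpow hr.le hY.le] at h3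
  have h4 : r^(2/q) * (a * Y^(2/q)) ≤ r^(2/q) * (a + ε) := by
    calc r^(2/q) * (a * Y^(2/q)) = a * (r^(2/q) * Y^(2/q)) := by ring
      _ ≤ a * (NN k q v)^(2/q) := by gcongr
      _ ≤ _ := hlow.trans h2
  have h5 : a * Y^(2/q) ≤ a + ε := le_of_mul_le_mul_left h4 (by positivity)
  have h6 : Y^(2/q) ≤ 1 + ε/a := by
    rw [show 1 + ε/a = (a+ε)/a by field_simp, le_div_iff₀ ha]; linarith
  calc Y = (Y^(2/q))^(q/2) := by
        rw [← Real.rpow_mul hY.le, show 2/q*(q/2) = 1 by field_simp, Real.rpow_one]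
    _ ≤ _ := by gcongr

lemma int_lower {k : ℕ} {q c : ℝ} (hq : 0 < q) {v : SF n} (hv : IsC v) (hN : NN k q v = 1) (ξ : SF n) (α β : ℝ)
    {W : RR n → ℝ} (hW : Continuous W) (hle : ∀ x, c * (wp (sw n k q) x * (1 - (α * ξ x + β))) ≤ W x) :
    c * (1 - (α * mm k q v ξ + β)) ≤ ∫ x, |v x|^q * W x := by
  have i1 := NN_int (k := k) hq hv
  have i2 := mu_int (k := k) hq hv (sf_cont ξ)
  have e : c * (1 - (α * mm k q v ξ + β)) = ∫ x, c * ((1 - β) * (|v x|^q * wp (sw n k q) x) - α * (ξ x * (|v x|^q * wp (sw n k q) x))) := by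
    rw [integral_const_mul, integral_sub (i1.const_mul _) (i2.const_mul _), integral_const_mul, integral_const_mul]
    change _ = c * ((1 - β) * NN k q v - α * mm k q v ξ)
    rw [hN]; ring
  rw [e]
  refine integral_mono (((i1.const_mul _).sub (i2.const_mul _)).const_mul _) ?_ fun x => ?_
  · refine Continuous.integrable_of_hasCompactSupport
      (((sf_cont v).abs.rpow_const fun x => Or.inr hq.le).mul hW) ?_
    refine HasCompactSupport.mono hv ?_
    intro x hx hx'
    apply hx
    simp only at hx' ⊢
    rw [hx', abs_zero, Real.zero_rpow hq.ne', zero_mul]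
  · have h1 := mul_le_mul_of_nonneg_left (hle x) (show 0 ≤ |v x|^q by positivity)
    simp only
    linarith

lemma wp_one_le (x : RR n) : wp 1 x ≤ 2 := by
  rw [wp_one_app, div_le_iff₀ (by positivity)]
  nlinarith [sq_nonneg ‖x‖]

lemma wp_eq_rpow (α : ℝ) (x : RR n) : wp α x = (wp 1 x)^α := by rw [wp_rpow, one_mul]

lemma cm_trans {k : ℕ} (hk : 2 * k < n) {q a ε : ℝ} (hq : 0 < q) (hq2 : q < qs n k) (ha : 0 < a) (hε : 0 < ε)
    (hlow : ∀ v : SF n, IsC v → a * (NN k q v)^(2/q) ≤ E k v v)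
    {v : SF n} (hv : IsC v) (hN : NN k q v = 1) (hE : E k v v ≤ a + ε) (i : Fin n) (t : ℝ) :
    1 - sw n k q * (t * mm k q v (wp 1 * X i) + t^2) ≤ (1 + ε/a)^(q/2) := by
  have hs : 0 < sw n k q := by rw [sw_eq hk]; exact mul_pos (by linarith) (bb_pos hk)
  set z : RR n := t • EuclideanSpace.single i 1 with hz
  have hC := aff_isC one_ne_zero (-z) hv
  refine cm_step (v := aff 1 (-z) v) (r := 1) hq ha hε one_pos (hlow _ hC) ?_ ?_
  · have e1 : NN k q (aff 1 (-z) v) = ∫ x, |v x|^q * wp (sw n k q) (x + z) := by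
      have := int_aff (n := n) one_pos (-z) (fun x => |v x|^q * wp (sw n k q) (x + z))
      simp only [one_pow, inv_one, one_mul] at this
      rw [← this]
      unfold NN
      congr 1; ext x
      rw [aff_app]; simp
    rw [e1]
    have := int_lower (c := 1) hq hv hN (wp 1 * X i) (sw n k q * t) (sw n k q * t^2) (W := fun x => wp (sw n k q) (x + z))
      ((sf_cont _).comp (by fun_prop)) (fun x => by
        rw [wp_eq_rpow (sw n k q) x, wp_eq_rpow (sw n k q) (x+z)]
        have hw := wp_pos 1 x
        have hn2 : ‖x + z‖^2 = ‖x‖^2 + 2 * (t * x i) + t^2 := by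
          rw [norm_add_sq_real, hz, norm_smul, inner_smul_right, EuclideanSpace.inner_single_right]
          simp
        have hx : 0 < 1 + ‖x‖^2 := by positivity
        have hx' : 0 < 1 + ‖x+z‖^2 := by positivity
        have hy : 1 + (t * (wp 1 * X i : SF n) x + t^2 * wp 1 x / 2) = (1 + ‖x+z‖^2) / (1 + ‖x‖^2) := by
          rw [SF.mul_app, X_app, wp_one_app, hn2]
          field_simp; ring
        have hY : (t * (wp 1 * X i : SF n) x + t^2 * wp 1 x / 2) ≤ t * (wp 1 * X i : SF n) x + t^2 := by
          have := wp_one_le x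
          nlinarith [sq_nonneg t]
        have := weight_bd (s := sw n k q) (w := wp 1 x) (w' := wp 1 (x+z)) (c := 1) hs.le hw one_pos
          (by rw [hy]; positivity) (by rw [hy, wp_one_app, wp_one_app]; field_simp) hY
        rw [Real.one_rpow] at this
        refine le_trans (le_of_eq ?_) this
        ring)
    refine le_trans (le_of_eq ?_) this
    ring
  · rw [aff_E k one_pos]; simpa using hE

lemma cm_dil {k : ℕ} (hk : 2 * k < n) {q a ε : ℝ} (hq : 0 < q) (hq2 : q < qs n k) (ha : 0 < a) (hε : 0 < ε)
    (hlow : ∀ v : SF n, IsC v → a * (NN k q v)^(2/q) ≤ E k v v)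
    {v : SF n} (hv : IsC v) (hN : NN k q v = 1) (hE : E k v v ≤ a + ε) (t : ℝ) :
    1 - sw n k q * (t * mm k q v (wp 1 - 1) + t^2) ≤ (1 + ε/a)^(q/2) := by
  have hs : 0 < sw n k q := by rw [sw_eq hk]; exact mul_pos (by linarith) (bb_pos hk)
  set S := √(1 + t^2) with hS
  have hS2 : S^2 = 1 + t^2 := Real.sq_sqrt (by positivity)
  have hS0 : 0 < S := Real.sqrt_pos.2 (by positivity)
  have hS1 : S ≤ 1 + t^2 := by nlinarith [sq_nonneg t]
  set r := t + S with hr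
  have hmul : (t + S) * (S - t) = 1 := by nlinarith
  have hr0 : 0 < r := by
    have : |t| < S := by rw [hS, ← Real.sqrt_sq_eq_abs]; exact Real.sqrt_lt_sqrt (by positivity) (by linarith)
    rw [hr]; linarith [neg_abs_le t]
  have hC := aff_isC hr0.ne' (0 : RR n) hv
  have hexp : (r^n)⁻¹ * r^(sw n k q) = r^(sw n k q - n) := by
    rw [Real.rpow_sub hr0, Real.rpow_natCast]; field_simp
  refine cm_step (v := aff r 0 v) (r := r^(sw n k q - n)) hq ha hε (by positivity) (hlow _ hC) ?_ ?_
  · have e1 : NN k q (aff r 0 v) = (r^n)⁻¹ * ∫ x, |v x|^q * wp (sw n k q) (r⁻¹ • x) := by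
      rw [← int_aff (n := n) hr0 0 (fun x => |v x|^q * wp (sw n k q) (r⁻¹ • x))]
      unfold NN
      congr 1; ext x
      rw [aff_app]; simp [smul_smul, hr0.ne']
    rw [e1, ← hexp, mul_assoc]
    gcongr
    have := int_lower (c := r^(sw n k q)) hq hv hN (wp 1 - 1) (sw n k q * t) (sw n k q * t^2) (W := fun x => wp (sw n k q) (r⁻¹ • x))
      ((sf_cont _).comp (by fun_prop)) (fun x => by
        rw [wp_eq_rpow (sw n k q) x, wp_eq_rpow (sw n k q) (r⁻¹ • x)]
        have hw := wp_pos 1 x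
        have hn2 : ‖r⁻¹ • x‖^2 = r⁻¹^2 * ‖x‖^2 := by
          rw [norm_smul, mul_pow, Real.norm_eq_abs, sq_abs]
        have hx : 0 < 1 + ‖x‖^2 := by positivity
        have hx' : 0 < r^2 + ‖x‖^2 := by positivity
        have hy : 1 + (t * (wp 1 - 1 : SF n) x + (S - 1)) = (r^2 + ‖x‖^2) / (r * (1 + ‖x‖^2)) := by
          rw [SF.sub_app, SF.one_app, wp_one_app, eq_div_iff (by positivity)]
          have : (1 + (t * (2 / (1 + ‖x‖ ^ 2) - 1) + (S - 1))) * (r * (1 + ‖x‖ ^ 2)) = r * (t * 2 + (S - t) * (1 + ‖x‖^2)) := by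
            field_simp; ring
          rw [this, hr]
          linear_combination (1 + ‖x‖^2) * hmul - hS2
        have hY : (t * (wp 1 - 1 : SF n) x + (S - 1)) ≤ t * (wp 1 - 1 : SF n) x + t^2 := by linarith
        have := weight_bd (s := sw n k q) (w := wp 1 x) (w' := wp 1 (r⁻¹ • x)) (c := r) hs.le hw hr0
          (by rw [hy]; positivity) (by rw [hy, wp_one_app, wp_one_app, hn2]; field_simp) hY
        refine le_trans (le_of_eq ?_) this
        ring)
    refine le_trans (le_of_eq ?_) this
    ring
  · rw [aff_E k hr0, ← Real.rpow_mul hr0.le]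
    have : r^(2*k) * (r^n)⁻¹ = r^((sw n k q - n) * (2/q)) := by
      have e : (sw n k q - n) * (2/q) = ((2*k:ℕ):ℝ) - (n:ℝ) := by
        unfold sw bb; field_simp; push_cast; ring
      rw [e, Real.rpow_sub hr0, Real.rpow_natCast, Real.rpow_natCast]; rfl
    rw [this]
    gcongr

end SharpSob

namespace SharpSob
open MeasureTheory Filter Topology
open scoped ContDiff NNReal ENNReal Real
variable {n : ℕ}

lemma cm_all {k : ℕ} (hk : 2 * k < n) {q a : ℝ} (hq : 0 < q) (hq2 : q < qs n k) (ha : 0 < a)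
    (hlow : ∀ v : SF n, IsC v → a * (NN k q v)^(2/q) ≤ E k v v) {η : ℝ} (hη : 0 < η) :
    ∃ ε > 0, ∀ v : SF n, IsC v → NN k q v = 1 → E k v v ≤ a + ε →
      (∀ i, |mm k q v (wp 1 * X i)| ≤ η) ∧ |mm k q v (wp 1 - 1)| ≤ η := by
  have hs : 0 < sw n k q := by rw [sw_eq hk]; exact mul_pos (by linarith) (bb_pos hk)
  obtain ⟨ε, hε, h⟩ := cm_real (s := sw n k q) (q := q) (a := a) hs hη
  exact ⟨ε, hε, fun v hv hN hE => ⟨fun i => h _ fun t => cm_trans hk hq hq2 ha hε hlow hv hN hE i t,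
    h _ fun t => cm_dil hk hq hq2 ha hε hlow hv hN hE t⟩⟩

lemma rp2 {q κ : ℝ} (hκ : 0 < κ) : ∃ δ > 0, ∀ y : ℝ, |y| ≤ δ →
    1 + q * y + (q * (q-1)/2 - κ) * y^2 ≤ |1 + y|^q := by
  set c := q * (q-1)/2 - κ with hc
  set f : ℝ → ℝ := fun y => (1+y)^q - (1 + q * y + c * y^2) with hf
  have hder : ∀ y : ℝ, 0 < 1 + y → HasDerivAt f (q * (1+y)^(q-1) - (q + 2 * c * y)) y := by
    intro y hy
    have h1 := ((hasDerivAt_id y).const_add 1).rpow_const (p := q) (Or.inl hy.ne')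
    have h2 := (((hasDerivAt_id y).const_mul q).const_add 1).add (((hasDerivAt_id y).pow 2).const_mul c)
    refine (h1.sub h2).congr_deriv ?_
    simp; ring
  have hev : deriv f =ᶠ[𝓝 0] fun y => q * (1+y)^(q-1) - (q + 2 * c * y) := by
    filter_upwards [lt_mem_nhds (show (-1:ℝ) < 0 by norm_num)] with y hy
    exact (hder y (by linarith)).deriv
  have hder2 : HasDerivAt (fun y : ℝ => q * (1+y)^(q-1) - (q + 2 * c * y)) (q*(q-1) - 2*c) 0 := by
    have h1 := (((hasDerivAt_id (0:ℝ)).const_add 1).rpow_const (p := q-1) (Or.inl (by simp))).const_mul q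
    have h2 := ((hasDerivAt_id (0:ℝ)).const_mul (2*c)).const_add q
    refine (h1.sub h2).congr_deriv ?_
    simp
  have hmin : IsLocalMin f 0 := by
    refine isLocalMin_of_deriv_deriv_pos ?_ ?_ ?_
    · rw [hev.deriv_eq, hder2.deriv, hc]; linarith
    · rw [hev.eq_of_nhds]; simp
    · exact (hder 0 (by norm_num)).continuousAt
  have hall : ∀ᶠ y in 𝓝 (0:ℝ), 1 + q * y + c * y^2 ≤ |1 + y|^q := by
    filter_upwards [hmin, lt_mem_nhds (show (-1:ℝ) < 0 by norm_num)] with y hy hy1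
    rw [abs_of_pos (by linarith)]
    simp only [hf] at hy
    simp at hy
    linarith
  obtain ⟨δ, hδ, h⟩ := Metric.eventually_nhds_iff.1 hall
  refine ⟨δ/2, by positivity, fun y hy => h ?_⟩
  rw [Real.dist_eq, sub_zero]; linarith

lemma NN_var {k : ℕ} {q c δ t : ℝ} (hq : 0 < q) (hδ : ∀ y : ℝ, |y| ≤ δ → 1 + q * y + c * y^2 ≤ |1 + y|^q)
    (ht : |t| ≤ δ) {v : SF n} (hv : IsC v) (hN : NN k q v = 1) {ξ : SF n} (hξ : ∀ x, |ξ x| ≤ 1) :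
    1 + q * t * mm k q v ξ + c * t^2 * mm k q v (ξ * ξ) ≤ NN k q (v + t • (ξ * v)) := by
  have i1 := NN_int (k := k) hq hv
  have i2 := mu_int (k := k) hq hv (sf_cont ξ)
  have i3 := mu_int (k := k) hq hv (sf_cont (ξ * ξ))
  have e : 1 + q * t * mm k q v ξ + c * t^2 * mm k q v (ξ * ξ) =
      ∫ x, ((|v x|^q * wp (sw n k q) x) + (q * t) * (ξ x * (|v x|^q * wp (sw n k q) x)) + (c * t^2) * ((ξ * ξ : SF n) x * (|v x|^q * wp (sw n k q) x))) := by
    rw [integral_add (f := fun x => (|v x|^q * wp (sw n k q) x) + (q * t) * (ξ x * (|v x|^q * wp (sw n k q) x))) (i1.add (i2.const_mul _)) (i3.const_mul _), integral_add i1 (i2.const_mul _), integral_const_mul, integral_const_mul]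
    change _ = NN k q v + _ * mm k q v ξ + _ * mm k q v (ξ * ξ)
    rw [hN]
  rw [e]
  refine integral_mono ((i1.add (i2.const_mul _)).add (i3.const_mul _)) (NN_int hq (hv.add ((hv.mul_left ξ).smul t))) fun x => ?_
  simp only [SF.add_app, SF.smul_app, SF.mul_app]
  rw [show v x + t * (ξ x * v x) = (1 + t * ξ x) * v x by ring, abs_mul, Real.mul_rpow (abs_nonneg _) (abs_nonneg _)]
  have h1 := hδ (t * ξ x) (by rw [abs_mul]; nlinarith [hξ x, abs_nonneg t, abs_nonneg (ξ x)])
  have h2 := mul_le_mul_of_nonneg_right h1 (dens_nonneg k q v x)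
  linarith

set_option maxHeartbeats 1000000 in
lemma sv_real {q a c m M t ε E0 E1 Np Nm : ℝ} (hq : 2 < q) (ha : 0 < a) (hc : 0 ≤ c) (hM0 : 0 ≤ M) (hM1 : M ≤ 1)
    (hm : |m| ≤ 1) (ht : 0 < t) (htq : t * q ≤ 1/2) (htc : c * t^2 ≤ 1/2)
    (h1 : 1 + q * t * m + c * t^2 * M ≤ Np) (h2 : 1 - q * t * m + c * t^2 * M ≤ Nm)
    (hE : a * Np^(2/q) + a * Nm^(2/q) ≤ 2 * E0 + 2 * (t^2 * E1)) (hE0 : E0 ≤ a + ε) :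
    a * (2*c/q*M - q * m^2 - 2*(2*c+q^2)^2/q * t^2) - ε/t^2 ≤ E1 := by
  have hq0 : 0 < q := by linarith
  obtain ⟨hm1, hm2⟩ := abs_le.1 hm
  have hqt : 0 < q * t := by positivity
  have hcM : 0 ≤ c * t^2 * M := by positivity
  have l1 : 1/2 ≤ 1 + q * t * m + c * t^2 * M := by nlinarith
  have l2 : 1/2 ≤ 1 - q * t * m + c * t^2 * M := by nlinarith
  have hNp : 0 < Np := by linarith
  have hNm : 0 < Nm := by linarith
  have lo : ∀ N : ℝ, 0 < N → 1 + (2/q) * Real.log N ≤ N^(2/q) := by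
    intro N hN
    rw [Real.rpow_def_of_pos hN]
    have := Real.add_one_le_exp (Real.log N * (2/q))
    linarith
  set y := 2*c*t^2*M - q^2*t^2*m^2 with hy
  have hmsq : m^2 ≤ 1 := (sq_le_one_iff_abs_le_one m).2 hm
  have hP : 1 + y ≤ Np * Nm := by
    have : (1 + q * t * m + c * t^2 * M) * (1 - q * t * m + c * t^2 * M) ≤ Np * Nm := by gcongr <;> linarith
    nlinarith [sq_nonneg (c * t^2 * M)]
  have hqt2 : q^2*t^2 ≤ 1/4 := by nlinarith
  have hy34 : 3/4 ≤ 1 + y := by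
    have : q^2*t^2*m^2 ≤ 1/4 := (mul_le_of_le_one_right (by positivity) hmsq).trans hqt2
    have : 0 ≤ 2*c*t^2*M := by linarith
    rw [hy]; linarith
  have hy0 : 0 < 1 + y := by linarith
  have hlog : y - 2 * y^2 ≤ Real.log Np + Real.log Nm := by
    rw [← Real.log_mul hNp.ne' hNm.ne']
    have := Real.one_sub_inv_le_log_of_pos hy0
    have h3 := Real.log_le_log hy0 hP
    have h4 : y - 2 * y^2 ≤ 1 - (1+y)⁻¹ := by
      rw [show 1 - (1+y)⁻¹ = y / (1+y) by field_simp; ring, le_div_iff₀ hy0]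
      have : 0 ≤ y^2 * (1 + 2 * y) := mul_nonneg (sq_nonneg y) (by linarith)
      linarith
    linarith
  have hyb : y^2 ≤ ((2*c+q^2)*t^2)^2 := by
    refine sq_le_sq' ?_ ?_
    · rw [hy]
      have : q^2*t^2*m^2 ≤ q^2*t^2 := mul_le_of_le_one_right (by positivity) hmsq
      have : 0 ≤ 2*c*t^2*M := by linarith
      have : 0 ≤ c * t^2 := by positivity
      linarith
    · rw [hy]
      have h1 : 0 ≤ q^2*t^2*m^2 := by positivity
      have h2 : 0 ≤ q^2*t^2 := by positivity
      have h3 : c*t^2*M ≤ c * t^2 := mul_le_of_le_one_right (by positivity) hM1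
      linarith
  have hfin : a * (2 + (2/q) * (y - 2 * y^2)) ≤ 2 * (a + ε) + 2 * (t^2 * E1) := by
    have := lo Np hNp
    have h5 := lo Nm hNm
    have h6 : 2 + (2/q) * (y - 2 * y^2) ≤ Np^(2/q) + Nm^(2/q) := by
      have : (2/q) * (y - 2 * y^2) ≤ (2/q) * (Real.log Np + Real.log Nm) := by gcongr
      linarith
    have := mul_le_mul_of_nonneg_left h6 ha.le
    linarith
  have hfin2 : a * (1/q) * (y - 2 * ((2*c+q^2)*t^2)^2) - ε ≤ t^2 * E1 := by
    have : a * (1/q) * (y - 2 * ((2*c+q^2)*t^2)^2) ≤ a * (1/q) * (y - 2 * y^2) := by gcongr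
    have e : a * (2 + (2/q) * (y - 2 * y^2)) = 2 * a + 2 * (a * (1/q) * (y - 2 * y^2)) := by ring
    linarith
  have ht2 : 0 < t^2 := by positivity
  rw [← mul_le_mul_iff_right₀ ht2]
  refine le_trans (le_of_eq ?_) hfin2
  rw [hy]; field_simp

lemma mm_one {k : ℕ} {q : ℝ} (v : SF n) : mm k q v 1 = NN k q v := by
  unfold mm NN; simp

lemma mm_abs {k : ℕ} {q : ℝ} (hq : 0 < q) {v : SF n} (hv : IsC v) {ξ : SF n} (hξ : ∀ x, |ξ x| ≤ 1) :
    |mm k q v ξ| ≤ NN k q v := by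
  refine (abs_integral_le_integral_abs).trans ?_
  refine integral_mono (mu_int hq hv (sf_cont ξ)).abs (NN_int hq hv) fun x => ?_
  simp only
  rw [abs_mul, abs_of_nonneg (dens_nonneg k q v x)]
  exact mul_le_of_le_one_left (dens_nonneg k q v x) (hξ x)

lemma E_par {k : ℕ} {u v : SF n} (hu : IsC u) (hv : IsC v) (t : ℝ) :
    E k (u + t • v) (u + t • v) = E k u u + 2 * t * E k u v + t^2 * E k v v := by
  have hs := hv.smul t
  rw [E_add_left k (Or.inr ⟨hu, hs⟩), E_add_right k (Or.inl hu), E_add_right k (Or.inl hs), E_smul_left, E_smul_left, E_smul_right, E_smul_right, E_symm k (v := u) (Or.inl hv)]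
  ring

lemma second_var {k : ℕ} {q a : ℝ} (hq : 2 < q) (ha : 0 < a)
    (hlow : ∀ v : SF n, IsC v → a * (NN k q v)^(2/q) ≤ E k v v) {η : ℝ} (hη : 0 < η) :
    ∃ ε > 0, ∀ v : SF n, IsC v → NN k q v = 1 → E k v v ≤ a + ε → ∀ ξ : SF n, (∀ x, |ξ x| ≤ 1) → |mm k q v ξ| ≤ ε →
      a * (q - 1) * mm k q v (ξ * ξ) - η ≤ E k (ξ * v) (ξ * v) := by
  have hq0 : 0 < q := by linarith
  set κ := min 1 (η / (4 * a)) with hκ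
  have hκ0 : 0 < κ := by positivity
  obtain ⟨δ, hδ0, hδ⟩ := rp2 (q := q) hκ0
  set c := q * (q-1)/2 - κ with hc
  have hc0 : 0 ≤ c := by
    have : κ ≤ 1 := min_le_left _ _
    rw [hc]; nlinarith
  set K := a * (2*(2*c+q^2)^2/q) with hK
  have hK0 : 0 ≤ K := by positivity
  set t := min δ (min (1/(2*q)) (min (1/(2*c+1)) (η/(4*(K+1))))) with ht
  have hηK : 0 < η/(4*(K+1)) := by positivity
  have ht0 : 0 < t := by positivity
  have t1 : t ≤ δ := min_le_left _ _
  have t2 : t ≤ 1/(2*q) := (min_le_right _ _).trans (min_le_left _ _)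
  have t3 : t ≤ 1/(2*c+1) := (min_le_right _ _).trans ((min_le_right _ _).trans (min_le_left _ _))
  have t4 : t ≤ η/(4*(K+1)) := (min_le_right _ _).trans ((min_le_right _ _).trans (min_le_right _ _))
  have htq : t * q ≤ 1/2 := by
    rw [le_div_iff₀ (by positivity)] at t2; linarith
  have ht1 : t ≤ 1 := by nlinarith
  have htc : c * t^2 ≤ 1/2 := by
    rw [le_div_iff₀ (by positivity)] at t3
    nlinarith
  have htK : K * t^2 ≤ η/4 := by
    rw [le_div_iff₀ (by positivity)] at t4
    have : K * t^2 ≤ K * t := by nlinarith [mul_nonneg hK0 ht0.le]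
    nlinarith
  set ε := min 1 (min (t^2*η/4) (η/(4*a*q))) with hε
  have hε0 : 0 < ε := by positivity
  have e1 : ε ≤ 1 := min_le_left _ _
  have e2 : ε ≤ t^2*η/4 := (min_le_right _ _).trans (min_le_left _ _)
  have e3 : ε ≤ η/(4*a*q) := (min_le_right _ _).trans (min_le_right _ _)
  refine ⟨ε, hε0, fun v hv hN hE ξ hξ hmε => ?_⟩
  have hsq : ∀ x, |(ξ * ξ : SF n) x| ≤ 1 := fun x => by
    rw [SF.mul_app, abs_mul]; exact mul_le_one₀ (hξ x) (abs_nonneg _) (hξ x)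
  have hM1 : mm k q v (ξ * ξ) ≤ 1 := (le_abs_self _).trans ((mm_abs hq0 hv hsq).trans hN.le)
  have hM0 : 0 ≤ mm k q v (ξ * ξ) := integral_nonneg fun x => by
    simp only [SF.mul_app]; exact mul_nonneg (mul_self_nonneg _) (dens_nonneg k q v x)
  have hC := hv.mul_left ξ
  have b1 := NN_var (k := k) hq0 hδ (t := t) (by rwa [abs_of_pos ht0]) hv hN hξ
  have b2 := NN_var (k := k) hq0 hδ (t := -t) (by rwa [abs_neg, abs_of_pos ht0]) hv hN hξ
  have c1 := hlow _ (hv.add (hC.smul t))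
  have c2 := hlow _ (hv.add (hC.smul (-t)))
  rw [E_par hv hC] at c1 c2
  have key := sv_real (E1 := E k (ξ * v) (ξ * v)) hq ha hc0 hM0 hM1 (hmε.trans e1) ht0 htq htc b1 (le_trans (le_of_eq (by ring)) b2)
    (by linarith) hE
  refine le_trans ?_ key
  have g1 : ε / t^2 ≤ η/4 := by rw [div_le_iff₀ (by positivity)]; linarith
  have g2 : a * (q * mm k q v ξ^2) ≤ η/4 := by
    have : mm k q v ξ^2 ≤ ε := by
      rw [← sq_abs, pow_two]
      exact (mul_le_mul hmε (hmε.trans e1) (abs_nonneg _) hε0.le).trans (by linarith)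
    rw [le_div_iff₀ (by positivity)] at e3
    have h9 := mul_le_mul_of_nonneg_left this (mul_pos ha hq0).le
    linarith
  have g3 : a * ((q-1) * mm k q v (ξ*ξ)) - η/4 ≤ a * (2*c/q*mm k q v (ξ*ξ)) := by
    have : κ ≤ η/(4*a) := min_le_right _ _
    rw [le_div_iff₀ (by positivity)] at this
    have e : 2*c/q = (q-1) - 2*κ/q := by rw [hc]; field_simp
    have h2 : 2*κ/q ≤ κ := by rw [div_le_iff₀ hq0]; nlinarith
    have h3 : 2*κ/q * mm k q v (ξ*ξ) ≤ κ := by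
      have : 0 ≤ 2*κ/q := by positivity
      exact (mul_le_of_le_one_right this hM1).trans h2
    have h9 := mul_le_mul_of_nonneg_left h3 ha.le
    rw [e]; linarith
  have g4 : a * (2*(2*c+q^2)^2/q*t^2) ≤ η/4 := by rw [hK] at htK; linarith
  linarith

end SharpSob

namespace SharpSob
open MeasureTheory Filter Topology
open scoped ContDiff NNReal ENNReal Real
variable {n : ℕ}

lemma mm_sum {k : ℕ} {q : ℝ} (hq : 0 < q) {v : SF n} (hv : IsC v) (hN : NN k q v = 1) :
    ∑ i, mm k q v ((wp 1 * X i) * (wp 1 * X i)) + mm k q v ((wp 1 - 1) * (wp 1 - 1)) = 1 := by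
  unfold mm
  rw [← integral_finset_sum _ (fun i _ => mu_int hq hv (sf_cont _)),
    ← integral_add (integrable_finset_sum _ (fun i _ => mu_int hq hv (sf_cont _))) (mu_int hq hv (sf_cont _))]
  refine Eq.trans ?_ hN
  unfold NN
  congr 1; ext x
  have h := xi_sum_app x
  rw [← Finset.sum_mul, ← add_mul]
  simp only [SF.mul_app (_ * _) (_ * _), SF.mul_app (_ - _) (_ - _)]
  simp only [pow_two] at h
  rw [h, one_mul]

lemma gap_q {k : ℕ} (hk : 2 * (k+1) < n) {q a : ℝ} (hq : 2 < q) (hq2 : q < qs n (k+1)) (ha : 0 < a)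
    (hlow : ∀ v : SF n, IsC v → a * (NN (k+1) q v)^(2/q) ≤ E (k+1) v v) {η : ℝ} (hη : 0 < η) :
    ∃ ε > 0, ∀ V : SF n, IsC V → NN (k+1) q (wp (bb n (k+1)) * V) = 1 → A (k+1) V V ≤ a + ε →
      (qs n (k+1) - 2) * T k 1 V ≤ (qs n (k+1) - q) * a + η := by
  have hq0 : 0 < q := by linarith
  obtain ⟨ε₁, hε₁, h1⟩ := second_var hq ha hlow (η := η/(2*(n+1))) (by positivity)
  obtain ⟨ε₂, hε₂, h2⟩ := cm_all hk hq0 hq2 ha hlow hε₁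
  set Q := qs n (k+1) with hQ
  have hQ1 : 0 < Q - 1 := by linarith
  set ε := min ε₁ (min ε₂ (η/(2*(Q-1)))) with hε
  have hε0 : 0 < ε := by positivity
  have e1 : ε ≤ ε₁ := min_le_left _ _
  have e2 : ε ≤ ε₂ := (min_le_right _ _).trans (min_le_left _ _)
  have e3 : ε ≤ η/(2*(Q-1)) := (min_le_right _ _).trans (min_le_right _ _)
  refine ⟨ε, hε0, fun V hV hN hE => ?_⟩
  set v := wp (bb n (k+1)) * V with hv
  have hvC : IsC v := hV.mul_left _
  have hEv : A (k+1) V V = E (k+1) v v := rfl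
  obtain ⟨m1, m2⟩ := h2 v hvC hN (by rw [← hEv]; linarith)
  have s1 := fun i => h1 v hvC hN (by rw [← hEv]; linarith) (wp 1 * X i) (xi_abs i) (m1 i)
  have s2 := h1 v hvC hN (by rw [← hEv]; linarith) (wp 1 - 1) xi0_abs m2
  have hs := Finset.sum_le_sum (s := Finset.univ) (fun i _ => s1 i)
  have hc := commut_int k hvC
  have hms := mm_sum (k := k+1) hq0 hvC hN
  rw [Finset.sum_sub_distrib, ← Finset.mul_sum, Finset.sum_const, Finset.card_univ, Fintype.card_fin, nsmul_eq_mul] at hs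
  have hTs := T_succ k 0 hV
  have hT0 : T k 0 V = E k (wp 1 * v) (wp 1 * v) := by
    unfold T A
    rw [hv, ← mul_assoc, wp_mul, bb_succ k, add_comm]
    rfl
  have hT1 : T (k+1) 0 V = A (k+1) V V := rfl
  have hkn : (2:ℝ) * (k+1) < n := by exact_mod_cast hk
  have hcc : ((k:ℝ)+1) * ((n:ℝ)+2*k) = (Q - 2) * cc n (k+1) := by
    rw [hQ]; unfold qs cc; push_cast
    have : (n:ℝ) - 2 * (k+1) ≠ 0 := by linarith
    have e : 2 * (n:ℝ) / (n - 2 * (k+1)) - 2 = 4 * (k+1) / (n - 2 * (k+1)) := by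
      rw [eq_div_iff this, sub_mul, div_mul_cancel₀ _ this]; ring
    rw [e, div_mul_eq_mul_div, eq_div_iff this]; ring
  rw [hcc, ← hT0, mul_assoc, ← hEv] at hc
  have hD : cc n (k+1) * T k 0 V = A (k+1) V V - T k 1 V := by rw [← hT1, hTs]; ring
  rw [hD] at hc
  rw [le_div_iff₀ (by positivity)] at e3
  have hη2 : (n:ℝ) * (η/(2*(n+1))) + η/(2*(n+1)) = η/2 := by field_simp
  have hA : (Q-1) * A (k+1) V V ≤ (Q-1) * (a + ε) := by gcongr
  have hms2 : a * (q-1) * (∑ i, mm (k+1) q v ((wp 1 * X i) * (wp 1 * X i)) + mm (k+1) q v ((wp 1 - 1) * (wp 1 - 1))) = a * (q-1) := by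
    rw [hms, mul_one]
  linarith

lemma first_var {k : ℕ} {q a : ℝ} (hq : 2 < q) (ha : 0 < a)
    (hlow : ∀ v : SF n, IsC v → a * (NN k q v)^(2/q) ≤ E k v v) {φ : SF n} (hφ : IsC φ) {η : ℝ} (hη : 0 < η) :
    ∃ ε > 0, ∀ v : SF n, IsC v → NN k q v = 1 → E k v v ≤ a + ε →
      |E k v φ| ≤ a * (NN k q φ)^(1/q) + η := by
  have hq0 : 0 < q := by linarith
  set b := (NN k q φ)^(1/q) with hb
  set τ := η/(|E k φ φ| + 1) with hτ
  have hτ0 : 0 < τ := by positivity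
  have hτE : τ * E k φ φ ≤ η := by
    have : τ * (|E k φ φ| + 1) = η := by rw [hτ]; field_simp
    nlinarith [le_abs_self (E k φ φ)]
  refine ⟨τ * η, by positivity, fun v hv hN hE => ?_⟩
  have key : ∀ t : ℝ, a * (1 - 2 * (|t| * b)) ≤ a + τ * η + 2 * t * E k v φ + t^2 * E k φ φ := by
    intro t
    have h1 := hlow _ (hv.add (hφ.smul t))
    rw [E_par hv hφ] at h1
    have h2 := NN_add_le (k := k) (q := q) (by linarith) (u := v + t • φ) (v := (-t) • φ) (hv.add (hφ.smul t))
    rw [show v + t • φ + (-t) • φ = v by rw [neg_smul]; abel, hN, Real.one_rpow, NN_smul, Real.mul_rpow (by positivity) (NN_nonneg _ _ _),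
      ← Real.rpow_mul (abs_nonneg _), mul_one_div_cancel hq0.ne', Real.rpow_one, abs_neg, ← hb] at h2
    have h3 : (NN k q (v + t • φ))^(2/q) = ((NN k q (v + t • φ))^(1/q))^2 := by
      rw [← Real.rpow_natCast, ← Real.rpow_mul (NN_nonneg _ _ _)]; congr 1; push_cast; ring
    rw [h3] at h1
    set x := (NN k q (v + t • φ))^(1/q)
    have h4 : 1 - 2 * (|t| * b) ≤ x^2 := by nlinarith [sq_nonneg (x - 1)]
    have := mul_le_mul_of_nonneg_left h4 ha.le
    linarith
  have k1 := key τ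
  have k2 := key (-τ)
  rw [abs_neg] at k2
  rw [abs_of_pos hτ0] at k1 k2
  have hh : τ * (τ * E k φ φ) ≤ τ * η := by gcongr
  rw [abs_le]
  constructor
  · have : τ * (-(a * b + η)) ≤ τ * E k v φ := by linarith
    exact le_of_mul_le_mul_left this hτ0
  · have : τ * E k v φ ≤ τ * (a * b + η) := by linarith
    exact le_of_mul_le_mul_left this hτ0

lemma per_q {k : ℕ} (hk : 2 * (k+1) < n) {q : ℝ} (hq : 2 < q) (hq2 : q < qs n (k+1)) {u : SF n} (hu : IsC u)
    (hNu : 0 < NN (k+1) q u) {S0 : ℝ} (hS0 : 0 < S0) (hS : ∀ v : SF n, IsC v → S0 * (NN (k+1) q v)^(2/q) ≤ E (k+1) v v)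
    {Φ : SF n} (hΦ : IsC Φ) {η : ℝ} (hη : 0 < η) :
    ∃ a, S0 ≤ a ∧ a * (NN (k+1) q u)^(2/q) ≤ E (k+1) u u ∧ ∃ V : SF n, IsC V ∧
      NN (k+1) q (wp (bb n (k+1)) * V) = 1 ∧ a ≤ A (k+1) V V ∧
      (qs n (k+1) - 2) * T k 1 V ≤ (qs n (k+1) - q) * a + η ∧
      |A (k+1) V Φ| ≤ a * (NN (k+1) q (wp (bb n (k+1)) * Φ))^(1/q) + η := by
  have hq0 : 0 < q := by linarith
  set Z : Set ℝ := {e | ∃ v : SF n, IsC v ∧ NN (k+1) q v = 1 ∧ E (k+1) v v = e} with hZ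
  have hscale : ∀ v : SF n, IsC v → 0 < NN (k+1) q v → E (k+1) v v / (NN (k+1) q v)^(2/q) ∈ Z := by
    intro v hv hN
    refine ⟨(NN (k+1) q v)^(-(1/q)) • v, hv.smul _, ?_, ?_⟩
    · rw [NN_smul, abs_of_pos (by positivity), ← Real.rpow_mul hN.le, neg_mul, one_div_mul_cancel hq0.ne', Real.rpow_neg_one,
        inv_mul_cancel₀ hN.ne']
    · rw [E_smul_left, E_smul_right, ← mul_assoc, ← Real.rpow_add hN, div_eq_mul_inv (E _ _ _), ← Real.rpow_neg hN.le, mul_comm]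
      congr 2; ring
  have hbd : ∀ e ∈ Z, S0 ≤ e := by
    rintro e ⟨v, hv, hN, rfl⟩
    have := hS v hv
    rwa [hN, Real.one_rpow, mul_one] at this
  have hne : Z.Nonempty := ⟨_, hscale u hu hNu⟩
  set a := sInf Z with ha
  have haS : S0 ≤ a := le_csInf hne hbd
  have ha0 : 0 < a := hS0.trans_le haS
  have hlow : ∀ v : SF n, IsC v → a * (NN (k+1) q v)^(2/q) ≤ E (k+1) v v := by
    intro v hv
    rcases (NN_nonneg (k+1) q v).eq_or_lt with h | h
    · rw [← h, Real.zero_rpow (by positivity), mul_zero]; exact E_nonneg hk hv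
    · have := csInf_le ⟨S0, hbd⟩ (hscale v hv h)
      rwa [le_div_iff₀ (by positivity)] at this
  refine ⟨a, haS, hlow u hu, ?_⟩
  obtain ⟨ε₁, hε₁, h1⟩ := gap_q hk hq hq2 ha0 hlow hη
  obtain ⟨ε₂, hε₂, h2⟩ := first_var hq ha0 hlow (hΦ.mul_left (wp (bb n (k+1)))) hη
  obtain ⟨e, ⟨v, hv, hN, rfl⟩, hlt⟩ := exists_lt_of_csInf_lt hne (show sInf Z < a + min ε₁ ε₂ by
    have : 0 < min ε₁ ε₂ := by positivity
    linarith)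
  have hvV : wp (bb n (k+1)) * (wp (-bb n (k+1)) * v) = v := by
    rw [← mul_assoc, wp_mul, add_neg_cancel, wp_zero, one_mul]
  have hA : ∀ U, A (k+1) (wp (-bb n (k+1)) * v) U = E (k+1) v (wp (bb n (k+1)) * U) := by
    intro U; unfold A; rw [hvV]
  have hAA : A (k+1) (wp (-bb n (k+1)) * v) (wp (-bb n (k+1)) * v) = E (k+1) v v := by
    rw [hA, hvV]
  refine ⟨wp (-bb n (k+1)) * v, hv.mul_left _, by rwa [hvV], ?_, ?_, ?_⟩
  · rw [hAA]; exact csInf_le ⟨S0, hbd⟩ ⟨v, hv, hN, rfl⟩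
  · exact h1 _ (hv.mul_left _) (by rwa [hvV]) (by rw [hAA]; linarith [min_le_left ε₁ ε₂])
  · rw [hA]; exact h2 v hv hN (by linarith [min_le_right ε₁ ε₂])

end SharpSob

namespace SharpSob
open MeasureTheory Filter Topology
open scoped ContDiff NNReal ENNReal Real
variable {n : ℕ}

noncomputable def gsq (V : SF n) (x : RR n) : ℝ := ∑ i, (pd i V x)^2

lemma gsq_cont (V : SF n) : Continuous (gsq V) :=
  continuous_finset_sum _ fun i _ => (sf_cont (pd i V)).pow 2

lemma gsq_nonneg (V : SF n) (x : RR n) : 0 ≤ gsq V x := Finset.sum_nonneg fun i _ => sq_nonneg _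

lemma sq_int_le {f : ℝ → ℝ} (hf : Continuous f) : (∫ s in (0:ℝ)..1, f s)^2 ≤ ∫ s in (0:ℝ)..1, (f s)^2 := by
  set m := ∫ s in (0:ℝ)..1, f s with hm
  have h : 0 ≤ ∫ s in (0:ℝ)..1, (f s - m)^2 :=
    intervalIntegral.integral_nonneg (by norm_num) fun s _ => sq_nonneg _
  have e : ∫ s in (0:ℝ)..1, (f s - m)^2 = (∫ s in (0:ℝ)..1, (f s)^2) - 2 * m * m + m^2 := by
    have : ∀ s, (f s - m)^2 = ((f s)^2 - 2 * m * f s) + m^2 := fun s => by ring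
    simp only [this]
    rw [intervalIntegral.integral_add (Continuous.intervalIntegrable (by fun_prop) _ _) (by simp),
      intervalIntegral.integral_sub (Continuous.intervalIntegrable (by fun_prop) _ _) (Continuous.intervalIntegrable (by fun_prop) _ _),
      intervalIntegral.integral_const_mul, ← hm]
    simp
  nlinarith

lemma diff_sq_le (V : SF n) (x z : RR n) : (V (x + z) - V x)^2 ≤ ‖z‖^2 * ∫ s in (0:ℝ)..1, gsq V (x + s • z) := by
  have hd : ∀ s : ℝ, HasDerivAt (fun s : ℝ => V (x + s • z)) (fderiv ℝ V (x + s • z) z) s := by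
    intro s
    have h1 : HasDerivAt (fun s : ℝ => x + s • z) z s := by
      simpa using ((hasDerivAt_id s).smul_const z).const_add x
    exact ((sf_diffble V (x + s • z)).hasFDerivAt).comp_hasDerivAt s h1
  have hc : Continuous (fun s : ℝ => fderiv ℝ V (x + s • z) z) := by
    have : Continuous (fun s : ℝ => ∑ i, z i * pd i V (x + s • z)) :=
      continuous_finset_sum _ fun i _ => continuous_const.mul ((sf_cont (pd i V)).comp (by fun_prop))
    refine this.congr fun s => (fderiv_apply_sum _ _ _).symm
  have hintg := intervalIntegral.integral_eq_sub_of_hasDerivAt (a := 0) (b := 1) (fun s _ => hd s) (hc.intervalIntegrable _ _)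
  simp only [one_smul, zero_smul, add_zero] at hintg
  rw [← hintg, ← intervalIntegral.integral_const_mul]
  refine (sq_int_le hc).trans ?_
  refine intervalIntegral.integral_mono_on (by norm_num) ((hc.pow 2).intervalIntegrable _ _)
    (Continuous.intervalIntegrable (continuous_const.mul ((gsq_cont V).comp (by fun_prop))) _ _) fun s _ => ?_
  rw [fderiv_apply_sum, EuclideanSpace.real_norm_sq_eq]
  exact Finset.sum_mul_sq_le_sq_mul_sq _ _ _

lemma poinc_lint (V : SF n) {R : ℝ} {g : SF n} {M : ℝ} (hM : ∀ x, g x ≤ M) (hg0 : ∀ x, 0 ≤ g x)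
    (hgR : ∀ x, g x ≠ 0 → ‖x‖ ≤ R) :
    ∫⁻ x, ∫⁻ y, ENNReal.ofReal (g x * g y * (V y - V x)^2) ≤
      ENNReal.ofReal (M^2 * (2*R)^2) * (volume (Metric.closedBall (0 : RR n) (2*R)) *
        ∫⁻ x, (Metric.closedBall (0 : RR n) (3*R)).indicator (fun x => ENNReal.ofReal (gsq V x)) x) := by
  set h : RR n → ℝ≥0∞ := (Metric.closedBall (0 : RR n) (3*R)).indicator (fun x => ENNReal.ofReal (gsq V x)) with hh
  set b : RR n → ℝ≥0∞ := (Metric.closedBall (0 : RR n) (2*R)).indicator 1 with hb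
  set K := ENNReal.ofReal (M^2 * (2*R)^2) with hK
  have hmeas : Measurable h :=
    ((gsq_cont V).measurable.ennreal_ofReal).indicator Metric.isClosed_closedBall.measurableSet
  have bmeas : Measurable b := measurable_one.indicator Metric.isClosed_closedBall.measurableSet
  have pt : ∀ x z, ENNReal.ofReal (g x * g (x+z) * (V (x+z) - V x)^2) ≤ K * (b z * ∫⁻ s in Set.Ioc (0:ℝ) 1, h (x + s • z)) := by
    intro x z
    by_cases h0 : g x * g (x+z) = 0
    · rw [h0]; simp
    have hx := hgR x (left_ne_zero_of_mul h0)
    have hxz := hgR (x+z) (right_ne_zero_of_mul h0)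
    have hz : ‖z‖ ≤ 2*R := by
      have : z = (x + z) - x := by abel
      rw [this]; exact (norm_sub_le _ _).trans (by linarith)
    have hbz : b z = 1 := by rw [hb, Set.indicator_of_mem (by simpa using hz)]; rfl
    have hs : ∀ s ∈ Set.Ioc (0:ℝ) 1, h (x + s • z) = ENNReal.ofReal (gsq V (x + s • z)) := by
      intro s hs
      rw [hh, Set.indicator_of_mem]
      rw [mem_closedBall_zero_iff]
      refine (norm_add_le _ _).trans ?_
      rw [norm_smul, Real.norm_of_nonneg hs.1.le]
      have := mul_le_of_le_one_left (norm_nonneg z) hs.2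
      linarith
    have hcs : Continuous (fun s : ℝ => gsq V (x + s • z)) := (gsq_cont V).comp (by fun_prop)
    have hi : ∫⁻ s in Set.Ioc (0:ℝ) 1, h (x + s • z) = ENNReal.ofReal (∫ s in (0:ℝ)..1, gsq V (x + s • z)) := by
      rw [setLIntegral_congr_fun measurableSet_Ioc hs, intervalIntegral.integral_of_le (by norm_num),
        ofReal_integral_eq_lintegral_ofReal]
      · exact (hcs.intervalIntegrable 0 1).1
      · exact Eventually.of_forall fun s => gsq_nonneg _ _
    rw [hbz, one_mul, hi, hK, ← ENNReal.ofReal_mul (by positivity)]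
    apply ENNReal.ofReal_le_ofReal
    have hI : 0 ≤ ∫ s in (0:ℝ)..1, gsq V (x + s • z) := intervalIntegral.integral_nonneg (by norm_num) fun s _ => gsq_nonneg _ _
    have h1 := diff_sq_le V x z
    have h2 : ‖z‖^2 ≤ (2*R)^2 := by gcongr
    have h3 : g x * g (x+z) ≤ M^2 := by rw [pow_two]; exact mul_le_mul (hM _) (hM _) (hg0 _) ((hg0 x).trans (hM x))
    calc g x * g (x+z) * (V (x+z) - V x)^2 ≤ M^2 * (‖z‖^2 * ∫ s in (0:ℝ)..1, gsq V (x + s • z)) := by gcongr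
      _ ≤ M^2 * ((2*R)^2 * ∫ s in (0:ℝ)..1, gsq V (x + s • z)) := by gcongr
      _ = _ := by ring
  have jm : Measurable (fun p : (RR n × RR n) × ℝ => h (p.1.1 + p.2 • p.1.2)) := hmeas.comp (by fun_prop)
  calc ∫⁻ x, ∫⁻ y, ENNReal.ofReal (g x * g y * (V y - V x)^2)
      = ∫⁻ x, ∫⁻ z, ENNReal.ofReal (g x * g (x+z) * (V (x+z) - V x)^2) := by
        refine lintegral_congr fun x => ?_
        exact (lintegral_add_left_eq_self (fun y => ENNReal.ofReal (g x * g y * (V y - V x)^2)) x).symm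
    _ ≤ ∫⁻ x, ∫⁻ z, K * (b z * ∫⁻ s in Set.Ioc (0:ℝ) 1, h (x + s • z)) := by gcongr with x z; exact pt x z
    _ = ∫⁻ z, ∫⁻ x, K * (b z * ∫⁻ s in Set.Ioc (0:ℝ) 1, h (x + s • z)) := by
        rw [lintegral_lintegral_swap]
        refine Measurable.aemeasurable ?_
        refine measurable_const.mul ((bmeas.comp measurable_snd).mul ?_)
        exact Measurable.lintegral_prod_right jm
    _ = ∫⁻ z, K * (b z * ∫⁻ x, h x) := by
        refine lintegral_congr fun z => ?_
        have m1 : Measurable (fun p : RR n × ℝ => h (p.1 + p.2 • z)) := hmeas.comp (by fun_prop)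
        have m2 : Measurable (fun x : RR n => ∫⁻ s in Set.Ioc (0:ℝ) 1, h (x + s • z)) := Measurable.lintegral_prod_right m1
        rw [lintegral_const_mul _ (m2.const_mul _), lintegral_const_mul _ m2, lintegral_lintegral_swap m1.aemeasurable]
        congr 2
        have : ∀ s : ℝ, ∫⁻ x, h (x + s • z) = ∫⁻ x, h x := fun s => lintegral_add_right_eq_self h (s • z)
        simp [this]
    _ = _ := by
        rw [lintegral_const_mul _ (bmeas.mul_const _), lintegral_mul_const _ bmeas, hb, lintegral_indicator_one Metric.isClosed_closedBall.measurableSet]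

lemma var_eq {g V : SF n} (hg : IsC g) (hg0 : ∀ x, 0 ≤ g x) :
    ENNReal.ofReal (2 * (In g * In (g * (V * V)) - (In (g * V))^2)) =
      ∫⁻ x, ∫⁻ y, ENNReal.ofReal (g x * g y * (V y - V x)^2) := by
  have hin : ∀ x, IsC ((g x) • (g * ((V - algebraMap ℝ _ (V x)) * (V - algebraMap ℝ _ (V x))))) := fun x => (hg.mul_right _).smul _
  have happ : ∀ x y, ((g x) • (g * ((V - algebraMap ℝ _ (V x)) * (V - algebraMap ℝ _ (V x)))) : SF n) y = g x * g y * (V y - V x)^2 := by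
    intro x y
    simp only [SF.smul_app, SF.mul_app, SF.sub_app, SF.algebraMap_app]; ring
  have h1 : ∀ x, ∫⁻ y, ENNReal.ofReal (g x * g y * (V y - V x)^2) =
      ENNReal.ofReal (g x * (In (g * (V * V)) - 2 * V x * In (g * V) + (V x)^2 * In g)) := by
    intro x
    rw [← ofReal_integral_eq_lintegral_ofReal]
    · congr 1
      have e : (g x) • (g * ((V - algebraMap ℝ _ (V x)) * (V - algebraMap ℝ _ (V x)))) =
          (g x) • ((g * (V * V) - (2 * V x) • (g * V)) + ((V x)^2) • g) := by
        ext y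
        simp only [SF.smul_app, SF.mul_app, SF.sub_app, SF.add_app, SF.algebraMap_app]; ring
      have : ∫ y, g x * g y * (V y - V x)^2 = In ((g x) • (g * ((V - algebraMap ℝ _ (V x)) * (V - algebraMap ℝ _ (V x))))) := by
        unfold In; congr 1; ext y; rw [happ]
      rw [this, e, In_smul, In_add ((hg.mul_right _).sub ((hg.mul_right _).smul _)) (hg.smul _),
        In_sub (hg.mul_right _) ((hg.mul_right _).smul _), In_smul, In_smul]
    · refine (hin x).int.congr (Eventually.of_forall fun y => happ x y)
    · exact Eventually.of_forall fun y => mul_nonneg (mul_nonneg (hg0 x) (hg0 y)) (sq_nonneg _)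
  simp only [h1]
  have hout : IsC (In (g * (V * V)) • g - (2 * In (g * V)) • (g * V) + In g • (g * (V * V))) :=
    ((hg.smul _).sub ((hg.mul_right _).smul _)).add ((hg.mul_right _).smul _)
  have hoapp : ∀ x, (In (g * (V * V)) • g - (2 * In (g * V)) • (g * V) + In g • (g * (V * V)) : SF n) x
      = g x * (In (g * (V * V)) - 2 * V x * In (g * V) + (V x)^2 * In g) := by
    intro x
    simp only [SF.smul_app, SF.mul_app, SF.sub_app, SF.add_app]; ring
  rw [← ofReal_integral_eq_lintegral_ofReal]
  · congr 1
    have : ∫ x, g x * (In (g * (V * V)) - 2 * V x * In (g * V) + (V x)^2 * In g) = In (In (g * (V * V)) • g - (2 * In (g * V)) • (g * V) + In g • (g * (V * V))) := by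
      unfold In; congr 1; ext x; exact (hoapp x).symm
    rw [this, In_add ((hg.smul _).sub ((hg.mul_right _).smul _)) ((hg.mul_right _).smul _),
      In_sub (hg.smul _) ((hg.mul_right _).smul _), In_smul, In_smul, In_smul]
    ring
  · exact hout.int.congr (Eventually.of_forall hoapp)
  · refine Eventually.of_forall fun x => ?_
    have : In (g * (V * V)) - 2 * V x * In (g * V) + (V x)^2 * In g = In (g * ((V - algebraMap ℝ _ (V x)) * (V - algebraMap ℝ _ (V x)))) := by
      have e : (g * ((V - algebraMap ℝ _ (V x)) * (V - algebraMap ℝ _ (V x)))) =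
           ((g * (V * V) - (2 * V x) • (g * V)) + ((V x)^2) • g) := by
        ext y
        simp only [SF.smul_app, SF.mul_app, SF.sub_app, SF.add_app, SF.algebraMap_app]; ring
      rw [e, In_add ((hg.mul_right _).sub ((hg.mul_right _).smul _)) (hg.smul _),
        In_sub (hg.mul_right _) ((hg.mul_right _).smul _), In_smul, In_smul]
    simp only [Pi.zero_apply]
    rw [this]
    refine mul_nonneg (hg0 x) (In_nonneg fun y => ?_)
    simp only [SF.mul_app]
    exact mul_nonneg (hg0 y) (mul_self_nonneg _)

lemma T01 {V : SF n} (hV : IsC V) : T 0 1 V = ∫ x, wp ((n:ℝ)-2) x * gsq V x := by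
  unfold T
  rw [pow_one, A_zero_Lop (Or.inl hV), ← In_sum _ _ (fun i _ => ((hV.pd i).mul_left _).mul_left _)]
  unfold In; congr 1; ext x
  rw [SF.sum_app]
  unfold gsq
  rw [Finset.mul_sum]
  exact Finset.sum_congr rfl fun i _ => by rw [SF.mul_app, SF.mul_app, pow_two]

lemma poinc {g : SF n} (hg : IsC g) (hg0 : ∀ x, 0 ≤ g x) : ∃ C : ℝ, 0 ≤ C ∧ ∀ V : SF n, IsC V →
    In g * In (g * (V * V)) ≤ (In (g * V))^2 + C * T 0 1 V := by
  obtain ⟨R, hR⟩ := hg.isCompact.isBounded.subset_closedBall (0 : RR n)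
  have hgR : ∀ x, g x ≠ 0 → ‖x‖ ≤ |R| := fun x hx => by
    have := hR (subset_tsupport _ hx)
    rw [mem_closedBall_zero_iff] at this
    exact this.trans (le_abs_self R)
  obtain ⟨M, hM⟩ := (sf_cont g).bddAbove_range_of_hasCompactSupport hg
  have hM' : ∀ x, g x ≤ M := fun x => hM ⟨x, rfl⟩
  have hne : (Metric.closedBall (0 : RR n) (3*|R|)).Nonempty := ⟨0, by simp⟩
  obtain ⟨x0, -, hx0⟩ := (isCompact_closedBall (0 : RR n) (3*|R|)).exists_isMinOn hne (sf_cont (wp ((n:ℝ)-2))).continuousOn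
  set c := wp ((n:ℝ)-2) x0 with hc
  have hc0 : 0 < c := wp_pos _ _
  set W := (volume (Metric.closedBall (0 : RR n) (2*|R|))).toReal with hW
  have hWe : volume (Metric.closedBall (0 : RR n) (2*|R|)) = ENNReal.ofReal W := by
    rw [hW, ENNReal.ofReal_toReal measure_closedBall_lt_top.ne]
  refine ⟨M^2 * (2*|R|)^2 * (W * c⁻¹), by positivity, fun V hV => ?_⟩
  have h1 := poinc_lint V hM' hg0 hgR
  rw [← var_eq hg hg0, hWe] at h1
  have h2 : ∫⁻ x, (Metric.closedBall (0 : RR n) (3*|R|)).indicator (fun x => ENNReal.ofReal (gsq V x)) x ≤ ENNReal.ofReal (c⁻¹ * T 0 1 V) := by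
    rw [T01 hV, ← integral_const_mul, ofReal_integral_eq_lintegral_ofReal]
    · refine lintegral_mono fun x => ?_
      by_cases hx : x ∈ Metric.closedBall (0 : RR n) (3*|R|)
      · rw [Set.indicator_of_mem hx]
        apply ENNReal.ofReal_le_ofReal
        have : c ≤ wp ((n:ℝ)-2) x := hx0 hx
        rw [← mul_assoc]
        refine le_mul_of_one_le_left (gsq_nonneg _ _) ?_
        rw [← inv_mul_cancel₀ hc0.ne']; gcongr
      · rw [Set.indicator_of_notMem hx]; exact zero_le
    · refine Integrable.const_mul ?_ _
      have hC : IsC (∑ i, wp ((n:ℝ)-2) * (pd i V * pd i V)) := isC_sum _ _ fun i _ => ((hV.pd i).mul_left _).mul_left _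
      refine hC.int.congr (Eventually.of_forall fun x => ?_)
      simp only
      rw [SF.sum_app]
      unfold gsq
      rw [Finset.mul_sum]
      exact Finset.sum_congr rfl fun i _ => by rw [SF.mul_app, SF.mul_app, pow_two]
    · exact Eventually.of_forall fun x => mul_nonneg (by positivity) (mul_nonneg (wp_pos _ x).le (gsq_nonneg _ _))
  have hT := T_zero_nonneg 1 hV
  have h3 := h1.trans (mul_le_mul_right (mul_le_mul_right h2 _) _)
  rw [← ENNReal.ofReal_mul (by positivity), ← ENNReal.ofReal_mul (by positivity), ENNReal.ofReal_le_ofReal_iff (by positivity)] at h3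
  have h4 : 0 ≤ M^2 * (2*|R|)^2 * (W * (c⁻¹ * T 0 1 V)) := by positivity
  linarith

end SharpSob

namespace SharpSob
open MeasureTheory Filter Topology
open scoped ContDiff NNReal ENNReal Real
variable {n : ℕ}

lemma young_K {δ q1 : ℝ} (hδ : 0 < δ) (hq1 : 2 < q1) : ∃ K : ℝ, 0 ≤ K ∧ ∀ q : ℝ, q1 ≤ q → ∀ x : ℝ, x^2 ≤ δ * |x|^q + K := by
  set L := max 1 (δ^(-(1/(q1-2)))) with hL
  have hL1 : 1 ≤ L := le_max_left _ _
  refine ⟨L^2, by positivity, fun q hq x => ?_⟩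
  rcases le_or_gt |x| L with h | h
  · have : x^2 ≤ L^2 := by rw [← sq_abs]; gcongr
    have : 0 ≤ δ * |x|^q := by positivity
    linarith
  · have hx : 0 < |x| := by linarith
    have hq12 : 0 < q1 - 2 := by linarith
    have h1 : δ⁻¹ ≤ |x|^(q-2) := by
      calc δ⁻¹ = (δ^(-(1/(q1-2))))^(q1-2) := by
            rw [← Real.rpow_mul hδ.le, neg_mul, one_div_mul_cancel hq12.ne', Real.rpow_neg_one]
        _ ≤ |x|^(q1-2) := by
            apply Real.rpow_le_rpow (by positivity) _ hq12.le
            exact (le_max_right _ _).trans h.le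
        _ ≤ |x|^(q-2) := Real.rpow_le_rpow_of_exponent_le (by linarith) (by linarith)
    have h2 : |x|^q = |x|^(q-2) * |x|^2 := by
      rw [← Real.rpow_natCast |x| 2, ← Real.rpow_add hx]; congr 1; push_cast; ring
    have h3 : x^2 ≤ δ * |x|^q := by
      rw [h2, sq_abs]
      have : 1 ≤ δ * |x|^(q-2) := by
        rw [← mul_inv_cancel₀ hδ.ne']; gcongr
      nlinarith [sq_nonneg x]
    have : 0 ≤ L^2 := by positivity
    linarith

lemma tail {k : ℕ} (hn : 0 < n) {q δ K : ℝ} (hq : 0 < q) (hδ : 0 ≤ δ) (hK0 : 0 ≤ K) (hK : ∀ x : ℝ, x^2 ≤ δ * |x|^q + K) {V Φ : SF n} (hV : IsC V)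
    (hΦ : IsC Φ) (h0 : ∀ x, 0 ≤ Φ x) (h1 : ∀ x, Φ x ≤ 1) (hN : NN k q (wp (bb n k) * V) = 1) :
    In (wp n * (V * V)) - In ((wp n * Φ) * (V * V)) ≤ δ + K * (vol n - In (wp n * Φ)) := by
  rw [NN_wp] at hN
  have i1 : Integrable (fun x => |V x|^q * wp (n:ℝ) x) := by
    by_contra h
    rw [integral_undef h] at hN
    exact zero_ne_one hN
  have i2 : Integrable (fun x => (wp (n:ℝ) * Φ : SF n) x) := (hΦ.mul_left _).int
  have i0 := integrable_wp hn
  have i3 : Integrable (fun x => wp (n:ℝ) x - (wp (n:ℝ) * Φ : SF n) x) := i0.sub i2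
  have e : δ + K * (vol n - In (wp n * Φ)) = ∫ x, (δ * (|V x|^q * wp (n:ℝ) x) + K * (wp (n:ℝ) x - (wp (n:ℝ) * Φ : SF n) x)) := by
    rw [integral_add (i1.const_mul _) (i3.const_mul _), integral_const_mul, integral_const_mul, integral_sub i0 i2, hN, mul_one]
    rfl
  rw [e, ← In_sub ((hV.mul_left _).mul_left _) ((hV.mul_left _).mul_left _)]
  unfold In
  refine integral_mono (((hV.mul_left _).mul_left _).sub ((hV.mul_left _).mul_left _)).int ((i1.const_mul _).add (i3.const_mul _)) fun x => ?_
  simp only [SF.sub_app, SF.mul_app]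
  have hw := wp_pos (n:ℝ) x
  have p1 : 0 ≤ |V x|^q := by positivity
  have a1 : (1 - Φ x) * (V x)^2 ≤ (1 - Φ x) * (δ * |V x|^q + K) :=
    mul_le_mul_of_nonneg_left (hK _) (by linarith [h1 x])
  have a2 : (1 - Φ x) * (δ * |V x|^q) ≤ δ * |V x|^q := mul_le_of_le_one_left (by positivity) (by linarith [h0 x])
  have a3 : (1 - Φ x) * (V x)^2 ≤ δ * |V x|^q + (1 - Φ x) * K := by linarith
  have := mul_le_mul_of_nonneg_left a3 hw.le
  linarith

lemma core {k : ℕ} (hk : 2 * (k+1) < n) {Φ : SF n} (hΦ : IsC Φ) (h0 : ∀ x, 0 ≤ Φ x) (h1 : ∀ x, Φ x ≤ 1) :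
    ∃ C1 C2 b : ℝ, ∀ δ K q S0 η : ℝ, 0 ≤ δ → 0 ≤ K → (∀ x : ℝ, x^2 ≤ δ * |x|^q + K) → 2 < q → q < qs n (k+1) → 0 < S0 →
      (∀ v : SF n, IsC v → S0 * (NN (k+1) q v)^(2/q) ≤ E (k+1) v v) → 0 < η → ∀ u : SF n, IsC u → 0 < NN (k+1) q u →
      ∃ a, S0 ≤ a ∧ a * (NN (k+1) q u)^(2/q) ≤ E (k+1) u u ∧
      Lam n (k+1) * In (wp n * Φ) * (a - C1 * (((qs n (k+1) - q) * a + η)/(qs n (k+1) - 2)) - Lam n (k+1) * (δ + K * (vol n - In (wp n * Φ))))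
        ≤ (a * (vol n)^(1/q) + η + √(C1 * (((qs n (k+1) - q) * a + η)/(qs n (k+1) - 2)) * b))^2
          + C2 * (((qs n (k+1) - q) * a + η)/(qs n (k+1) - 2)) := by
  have hn : 0 < n := by omega
  have hk' : 2 * k < n := by omega
  obtain ⟨C1, hC1, hgap⟩ := T_gap hk
  have hg : IsC (wp (n:ℝ) * Φ) := hΦ.mul_left _
  have hg0 : ∀ x, 0 ≤ (wp (n:ℝ) * Φ : SF n) x := fun x => by rw [SF.mul_app]; exact mul_nonneg (wp_pos _ x).le (h0 x)
  obtain ⟨C2, hC2, hpo⟩ := poinc hg hg0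
  set Λ := Lam n (k+1) with hΛ
  have hΛ0 : 0 < Λ := Lam_pos hk
  set Λ' := Lam n k with hΛ'
  have hΛ'0 : 0 < Λ' := Lam_pos hk'
  set Q := qs n (k+1) with hQ
  set G := In (wp n * Φ) with hG
  have hG0 : 0 ≤ G := In_nonneg hg0
  refine ⟨C1, Λ^2 * C2 / Λ', B (k+1) Φ Φ, fun δ K q S0 η hδ hK0 hK hq hq2 hS0 hS hη u hu hNu => ?_⟩
  obtain ⟨a, haS, hau, V, hV, hN, haA, hD, hfv⟩ := per_q hk hq hq2 hu hNu hS0 hS hΦ hη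
  refine ⟨a, haS, hau, ?_⟩
  have hq0 : 0 < q := by linarith
  have hQ2 : 0 < Q - 2 := by linarith
  have ha0 : 0 < a := hS0.trans_le haS
  set D := T k 1 V with hDdef
  have hD0 : 0 ≤ D := T_nonneg hk' 1 hV
  set D' := ((Q - q) * a + η)/(Q - 2) with hD'
  have hDD : D ≤ D' := by rw [hD', le_div_iff₀ hQ2]; linarith
  have hb0 := B_nonneg hk hΦ
  set b := B (k+1) Φ Φ with hb
  have g1 := hgap V hV
  have hI2 : T 0 0 V = In (wp n * (V * V)) := A_zero V V
  have hA1 : T (k+1) 0 V = A (k+1) V V := rfl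
  rw [hI2, hA1] at g1
  have g2 := tail hn hq0 hδ hK0 hK hV hΦ h0 h1 hN
  have g3 := hpo V hV
  have g4 : Λ' * T 0 1 V ≤ D := T_ge hk' 1 hV
  -- lower bound for the localized mass
  have l1 : a - C1 * D' - Λ * (δ + K * (vol n - G)) ≤ Λ * In ((wp n * Φ) * (V * V)) := by
    have c1 : C1 * D ≤ C1 * D' := by gcongr
    have c2 := mul_le_mul_of_nonneg_left g2 hΛ0.le
    linarith
  -- first variation
  have hAP : A 0 V Φ = In ((wp n * Φ) * V) := by rw [A_zero]; congr 1; ring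
  have hBdef : A (k+1) V Φ = B (k+1) V Φ + Λ * In ((wp n * Φ) * V) := by
    rw [← hAP]; unfold B; rw [← hΛ]; ring
  have hBVV : B (k+1) V V ≤ C1 * D' := by
    have : B (k+1) V V = A (k+1) V V - Λ * In (wp n * (V * V)) := by
      unfold B; rw [A_zero V V]
    rw [this]
    have c1 : C1 * D ≤ C1 * D' := by gcongr
    linarith
  have hBb : |B (k+1) V Φ| ≤ √(C1 * D' * b) := by
    apply Real.abs_le_sqrt
    refine (B_CS hk hV hΦ).trans ?_
    gcongr
  have hNΦ : NN (k+1) q (wp (bb n (k+1)) * Φ) ≤ vol n := by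
    rw [NN_wp]
    refine integral_mono_of_nonneg (Eventually.of_forall fun x => mul_nonneg (by positivity) (wp_pos _ x).le) (integrable_wp hn) (Eventually.of_forall fun x => ?_)
    refine mul_le_of_le_one_left (wp_pos _ x).le ?_
    exact Real.rpow_le_one (abs_nonneg _) (by rw [abs_of_nonneg (h0 x)]; exact h1 x) hq0.le
  have hNΦ' : a * (NN (k+1) q (wp (bb n (k+1)) * Φ))^(1/q) ≤ a * (vol n)^(1/q) := by
    have := NN_nonneg (k+1) q (wp (bb n (k+1)) * Φ)
    gcongr
  have hP : Λ * |In ((wp n * Φ) * V)| ≤ a * (vol n)^(1/q) + η + √(C1 * D' * b) := by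
    have : Λ * |In ((wp n * Φ) * V)| = |A (k+1) V Φ - B (k+1) V Φ| := by
      rw [hBdef, add_sub_cancel_left, abs_mul, abs_of_pos hΛ0]
    rw [this]
    refine (abs_sub _ _).trans ?_
    linarith
  have hP2 : Λ^2 * (In ((wp n * Φ) * V))^2 ≤ (a * (vol n)^(1/q) + η + √(C1 * D' * b))^2 := by
    rw [← sq_abs (In _), ← mul_pow]
    gcongr
  calc Λ * G * (a - C1 * D' - Λ * (δ + K * (vol n - G))) ≤ Λ * G * (Λ * In ((wp n * Φ) * (V * V))) := by gcongr
    _ = Λ^2 * (G * In ((wp n * Φ) * (V * V))) := by ring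
    _ ≤ Λ^2 * ((In ((wp n * Φ) * V))^2 + C2 * T 0 1 V) := by gcongr
    _ = Λ^2 * (In ((wp n * Φ) * V))^2 + Λ^2 * C2 * T 0 1 V := by ring
    _ ≤ (a * (vol n)^(1/q) + η + √(C1 * D' * b))^2 + Λ^2 * C2 / Λ' * D' := by
        refine add_le_add hP2 ?_
        rw [div_mul_eq_mul_div, le_div_iff₀ hΛ'0, mul_assoc]
        gcongr
        rw [mul_comm]; exact g4.trans hDD

lemma NN_tendsto {k : ℕ} (hk1 : 1 ≤ k) (hk : 2 * k < n) {u : SF n} (hu : IsC u) :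
    Tendsto (fun q => NN k q u) (𝓝[<] (qs n k)) (𝓝 (∫ x, |u x|^(qs n k))) := by
  have hQ := two_lt_qs hk1 hk
  have hev : ∀ᶠ q in 𝓝[<] (qs n k), 2 < q ∧ q < qs n k := Ioo_mem_nhdsLT hQ
  have hbb := bb_pos hk
  unfold NN
  refine tendsto_integral_filter_of_dominated_convergence (fun x => |u x|^2 * (1 + |u x|)^(qs n k) * (2:ℝ)^(n:ℝ)) ?_ ?_ ?_ ?_
  · filter_upwards [hev] with q hq
    exact (((sf_cont u).abs.rpow_const fun x => Or.inr (by linarith [hq.1])).mul (sf_cont _)).aestronglyMeasurable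
  · filter_upwards [hev] with q hq
    refine Eventually.of_forall fun x => ?_
    rw [Real.norm_of_nonneg (dens_nonneg k q u x)]
    have h1 : |u x|^q ≤ |u x|^2 * (1 + |u x|)^(qs n k) := by
      rcases (abs_nonneg (u x)).eq_or_lt with h | h
      · rw [← h, Real.zero_rpow (by linarith [hq.1])]; simp
      · have e : |u x|^q = |u x|^2 * |u x|^(q-2) := by
          rw [← Real.rpow_natCast |u x| 2, ← Real.rpow_add h]; congr 1; push_cast; ring
        rw [e]
        gcongr
        calc |u x|^(q-2) ≤ (1 + |u x|)^(q-2) := by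
              apply Real.rpow_le_rpow h.le (by linarith); linarith [hq.1]
          _ ≤ (1 + |u x|)^(qs n k) := Real.rpow_le_rpow_of_exponent_le (by linarith) (by linarith [hq.2])
    have h2 : wp (sw n k q) x ≤ (2:ℝ)^(n:ℝ) := by
      rw [wp_eq_rpow]
      have s0 : 0 ≤ sw n k q := by rw [sw_eq hk]; exact mul_nonneg (by linarith [hq.2]) hbb.le
      have s1 : sw n k q ≤ n := by unfold sw; nlinarith [hq.1]
      calc (wp 1 x)^(sw n k q) ≤ (2:ℝ)^(sw n k q) := Real.rpow_le_rpow (wp_pos _ x).le (wp_one_le x) s0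
        _ ≤ _ := Real.rpow_le_rpow_of_exponent_le (by norm_num) s1
    exact mul_le_mul h1 h2 (wp_pos _ x).le (by positivity)
  · refine Continuous.integrable_of_hasCompactSupport ?_ ?_
    · have hc := (sf_cont u).abs
      exact ((hc.pow 2).mul ((continuous_const.add hc).rpow_const fun x => Or.inr (by linarith))).mul continuous_const
    · refine HasCompactSupport.mono hu ?_
      intro x hx hx'
      apply hx
      simp only at hx' ⊢
      rw [hx']; simp
  · refine Eventually.of_forall fun x => ?_
    have h1 : Tendsto (fun q : ℝ => |u x|^q) (𝓝[<] (qs n k)) (𝓝 (|u x|^(qs n k))) :=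
      ((Real.continuousAt_const_rpow' (by linarith)).tendsto).mono_left nhdsWithin_le_nhds
    have h2 : Tendsto (fun q : ℝ => wp (sw n k q) x) (𝓝[<] (qs n k)) (𝓝 1) := by
      have hc : Continuous (fun q : ℝ => wp (sw n k q) x) := by
        have : (fun q : ℝ => wp (sw n k q) x) = fun q : ℝ => (wp 1 x)^(sw n k q) := by ext q; rw [wp_eq_rpow]
        rw [this]
        refine Continuous.rpow continuous_const (by unfold sw; fun_prop) fun q => Or.inl (wp_pos 1 x).ne'
      have := (hc.tendsto (qs n k)).mono_left (nhdsWithin_le_nhds (s := Set.Iio (qs n k)))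
      simpa [sw_eq hk, wp_zero] using this
    simpa using h1.mul h2

lemma exists_cutoff (hn : 0 < n) {ε : ℝ} (hε : 0 < ε) : ∃ Φ : SF n, IsC Φ ∧ (∀ x, 0 ≤ Φ x) ∧ (∀ x, Φ x ≤ 1) ∧
    vol n - In (wp n * Φ) < ε := by
  let f : ℕ → ContDiffBump (0 : RR n) := fun j => ⟨(j:ℝ)+1, (j:ℝ)+2, by positivity, by linarith⟩
  let Φ : ℕ → SF n := fun j => ⟨f j, (f j).contDiff⟩
  have happ : ∀ j x, Φ j x = f j x := fun j x => rfl
  have hC : ∀ j, IsC (Φ j) := fun j => (f j).hasCompactSupport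
  have ht : Tendsto (fun j => In (wp n * Φ j)) atTop (𝓝 (vol n)) := by
    unfold In vol
    refine tendsto_integral_of_dominated_convergence (fun x => wp (n:ℝ) x) (fun j => (sf_cont _).aestronglyMeasurable) (integrable_wp hn) ?_ ?_
    · intro j
      refine Eventually.of_forall fun x => ?_
      rw [SF.mul_app, norm_mul, Real.norm_of_nonneg (wp_pos _ x).le, happ, Real.norm_of_nonneg (f j).nonneg]
      exact mul_le_of_le_one_right (wp_pos _ x).le (f j).le_one
    · refine Eventually.of_forall fun x => ?_
      refine tendsto_const_nhds.congr' ?_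
      obtain ⟨N, hN⟩ := exists_nat_gt ‖x‖
      filter_upwards [eventually_ge_atTop N] with j hj
      rw [SF.mul_app, happ, (f j).one_of_mem_closedBall, mul_one]
      rw [mem_closedBall_zero_iff]
      have : (N:ℝ) ≤ j := by exact_mod_cast hj
      show ‖x‖ ≤ (j:ℝ)+1
      linarith
  obtain ⟨j, hj⟩ := (ht.eventually (lt_mem_nhds (show vol n - ε < vol n by linarith))).exists
  exact ⟨Φ j, hC j, fun x => (f j).nonneg, fun x => (f j).le_one, by linarith⟩

end SharpSob

namespace SharpSob
open MeasureTheory Filter Topology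
open scoped ContDiff NNReal ENNReal Real
variable {n : ℕ}

lemma lim_step {m : ℕ} (hk : 2 * (m+1) < n) {u : SF n} (hu : IsC u) {N E0 S0 : ℝ}
    (hN : N = (∫ x, |u x|^(qs n (m+1)))^(2/qs n (m+1))) (hI : 0 < ∫ x, |u x|^(qs n (m+1))) (hE0 : E0 = E (m+1) u u)
    (hS0 : 0 < S0) (hS : ∀ q : ℝ, 2 ≤ q → q < qs n (m+1) → ∀ v : SF n, IsC v → S0 * (NN (m+1) q v)^(2/q) ≤ E (m+1) v v)
    {q1 δ K : ℝ} (hq1 : 2 < q1) (hq1' : q1 < qs n (m+1)) (hδ : 0 ≤ δ) (hK0 : 0 ≤ K)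
    (hK : ∀ q : ℝ, q1 ≤ q → ∀ x : ℝ, x^2 ≤ δ * |x|^q + K)
    {Φ : SF n} (hΦ : IsC Φ) (h0 : ∀ x, 0 ≤ Φ x) (h1 : ∀ x, Φ x ≤ 1) :
    ∃ a, S0 ≤ a ∧ a * N ≤ E0 ∧ Lam n (m+1) * In (wp n * Φ) * (a - Lam n (m+1) * (δ + K * (vol n - In (wp n * Φ))))
      ≤ (a * (vol n)^(1/qs n (m+1)))^2 := by
  have hn : 0 < n := by omega
  have hv0 := vol_pos hn
  obtain ⟨C1, C2, b, hcore⟩ := core hk hΦ h0 h1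
  set Q := qs n (m+1) with hQ
  set Λ := Lam n (m+1) with hΛ
  set G := In (wp n * Φ) with hG
  have hQ2 : 2 < Q := hq1.trans hq1'
  have hN0 : 0 < N := by rw [hN]; positivity
  have t1 : Tendsto (fun q => NN (m+1) q u) (𝓝[<] Q) (𝓝 (∫ x, |u x|^Q)) := NN_tendsto (by omega) hk hu
  have tid : Tendsto (fun q : ℝ => q) (𝓝[<] Q) (𝓝 Q) := tendsto_nhdsWithin_of_tendsto_nhds tendsto_id
  have t2 : Tendsto (fun q => (NN (m+1) q u)^(2/q)) (𝓝[<] Q) (𝓝 N) := by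
    rw [hN]
    exact t1.rpow (tendsto_const_nhds.div tid (by linarith)) (Or.inl hI.ne')
  have step : ∀ j : ℕ, ∃ q a : ℝ, |q - Q| < 1/((j:ℝ)+1) ∧ |(NN (m+1) q u)^(2/q) - N| < 1/((j:ℝ)+1) ∧ N/2 < (NN (m+1) q u)^(2/q) ∧
      S0 ≤ a ∧ a * (NN (m+1) q u)^(2/q) ≤ E0 ∧
      Λ * G * (a - C1 * (((Q - q) * a + 1/((j:ℝ)+1))/(Q - 2)) - Λ * (δ + K * (vol n - G)))
        ≤ (a * (vol n)^(1/q) + 1/((j:ℝ)+1) + √(C1 * (((Q - q) * a + 1/((j:ℝ)+1))/(Q - 2)) * b))^2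
          + C2 * (((Q - q) * a + 1/((j:ℝ)+1))/(Q - 2)) := by
    intro j
    have hη : 0 < 1/((j:ℝ)+1) := by positivity
    have e1 : ∀ᶠ q in 𝓝[<] Q, q1 < q ∧ q < Q := Ioo_mem_nhdsLT hq1'
    have e2 : ∀ᶠ q in 𝓝[<] Q, |q - Q| < 1/((j:ℝ)+1) := by
      have := Metric.tendsto_nhds.1 tid _ hη
      simpa [Real.dist_eq] using this
    have e3 : ∀ᶠ q in 𝓝[<] Q, |(NN (m+1) q u)^(2/q) - N| < 1/((j:ℝ)+1) := by
      have := Metric.tendsto_nhds.1 t2 _ hη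
      simpa [Real.dist_eq] using this
    have e4 : ∀ᶠ q in 𝓝[<] Q, N/2 < (NN (m+1) q u)^(2/q) := t2.eventually (lt_mem_nhds (by linarith))
    have e5 : ∀ᶠ q in 𝓝[<] Q, 0 < NN (m+1) q u := t1.eventually (lt_mem_nhds hI)
    obtain ⟨q, ⟨f1, f1'⟩, f2, f3, f4, f5⟩ := (e1.and (e2.and (e3.and (e4.and e5)))).exists
    obtain ⟨a, ha1, ha2, ha3⟩ := hcore δ K q S0 _ hδ hK0 (hK q f1.le) (by linarith) f1' hS0 (hS q (by linarith) f1') hη u hu f5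
    exact ⟨q, a, f2, f3, f4, ha1, hE0 ▸ ha2, ha3⟩
  choose q a s2 s3 s4 s5 s6 s7 using step
  have hab : ∀ j, a j ∈ Set.Icc S0 (2 * E0 / N) := fun j => by
    refine ⟨s5 j, ?_⟩
    rw [le_div_iff₀ hN0]
    have := mul_le_mul_of_nonneg_left (s4 j).le (hS0.le.trans (s5 j))
    linarith [s6 j]
  obtain ⟨a0, ha0, φ, hφ, hta⟩ := isCompact_Icc.tendsto_subseq hab
  have tη0 : Tendsto (fun j : ℕ => 1/((j:ℝ)+1)) atTop (𝓝 0) := tendsto_one_div_add_atTop_nhds_zero_nat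
  have tη : Tendsto (fun j : ℕ => 1/((φ j:ℝ)+1)) atTop (𝓝 0) := tη0.comp hφ.tendsto_atTop
  have tq : Tendsto (fun j => q (φ j)) atTop (𝓝 Q) := by
    rw [tendsto_iff_dist_tendsto_zero]
    exact squeeze_zero (fun _ => dist_nonneg) (fun j => (s2 (φ j)).le) tη
  have tN : Tendsto (fun j => (NN (m+1) (q (φ j)) u)^(2/(q (φ j)))) atTop (𝓝 N) := by
    rw [tendsto_iff_dist_tendsto_zero]
    exact squeeze_zero (fun _ => dist_nonneg) (fun j => (s3 (φ j)).le) tη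
  have ta : Tendsto (fun j => a (φ j)) atTop (𝓝 a0) := hta
  have tD : Tendsto (fun j => (((Q - q (φ j)) * a (φ j) + 1/((φ j:ℝ)+1))/(Q - 2))) atTop (𝓝 0) := by
    have := ((((tendsto_const_nhds (x := Q)).sub tq).mul ta).add tη).div_const (Q - 2)
    simpa using this
  refine ⟨a0, ha0.1, le_of_tendsto' (ta.mul tN) fun j => s6 (φ j), ?_⟩
  have tL := (((ta.sub (tD.const_mul C1)).sub_const (Λ * (δ + K * (vol n - G)))).const_mul (Λ * G))
  have tv : Tendsto (fun j => (vol n)^(1/(q (φ j)))) atTop (𝓝 ((vol n)^(1/Q))) :=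
    (tendsto_const_nhds (x := vol n)).rpow ((tendsto_const_nhds (x := (1:ℝ))).div tq (by linarith)) (Or.inl hv0.ne')
  have ts := (((tD.const_mul C1).mul_const b).sqrt)
  have tR := ((((ta.mul tv).add tη).add ts).pow 2).add (tD.const_mul C2)
  have := le_of_tendsto_of_tendsto' tL tR fun j => s7 (φ j)
  simpa using this

lemma main_ineq {m : ℕ} (hk : 2 * (m+1) < n) {u : SF n} (hu : IsC u) :
    Lam n (m+1) * (vol n)^(1 - 2/qs n (m+1)) * (∫ x, |u x|^(qs n (m+1)))^(2/qs n (m+1)) ≤ E (m+1) u u := by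
  have hn : 0 < n := by omega
  have hv0 := vol_pos hn
  have hQ2 : 2 < qs n (m+1) := two_lt_qs (by omega) hk
  have hΛ0 : 0 < Lam n (m+1) := Lam_pos hk
  by_contra hcon
  push Not at hcon
  have hI : 0 < ∫ x, |u x|^(qs n (m+1)) := by
    have h : 0 ≤ ∫ x, |u x|^(qs n (m+1)) := integral_nonneg fun x => by positivity
    rcases h.eq_or_lt with h | h
    · rw [← h, Real.zero_rpow (by positivity), mul_zero] at hcon
      exact absurd (E_nonneg hk hu) (not_le.2 hcon)
    · exact h
  obtain ⟨S0, hS0, hS⟩ := sob_NN hk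
  have hlim := fun {q1 δ K : ℝ} => lim_step hk hu rfl hI rfl hS0 hS (q1 := q1) (δ := δ) (K := K)
  set Q := qs n (m+1) with hQ
  set Λ := Lam n (m+1) with hΛ
  set N := (∫ x, |u x|^Q)^(2/Q) with hN
  have hN0 : 0 < N := by rw [hN]; positivity
  set v := vol n with hv
  set E0 := E (m+1) u u with hE0
  set S1 := E0 / N with hS1
  set w := v^(2/Q) with hw
  have hw0 : 0 < w := by positivity
  have hvw : v^(1 - 2/Q) * w = v := by
    rw [hw, ← Real.rpow_add hv0]; simp
  have hw2 : (v^(1/Q))^2 = w := by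
    rw [hw, ← Real.rpow_natCast, ← Real.rpow_mul hv0.le]; congr 1; push_cast; ring
  have hS1lt : S1 * w < Λ * v := by
    have : S1 < Λ * v^(1-2/Q) := by rw [hS1, div_lt_iff₀ hN0]; exact hcon
    calc S1 * w < Λ * v^(1-2/Q) * w := by gcongr
      _ = Λ * v := by rw [mul_assoc, hvw]
  set γ := S0 * (Λ * v - S1 * w) with hγ
  have hγ0 : 0 < γ := mul_pos hS0 (by linarith)
  obtain ⟨K, hK0, hK⟩ := young_K (δ := γ / (3 * (Λ^2 * v))) (q1 := (2 + Q)/2) (by positivity) (by linarith)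
  set δ := γ / (3 * (Λ^2 * v)) with hδ
  have hδ0 : 0 < δ := by positivity
  have hδe : Λ^2 * v * δ = γ/3 := by rw [hδ]; field_simp
  have hE00 : 0 ≤ E0 := E_nonneg hk hu
  have hS10 : 0 ≤ S1 := by positivity
  have hM : 0 < Λ * S1 + Λ^2 * v * K + 1 := by positivity
  obtain ⟨Φ, hΦ, h0, h1, hθ⟩ := exists_cutoff hn (ε := γ / 3 / (Λ * S1 + Λ^2 * v * K + 1)) (by positivity)
  obtain ⟨a, ha1, ha2, ha3⟩ := hlim (by linarith) (by linarith) hδ0.le hK0 hK hΦ h0 h1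
  rw [mul_pow, hw2] at ha3
  rw [lt_div_iff₀ hM] at hθ
  set G := In (wp n * Φ) with hG
  have hGv : G ≤ v := by
    rw [hG, hv]
    refine integral_mono (hΦ.mul_left _).int (integrable_wp hn) fun x => ?_
    rw [SF.mul_app]
    exact mul_le_of_le_one_right (wp_pos _ x).le (h1 x)
  have haS : a ≤ S1 := by rw [hS1, le_div_iff₀ hN0]; exact ha2
  set θ := v - G with hθd
  have hθ0 : 0 ≤ θ := by linarith
  have hGe : G = v - θ := by linarith
  have ha0 : 0 < a := by linarith
  -- lower bound for `γ`
  have k1 : γ ≤ a * (Λ * v - a * w) := by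
    have z1 : S1 * w ≥ a * w := by gcongr
    calc γ = S0 * (Λ * v - S1 * w) := rfl
      _ ≤ a * (Λ * v - S1 * w) := by apply mul_le_mul_of_nonneg_right ha1; linarith
      _ ≤ a * (Λ * v - a * w) := by gcongr
  -- upper bound
  have k2 : a * (Λ * v - a * w) ≤ Λ * a * θ + Λ^2 * G * (δ + K * θ) := by
    rw [hGe] at ha3 ⊢
    nlinarith
  have k3 : Λ^2 * G * (δ + K * θ) ≤ Λ^2 * v * (δ + K * θ) := by gcongr
  have k4 : Λ * a * θ ≤ Λ * S1 * θ := by gcongr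
  nlinarith

end SharpSob

/-- The sharp Sobolev inequality for `W^{k,2} ↪ L^{2n/(n-2k)}` on `ℝⁿ`. -/
theorem sharp_sobolev_higher_order
    (n k : ℕ) (hk : 1 ≤ k) (hn : 2 * k < n)
    (u : EuclideanSpace ℝ (Fin n) → ℝ)
    (hu : ContDiff ℝ (⊤ : ℕ∞) u) (hc : HasCompactSupport u) :
    ∫ x, u x * ((-1 : ℝ) ^ k * lap^[k] u x)
      ≥ ((∏ ℓ ∈ Finset.Icc 1 k,
            (((n : ℝ) + 2 * ℓ - 2) * ((n : ℝ) - 2 * ℓ) / 4))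
          * (2 * π ^ (((n : ℝ) + 1) / 2) / Real.Gamma (((n : ℝ) + 1) / 2))
              ^ ((2 * k : ℝ) / n))
        * (∫ x, |u x| ^ ((2 * n : ℝ) / ((n : ℝ) - 2 * k)))
            ^ (((n : ℝ) - 2 * k) / n) := by
  have hn0 : 0 < n := by omega
  have h := fun m (hm : k = m + 1) => SharpSob.main_ineq (m := m) (hm ▸ hn) (u := ⟨u, hu⟩) hc
  obtain ⟨m, rfl⟩ : ∃ m, k = m + 1 := ⟨k - 1, by omega⟩
  have h := h m rfl
  have hnR : (0:ℝ) < n := by exact_mod_cast hn0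
  have hnk : (0:ℝ) < (n:ℝ) - 2 * ((m+1 : ℕ):ℝ) := by
    have : (2 * ((m+1 : ℕ):ℝ)) < n := by exact_mod_cast hn
    linarith
  have e1 : 2 / SharpSob.qs n (m+1) = ((n : ℝ) - 2 * ((m+1 : ℕ):ℝ)) / n := by
    unfold SharpSob.qs; field_simp
  have e2 : 1 - 2 / SharpSob.qs n (m+1) = (2 * ((m+1 : ℕ):ℝ)) / n := by
    rw [e1]; field_simp; ring
  rw [e2, e1, SharpSob.vol_eq hn0] at h
  have hE : SharpSob.E (m+1) (⟨u, hu⟩ : SharpSob.SF n) ⟨u, hu⟩ = ∫ x, u x * ((-1 : ℝ) ^ (m+1) * lap^[m+1] u x) := by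
    unfold SharpSob.E SharpSob.In
    refine MeasureTheory.integral_congr_ae (Filter.Eventually.of_forall fun x => ?_)
    have := congrFun (SharpSob.lap_iter (⟨u, hu⟩ : SharpSob.SF n) (m+1)) x
    simp only [SharpSob.SF.mul_app]
    rw [← this]
  rw [hE] at h
  unfold SharpSob.Lam SharpSob.cc SharpSob.qs at h
  exact h
end

section
/- Let k, n be integers with 1 ≤ k and n > 2k, and define U : ℝⁿ → ℝ by U(x) = (1 + |x|²)^{−(n−2k)/2}. Then on all of ℝⁿ, (−Δ)^k U (x) = [ ∏_{ℓ=1}^{k} (n−2ℓ)(n+2ℓ−2) ] · (1 + |x|²)^{−(n+2k)/2}; equivalently, U is a positive solution of the critical equation (−Δ)^k U = Λ_{n,k} U^{(n+2k)/(n−2k)} with Λ_{n,k} = ∏_{ℓ=1}^{k} (n−2ℓ)(n+2ℓ−2). -/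
theorem bubble_hasFDerivAt {n : ℕ} (e : ℝ) (x : EuclideanSpace ℝ (Fin n)) :
    HasFDerivAt (fun y : EuclideanSpace ℝ (Fin n) => (1 + ‖y‖ ^ 2) ^ e)
      ((e * (1 + ‖x‖ ^ 2) ^ (e - 1)) • (2 • (innerSL ℝ x))) x := by
  have h1 : HasFDerivAt (fun y : EuclideanSpace ℝ (Fin n) => 1 + ‖y‖ ^ 2)
      (2 • (innerSL ℝ x)) x := (hasStrictFDerivAt_norm_sq x).hasFDerivAt.const_add 1
  exact h1.rpow_const (Or.inl (by positivity))

theorem bubble_fderiv_sum {n : ℕ} (S : Finset ℕ) (c e : ℕ → ℝ) (i : Fin n)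
    (x : EuclideanSpace ℝ (Fin n)) :
    fderiv ℝ (fun y : EuclideanSpace ℝ (Fin n) => ∑ j ∈ S, c j * (1 + ‖y‖ ^ 2) ^ (e j)) x
      (EuclideanSpace.single i 1)
      = x i * ∑ j ∈ S, (c j * (2 * e j)) * (1 + ‖x‖ ^ 2) ^ (e j - 1) := by
  have h := HasFDerivAt.fun_sum (u := S)
    (fun j _ => (bubble_hasFDerivAt (e j) x).const_mul (c j))
  rw [h.fderiv]
  simp only [ContinuousLinearMap.sum_apply, Finset.mul_sum]
  refine Finset.sum_congr rfl fun j _ => ?_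
  simp [EuclideanSpace.inner_single_right]
  ring

theorem bubble_lap_sum {n : ℕ} (S : Finset ℕ) (c e : ℕ → ℝ) :
    lap (fun y : EuclideanSpace ℝ (Fin n) => ∑ j ∈ S, c j * (1 + ‖y‖ ^ 2) ^ (e j))
      = fun x => ∑ j ∈ S, c j * (2 * e j * (n + 2 * e j - 2) * (1 + ‖x‖ ^ 2) ^ (e j - 1)
          - 4 * e j * (e j - 1) * (1 + ‖x‖ ^ 2) ^ (e j - 2)) := by
  funext x
  unfold lap
  simp only [bubble_fderiv_sum]
  have key : ∀ i : Fin n,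
      fderiv ℝ (fun y : EuclideanSpace ℝ (Fin n) =>
        y i * ∑ j ∈ S, (c j * (2 * e j)) * (1 + ‖y‖ ^ 2) ^ (e j - 1)) x
        (EuclideanSpace.single i 1)
      = (x i) ^ 2 * (∑ j ∈ S, (c j * (2 * e j) * (2 * (e j - 1))) * (1 + ‖x‖ ^ 2) ^ (e j - 1 - 1))
        + ∑ j ∈ S, (c j * (2 * e j)) * (1 + ‖x‖ ^ 2) ^ (e j - 1) := by
    intro i
    have hp : HasFDerivAt (fun y : EuclideanSpace ℝ (Fin n) => y i)
      (EuclideanSpace.proj i : EuclideanSpace ℝ (Fin n) →L[ℝ] ℝ) x :=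
      (EuclideanSpace.proj i : EuclideanSpace ℝ (Fin n) →L[ℝ] ℝ).hasFDerivAt
    have hs : DifferentiableAt ℝ (fun y : EuclideanSpace ℝ (Fin n) =>
        ∑ j ∈ S, (c j * (2 * e j)) * (1 + ‖y‖ ^ 2) ^ (e j - 1)) x :=
      (HasFDerivAt.fun_sum (u := S)
        (fun j _ => (bubble_hasFDerivAt (e j - 1) x).const_mul (c j * (2 * e j)))).differentiableAt
    have h := bubble_fderiv_sum S (fun j => c j * (2 * e j)) (fun j => e j - 1) i x
    rw [(hp.fun_mul hs.hasFDerivAt).fderiv]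
    simp only [ContinuousLinearMap.add_apply, ContinuousLinearMap.smul_apply, h]
    simp
    ring
  simp only [key, Finset.sum_add_distrib, ← Finset.sum_mul]
  rw [← EuclideanSpace.real_norm_sq_eq]
  simp only [Finset.sum_const, Finset.card_univ, Fintype.card_fin, nsmul_eq_mul, Finset.mul_sum,
    ← Finset.sum_add_distrib]
  refine Finset.sum_congr rfl fun j _ => ?_
  have hw : (0 : ℝ) < 1 + ‖x‖ ^ 2 := by positivity
  have h1 : (1 + ‖x‖ ^ 2) ^ (e j - 1) = (1 + ‖x‖ ^ 2) ^ (e j - 2) * (1 + ‖x‖ ^ 2) := by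
    rw [← Real.rpow_add_one hw.ne']; congr 1; ring
  have h2 : e j - 1 - 1 = e j - 2 := by ring
  rw [h2, h1]
  ring

/-- Rising factorial. -/
noncomputable def bubblePoch (a : ℝ) (m : ℕ) : ℝ := ∏ i ∈ Finset.range m, (a + i)

/-- Coefficients of the iterated Laplacian of the bubble. -/
noncomputable def bubbleCoef (a b : ℝ) (m j : ℕ) : ℝ :=
  (-4) ^ m * bubblePoch a (m + j) * (m.choose j) * ∏ i ∈ Finset.Ico j m, (b - i)

theorem bubbleCoef_zero (a b : ℝ) (m : ℕ) :
    bubbleCoef a b (m + 1) 0 = bubbleCoef a b m 0 * (-4 * (a + m) * (b - m)) := by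
  unfold bubbleCoef bubblePoch
  simp only [add_zero, Nat.choose_zero_right, Finset.prod_range_succ]
  rw [Finset.prod_Ico_succ_top (Nat.zero_le m)]
  ring

theorem bubbleCoef_succ (a b : ℝ) (m j : ℕ) (hj : j ≤ m) :
    bubbleCoef a b (m + 1) (j + 1)
      = bubbleCoef a b m (j + 1) * (-4 * (a + m + (j + 1)) * (b - m - (j + 1)))
        + bubbleCoef a b m j * (-4 * (a + m + j) * (a + m + j + 1)) := by
  unfold bubbleCoef
  have e1 : m + 1 + (j + 1) = m + j + 1 + 1 := by ring
  have e2 : m + (j + 1) = m + j + 1 := by ring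
  rw [e1, e2]
  unfold bubblePoch
  simp only [Finset.prod_range_succ]
  rcases hj.lt_or_eq with hlt | rfl
  · rw [Finset.prod_Ico_succ_top (by omega : j + 1 ≤ m), Finset.prod_eq_prod_Ico_succ_bot hlt]
    have hc : ((m.choose (j + 1) : ℕ) : ℝ) * (j + 1) = m.choose j * (m - j) := by
      have := Nat.choose_succ_right_eq m j
      have h2 : ((m - j : ℕ) : ℝ) = (m : ℝ) - j := Nat.cast_sub hj
      rw [← h2]
      exact_mod_cast this
    rw [Nat.choose_succ_succ]
    push_cast
    generalize ∏ i ∈ Finset.range (m + j), (a + (i : ℝ)) = R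
    generalize ∏ i ∈ Finset.Ico (j + 1) m, (b - (i : ℝ)) = P
    linear_combination (-1) * ((-4) ^ m * (-4) * R * P * (a + m + j) * (a + (m + j + 1))) * (-hc)
  · simp
    ring

theorem bubble_lap_iter {n : ℕ} (a b : ℝ) (hb : b = n / 2 - a - 1) (m : ℕ) :
    lap^[m] (fun y : EuclideanSpace ℝ (Fin n) => (1 + ‖y‖ ^ 2) ^ (-a))
      = fun x => ∑ j ∈ Finset.range (m + 1),
          bubbleCoef a b m j * (1 + ‖x‖ ^ 2) ^ (-(a + m + j)) := by
  induction m with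
  | zero => simp [bubbleCoef, bubblePoch]
  | succ m ih =>
    rw [Function.iterate_succ_apply', ih, bubble_lap_sum]
    funext x
    have hA : ∀ j ∈ Finset.range (m + 1),
        bubbleCoef a b m j * (2 * -(a + m + j) * (n + 2 * -(a + m + j) - 2)
            * (1 + ‖x‖ ^ 2) ^ (-(a + m + j) - 1)
          - 4 * -(a + m + j) * (-(a + m + j) - 1) * (1 + ‖x‖ ^ 2) ^ (-(a + m + j) - 2))
        = bubbleCoef a b m j * (-4 * (a + m + j) * (b - m - j))
              * (1 + ‖x‖ ^ 2) ^ (-(a + (m + 1 : ℕ) + j))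
          + bubbleCoef a b m j * (-4 * (a + m + j) * (a + m + j + 1))
              * (1 + ‖x‖ ^ 2) ^ (-(a + (m + 1 : ℕ) + (j + 1 : ℕ))) := by
      intro j _
      have h1 : -(a + m + j) - 1 = -(a + (m + 1 : ℕ) + j) := by push_cast; ring
      have h2 : -(a + m + j) - 2 = -(a + (m + 1 : ℕ) + (j + 1 : ℕ)) := by push_cast; ring
      rw [h1, h2, ← h1, hb]
      ring
    rw [Finset.sum_congr rfl hA, Finset.sum_add_distrib]
    have hz : bubbleCoef a b m (m + 1) = 0 := by simp [bubbleCoef]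
    have hext : ∑ j ∈ Finset.range (m + 1), bubbleCoef a b m j * (-4 * (a + m + j) * (b - m - j))
              * (1 + ‖x‖ ^ 2) ^ (-(a + (m + 1 : ℕ) + j))
        = ∑ j ∈ Finset.range (m + 1 + 1), bubbleCoef a b m j * (-4 * (a + m + j) * (b - m - j))
              * (1 + ‖x‖ ^ 2) ^ (-(a + (m + 1 : ℕ) + j)) := by
      rw [Finset.sum_range_succ _ (m + 1), hz]; simp
    rw [hext, Finset.sum_range_succ', Finset.sum_range_succ' _ (m + 1), bubbleCoef_zero]
    rw [add_right_comm, ← Finset.sum_add_distrib]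
    congr 1
    · refine Finset.sum_congr rfl fun j hj => ?_
      rw [bubbleCoef_succ a b m j (by have := Finset.mem_range.1 hj; omega)]
      push_cast
      ring
    · simp

theorem bubble_prod (N : ℝ) (k : ℕ) :
    (4 : ℝ) ^ k * bubblePoch ((N - 2 * k) / 2) (k + k)
      = ∏ ℓ ∈ Finset.Icc 1 k, ((N - 2 * ℓ) * (N + 2 * ℓ - 2)) := by
  induction k with
  | zero => simp [bubblePoch]
  | succ k ih =>
    rw [Finset.prod_Icc_succ_top (by omega), ← ih]
    have e1 : k + 1 + (k + 1) = k + k + 1 + 1 := by ring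
    rw [e1]
    unfold bubblePoch
    rw [Finset.prod_range_succ _ (k + k + 1), Finset.prod_range_succ' _ (k + k)]
    have : ∀ i ∈ Finset.range (k + k), ((N - 2 * ((k + 1 : ℕ) : ℝ)) / 2 + ((i + 1 : ℕ) : ℝ))
        = (N - 2 * k) / 2 + i := by
      intro i _; push_cast; ring
    rw [Finset.prod_congr rfl this]
    push_cast
    ring

theorem bubble_main (n k : ℕ) (hk : 1 ≤ k) (x : EuclideanSpace ℝ (Fin n)) :
    (-1 : ℝ) ^ k
          * lap^[k] (fun y => (1 + ‖y‖ ^ 2) ^ (-(((n : ℝ) - 2 * k) / 2))) x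
        = (∏ ℓ ∈ Finset.Icc 1 k, (((n : ℝ) - 2 * ℓ) * ((n : ℝ) + 2 * ℓ - 2)))
            * (1 + ‖x‖ ^ 2) ^ (-(((n : ℝ) + 2 * k) / 2)) := by
  rw [bubble_lap_iter (((n : ℝ) - 2 * k) / 2) ((k : ℝ) - 1) (by ring), ← bubble_prod]
  beta_reduce
  rw [Finset.sum_range_succ, Finset.sum_eq_zero]
  · have h : -(((n : ℝ) - 2 * k) / 2 + k + k) = -(((n : ℝ) + 2 * k) / 2) := by ring
    have h4 : (4 : ℝ) ^ k = (-1) ^ k * (-4) ^ k := by rw [← mul_pow]; norm_num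
    rw [h, h4]
    simp [bubbleCoef]
    ring
  · intro j hj
    have hj := Finset.mem_range.1 hj
    have : ∏ i ∈ Finset.Ico j k, ((k : ℝ) - 1 - i) = 0 := by
      refine Finset.prod_eq_zero (i := k - 1) (Finset.mem_Ico.2 ⟨by omega, by omega⟩) ?_
      rw [Nat.cast_sub hk]; simp
    simp [bubbleCoef, this]

/-- The standard bubble `U(x) = (1+|x|²)^{-(n-2k)/2}` satisfies
`(-Δ)ᵏU = [∏_{ℓ=1}^k (n-2ℓ)(n+2ℓ-2)]·(1+|x|²)^{-(n+2k)/2}`, i.e. it is a positive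
solution of the critical equation `(-Δ)ᵏU = Λ_{n,k} U^{(n+2k)/(n-2k)}`. -/
theorem bubble_solves_critical_equation
    (n k : ℕ) (hk : 1 ≤ k) (hn : 2 * k < n) :
    (∀ x : EuclideanSpace ℝ (Fin n),
      (-1 : ℝ) ^ k
          * lap^[k] (fun y => (1 + ‖y‖ ^ 2) ^ (-(((n : ℝ) - 2 * k) / 2))) x
        = (∏ ℓ ∈ Finset.Icc 1 k, (((n : ℝ) - 2 * ℓ) * ((n : ℝ) + 2 * ℓ - 2)))
            * (1 + ‖x‖ ^ 2) ^ (-(((n : ℝ) + 2 * k) / 2)))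
    ∧ (∀ x : EuclideanSpace ℝ (Fin n),
      (0 : ℝ) < (1 + ‖x‖ ^ 2) ^ (-(((n : ℝ) - 2 * k) / 2))
      ∧ (-1 : ℝ) ^ k
            * lap^[k] (fun y => (1 + ‖y‖ ^ 2) ^ (-(((n : ℝ) - 2 * k) / 2))) x
          = (∏ ℓ ∈ Finset.Icc 1 k, (((n : ℝ) - 2 * ℓ) * ((n : ℝ) + 2 * ℓ - 2)))
              * ((1 + ‖x‖ ^ 2) ^ (-(((n : ℝ) - 2 * k) / 2)))
                  ^ (((n : ℝ) + 2 * k) / ((n : ℝ) - 2 * k))) := by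
  refine ⟨fun x => bubble_main n k hk x, fun x => ⟨by positivity, ?_⟩⟩
  rw [bubble_main n k hk x, ← Real.rpow_mul (by positivity)]
  have hn' : (2 : ℝ) * k < n := by exact_mod_cast hn
  have h0 : (n : ℝ) - 2 * k ≠ 0 := by linarith
  congr 2
  field_simp
end
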